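/- (Divergence case of the S-arithmetic Khintchine–Groshev theorem with congruence conditions) Assume d = m + n ≥ 2. Let ψ = (ψ_p)_{p∈S} be a collection of approximating functions, fix N ∈ ℕ_S and a pair (v_m, v_n) ∈ ℤ_S^m × ℤ_S^n. If ∫_{ℚ_S^n} ∏_{p∈S} ψ_p(‖y‖_p^n) dy = ∞, then for almost every A = (A_p)_{p∈S} ∈ Mat_{m,n}(ℚ_S) (with respect to Haar measure) there are infinitely many pairs (p⃗, q⃗) ∈ ℤ_S^m × ℤ_S^n with (p⃗, q⃗) ≡ (v_m, v_n) mod N satisfying ‖A_p q⃗ + p⃗‖_p^m ≤ ψ_p(‖q⃗‖_p^n) for all p ∈ S. -/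

import Mathlib

open MeasureTheory Matrix

noncomputable section

/-- `z` belongs to the ring of `S`-integers `ℤ_S = ℤ[1/P]`,
where `P` is the product of the finite primes in `S`. -/
def IsZS (P : ℕ) (z : ℚ) : Prop := ∃ (a : ℤ) (k : ℕ), z = (a : ℚ) / (P : ℚ) ^ k

/-- A collection of approximating functions `ψ = (ψ_p)_{p ∈ S}`:
each `ψ_p : ℝ_{>0} → ℝ_{>0}` is non-increasing and `≡ 1` on `(0,1]`
(we extend by `1` on `t ≤ 1`); moreover for each finite place `p`,
`ψ_p` is constant on `{p^{kn}, …, p^{kn+n-1}}` for every `k ∈ ℤ` and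
takes values in `p^{mℤ}` on `p^ℤ`. -/
structure ApproxFamily (m n s : ℕ) (p : Fin s → ℕ) : Type where
  psiR : ℝ → ℝ
  psiP : Fin s → ℝ → ℝ
  posR : ∀ t, 0 < psiR t
  antiR : ∀ ⦃t₁ t₂ : ℝ⦄, 0 < t₁ → t₁ ≤ t₂ → psiR t₂ ≤ psiR t₁
  oneR : ∀ ⦃t : ℝ⦄, t ≤ 1 → psiR t = 1
  posP : ∀ i t, 0 < psiP i t
  antiP : ∀ i ⦃t₁ t₂ : ℝ⦄, 0 < t₁ → t₁ ≤ t₂ → psiP i t₂ ≤ psiP i t₁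
  oneP : ∀ i ⦃t : ℝ⦄, t ≤ 1 → psiP i t = 1
  constP : ∀ i (k : ℤ) (j : ℕ), j < n →
    psiP i ((p i : ℝ) ^ (k * n + j : ℤ)) = psiP i ((p i : ℝ) ^ (k * n : ℤ))
  valsP : ∀ i (k : ℤ), ∃ l : ℤ, psiP i ((p i : ℝ) ^ k) = (p i : ℝ) ^ (m * l : ℤ)

/-- The real components of the diagonal embedding of a rational vector. -/
def ratR {k : ℕ} (q : Fin k → ℚ) : Fin k → ℝ := fun j => (q j : ℝ)

/-- The `p i`-adic components of the diagonal embedding of a rational vector. -/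
def ratP {s : ℕ} (p : Fin s → ℕ) [∀ i, Fact (p i).Prime] {k : ℕ} (i : Fin s)
    (q : Fin k → ℚ) : Fin k → ℚ_[p i] := fun j => (q j : ℚ_[p i])

/-- The region `E_f(T) ⊆ ℚ_S^m × ℚ_S^n` cut out by `‖x‖_p^m ≤ f_p(‖y‖_p^n)` and
`‖y‖_p^n ≤ T_p` for all `p ∈ S` (product coordinates). -/
def Eprod (m n : ℕ) {s : ℕ} (p : Fin s → ℕ) [∀ i, Fact (p i).Prime]
    (fR : ℝ → ℝ) (fP : Fin s → ℝ → ℝ) (TR : ℝ) (TP : Fin s → ℝ) :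
    Set (((Fin m → ℝ) × ∀ i, Fin m → ℚ_[p i]) × ((Fin n → ℝ) × ∀ i, Fin n → ℚ_[p i])) :=
  {xy | ‖xy.1.1‖ ^ m ≤ fR (‖xy.2.1‖ ^ n) ∧ ‖xy.2.1‖ ^ n ≤ TR ∧
      ∀ i, ‖xy.1.2 i‖ ^ m ≤ fP i (‖xy.2.2 i‖ ^ n) ∧ ‖xy.2.2 i‖ ^ n ≤ TP i}

/-- The region `E_f(T) ⊆ ℚ_S^{m+n}`, where the first `m` coordinates play the role of
`x` and the last `n` coordinates the role of `y`. -/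
def Efull (m n : ℕ) {s : ℕ} (p : Fin s → ℕ) [∀ i, Fact (p i).Prime]
    (fR : ℝ → ℝ) (fP : Fin s → ℝ → ℝ) (TR : ℝ) (TP : Fin s → ℝ) :
    Set ((Fin (m + n) → ℝ) × ∀ i, Fin (m + n) → ℚ_[p i]) :=
  {v | ‖fun a : Fin m => v.1 (Fin.castAdd n a)‖ ^ m
        ≤ fR (‖fun b : Fin n => v.1 (Fin.natAdd m b)‖ ^ n) ∧
      ‖fun b : Fin n => v.1 (Fin.natAdd m b)‖ ^ n ≤ TR ∧
      ∀ i, ‖fun a : Fin m => v.2 i (Fin.castAdd n a)‖ ^ m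
            ≤ fP i (‖fun b : Fin n => v.2 i (Fin.natAdd m b)‖ ^ n) ∧
          ‖fun b : Fin n => v.2 i (Fin.natAdd m b)‖ ^ n ≤ TP i}

/-- The operator norm of a real matrix acting on sup-normed spaces. -/
def opNorm {k l : ℕ} (M : Matrix (Fin k) (Fin l) ℝ) : ℝ :=
  ‖LinearMap.toContinuousLinearMap M.mulVecLin‖

/-- An element of the group `𝐇 = ∏_{p ∈ S} H_p` of block lower-triangular matrices,
given by its blocks at each place. -/
structure HElem (m n : ℕ) (s : ℕ) (p : Fin s → ℕ) [∀ i, Fact (p i).Prime] : Type where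
  aR : Matrix (Fin m) (Fin m) ℝ
  bR : Matrix (Fin n) (Fin m) ℝ
  cR : Matrix (Fin n) (Fin n) ℝ
  aP : ∀ i, Matrix (Fin m) (Fin m) ℚ_[p i]
  bP : ∀ i, Matrix (Fin n) (Fin m) ℚ_[p i]
  cP : ∀ i, Matrix (Fin n) (Fin n) ℚ_[p i]

/-- The action of an element of `𝐇` on `ℚ_S^m × ℚ_S^n`:
`h·(x, y) = (α x, β x + γ y)` at each place. -/
def HElem.act {m n s : ℕ} {p : Fin s → ℕ} [∀ i, Fact (p i).Prime] (h : HElem m n s p)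
    (xy : ((Fin m → ℝ) × ∀ i, Fin m → ℚ_[p i]) × ((Fin n → ℝ) × ∀ i, Fin n → ℚ_[p i])) :
    ((Fin m → ℝ) × ∀ i, Fin m → ℚ_[p i]) × ((Fin n → ℝ) × ∀ i, Fin n → ℚ_[p i]) :=
  ((h.aR.mulVec xy.1.1, fun i => (h.aP i).mulVec (xy.1.2 i)),
   (h.bR.mulVec xy.1.1 + h.cR.mulVec xy.2.1,
    fun i => (h.bP i).mulVec (xy.1.2 i) + (h.cP i).mulVec (xy.2.2 i)))

/-- Membership in `H̃_{∞,ε}`: operator norm bounds on the blocks. -/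
def inHtilde (m n : ℕ) (ε : ℝ) (α : Matrix (Fin m) (Fin m) ℝ) (β : Matrix (Fin n) (Fin m) ℝ)
    (γ : Matrix (Fin n) (Fin n) ℝ) : Prop :=
  opNorm α ^ m ≤ 1 + ε ∧ opNorm γ ^ n ≤ 1 + ε / 2 ∧ opNorm β ≤ ε / (4 * n)

/-- `h ∈ (H̃_{∞,ε} ∩ H̃_{∞,ε}⁻¹) × ∏_{p ∈ S_f} H_p(ℤ_p)`. -/
def HElem.isAdmissible {m n s : ℕ} {p : Fin s → ℕ} [∀ i, Fact (p i).Prime]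
    (h : HElem m n s p) (ε : ℝ) : Prop :=
  IsUnit h.aR.det ∧ IsUnit h.cR.det ∧
  inHtilde m n ε h.aR h.bR h.cR ∧
  inHtilde m n ε h.aR⁻¹ (-(h.cR⁻¹ * h.bR * h.aR⁻¹)) h.cR⁻¹ ∧
  ∀ i, ((∀ a b, ‖h.aP i a b‖ ≤ 1) ∧ ‖(h.aP i).det‖ = 1) ∧
      ((∀ a b, ‖h.cP i a b‖ ≤ 1) ∧ ‖(h.cP i).det‖ = 1) ∧
      (∀ a b, ‖h.bP i a b‖ ≤ 1)

end

section MetricUbiquity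

open Metric Set Filter Topology

variable {X : Type*} [PseudoMetricSpace X] [MeasurableSpace X]

/-- The measure of a ball of radius `r` is comparable to `r ^ m`. -/
structure BallGrowth (lam : Measure X) (m : ℕ) (c C : ℝ) : Prop where
  c_pos : 0 < c
  C_pos : 0 < C
  ne_top : ∀ x r, lam (closedBall x r) ≠ ⊤
  lower : ∀ x r, 0 < r → c * r ^ m ≤ lam.real (closedBall x r)
  upper : ∀ x r, 0 < r → lam.real (closedBall x r) ≤ C * r ^ m

/-- Bonferroni's inequality of second order. -/
theorem sum_measureReal_le_biUnion_add {α : Type*} [MeasurableSpace α] (lam : Measure α)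
    (E : ℕ → Set α) (hE : ∀ k, MeasurableSet (E k)) (hfin : ∀ k, lam (E k) ≠ ⊤)
    (F : Finset ℕ) :
    ∑ k ∈ F, lam.real (E k) ≤ lam.real (⋃ k ∈ F, E k) +
      ∑ l ∈ F, ∑ k ∈ F.filter (· < l), lam.real (E k ∩ E l) := by
  induction F using Finset.induction_on_max with
  | empty => simp
  | insert a s ha ih =>
    have has : a ∉ s := fun h => lt_irrefl _ (ha a h)
    have hU : lam (⋃ k ∈ s, E k) ≠ ⊤ :=
      (measure_biUnion_lt_top s.finite_toSet fun k _ => (hfin k).lt_top).ne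
    rw [Finset.sum_insert has, Finset.sum_insert has, Finset.set_biUnion_insert]
    have h1 := measureReal_union_add_inter (μ := lam) (s := E a)
      (Finset.measurableSet_biUnion s fun k _ => hE k) (hfin a) hU
    have h2 : lam.real (E a ∩ ⋃ k ∈ s, E k) ≤ ∑ k ∈ s, lam.real (E k ∩ E a) := by
      have : E a ∩ ⋃ k ∈ s, E k = ⋃ k ∈ s, (E k ∩ E a) := by
        ext x; simp only [mem_inter_iff, mem_iUnion]; tauto
      rw [this]
      exact measureReal_biUnion_finset_le _ _
    have h3 : (insert a s).filter (· < a) = s := by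
      ext x; simp only [Finset.mem_filter, Finset.mem_insert]
      constructor
      · rintro ⟨h | h, h'⟩
        · omega
        · exact h
      · exact fun h => ⟨Or.inr h, ha x h⟩
    have h4 : ∀ l ∈ s, (insert a s).filter (· < l) = s.filter (· < l) := by
      intro l hl
      ext x; simp only [Finset.mem_filter, Finset.mem_insert]
      have := ha l hl
      constructor
      · rintro ⟨h | h, h'⟩
        · omega
        · exact ⟨h, h'⟩
      · exact fun h => ⟨Or.inr h.1, h.2⟩
    have h5 : ∑ l ∈ s, ∑ k ∈ (insert a s).filter (· < l), lam.real (E k ∩ E l) =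
        ∑ l ∈ s, ∑ k ∈ s.filter (· < l), lam.real (E k ∩ E l) :=
      Finset.sum_congr rfl fun l hl => by rw [h4 l hl]
    rw [h3, h5]
    linarith

variable [BorelSpace X] {lam : Measure X} {m : ℕ} {c C : ℝ}

theorem BallGrowth.measureReal_biUnion_closedBall
    (h : BallGrowth lam m c C) {Y : Finset X} {ρ : ℝ}
    (hsep : ∀ y ∈ Y, ∀ z ∈ Y, y ≠ z → 2 * ρ < dist y z) :
    lam.real (⋃ y ∈ Y, closedBall y ρ) = ∑ y ∈ Y, lam.real (closedBall y ρ) := by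
  refine measureReal_biUnion_finset ?_ (fun y _ => measurableSet_closedBall) fun y _ => h.ne_top _ _
  intro y hy z hz hyz
  refine closedBall_disjoint_closedBall ?_
  have := hsep y hy z hz hyz
  linarith

theorem BallGrowth.card_le_of_separated
    (h : BallGrowth lam m c C) {Y : Finset X} {ρ R : ℝ} (hρ : 0 < ρ) {x : X}
    (hR : 0 ≤ R) (hsep : ∀ y ∈ Y, ∀ z ∈ Y, y ≠ z → 2 * ρ < dist y z)
    (hY : ∀ y ∈ Y, dist y x ≤ R) :
    (Y.card : ℝ) * (c * ρ ^ m) ≤ C * (R + ρ) ^ m := by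
  calc (Y.card : ℝ) * (c * ρ ^ m) = ∑ y ∈ Y, c * ρ ^ m := by simp
    _ ≤ ∑ y ∈ Y, lam.real (closedBall y ρ) := Finset.sum_le_sum fun y _ => h.lower y ρ hρ
    _ = lam.real (⋃ y ∈ Y, closedBall y ρ) := (h.measureReal_biUnion_closedBall hsep).symm
    _ ≤ lam.real (closedBall x (R + ρ)) := by
      refine measureReal_mono ?_ (h.ne_top _ _)
      refine iUnion₂_subset fun y hy => closedBall_subset_closedBall' ?_
      linarith [hY y hy]
    _ ≤ C * (R + ρ) ^ m := h.upper _ _ (by linarith)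

/-- A well-separated finite family of points extracted from a family whose `ρ`-balls cover half of
a ball. -/
theorem BallGrowth.exists_separated
    (h : BallGrowth lam m c C) {Z : Set X} {ρ r : ℝ} (hρ : 0 < ρ) (hr : 0 < r)
    (hρr : 4 * ρ ≤ r) {x : X}
    (hZ : lam.real (closedBall x (r / 2) \ ⋃ z ∈ Z, closedBall z ρ) ≤
      lam.real (closedBall x (r / 2)) / 2) :
    ∃ Y : Finset X, (∀ y ∈ Y, y ∈ Z ∧ dist y x ≤ r / 2 + ρ) ∧
      (∀ y ∈ Y, ∀ z ∈ Y, y ≠ z → 2 * ρ < dist y z) ∧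
      c * (r / 2) ^ m / 2 ≤ Y.card * (C * (3 * ρ) ^ m) ∧
      (Y.card : ℝ) * (c * ρ ^ m) ≤ C * r ^ m := by
  classical
  let Q : Finset X → Prop := fun Y => (∀ y ∈ Y, y ∈ Z ∧ dist y x ≤ r / 2 + ρ) ∧
      (∀ y ∈ Y, ∀ z ∈ Y, y ≠ z → 2 * ρ < dist y z)
  have hub : ∀ Y, Q Y → (Y.card : ℝ) * (c * ρ ^ m) ≤ C * r ^ m := by
    intro Y hY
    refine (h.card_le_of_separated hρ (by positivity) hY.2 fun y hy => (hY.1 y hy).2).trans ?_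
    have := h.C_pos
    gcongr
    linarith
  have hcρ : 0 < c * ρ ^ m := mul_pos h.c_pos (by positivity)
  have hex : ∃ Y, Q Y ∧ ∀ Y', Q Y' → Y'.card ≤ Y.card := by
    let P : Set ℕ := {j | ∃ Y, Q Y ∧ Y.card = j}
    have hne : P.Nonempty := ⟨0, ∅, ⟨by simp, by simp⟩, rfl⟩
    have hbdd : BddAbove P := by
      refine ⟨⌈C * r ^ m / (c * ρ ^ m)⌉₊, ?_⟩
      rintro j ⟨Y, hY, rfl⟩
      have := hub Y hY
      rw [← le_div_iff₀ hcρ] at this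
      exact_mod_cast this.trans (Nat.le_ceil _)
    obtain ⟨Y, hY, hYc⟩ := Nat.sSup_mem hne hbdd
    refine ⟨Y, hY, fun Y' hY' => ?_⟩
    rw [hYc]
    exact le_csSup hbdd ⟨Y', hY', rfl⟩
  obtain ⟨Y, hY, hmax⟩ := hex
  refine ⟨Y, hY.1, hY.2, ?_, hub Y hY⟩
  have hcov : closedBall x (r / 2) ⊆ (closedBall x (r / 2) \ ⋃ z ∈ Z, closedBall z ρ) ∪
      ⋃ y ∈ Y, closedBall y (3 * ρ) := by
    intro u hu
    by_cases huZ : u ∈ ⋃ z ∈ Z, closedBall z ρ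
    · right
      simp only [mem_iUnion, mem_closedBall, exists_prop] at huZ ⊢
      obtain ⟨z, hz, huz⟩ := huZ
      have hzx : dist z x ≤ r / 2 + ρ := by
        have := dist_triangle_left z x u
        rw [mem_closedBall] at hu
        linarith
      by_contra! hcon
      have hnot : ∀ y ∈ Y, 2 * ρ < dist y z := by
        intro y hy
        have := hcon y hy
        have := dist_triangle u z y
        rw [dist_comm z y] at this
        linarith
      have hzY : z ∉ Y := fun hzY => by
        have := hnot z hzY
        rw [dist_self] at this
        linarith
      have := hmax (insert z Y) ⟨?_, ?_⟩
      · rw [Finset.card_insert_of_notMem hzY] at this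
        omega
      · intro y hy
        rcases Finset.mem_insert.1 hy with rfl | hy
        · exact ⟨hz, hzx⟩
        · exact hY.1 y hy
      · intro y hy w hw hyw
        rcases Finset.mem_insert.1 hy with rfl | hy' <;>
          rcases Finset.mem_insert.1 hw with rfl | hw'
        · exact absurd rfl hyw
        · rw [dist_comm]; exact hnot w hw'
        · exact hnot y hy'
        · exact hY.2 y hy' w hw' hyw
    · exact Or.inl ⟨hu, huZ⟩
  have hfinB : lam (⋃ y ∈ Y, closedBall y (3 * ρ)) ≠ ⊤ :=
    (measure_biUnion_lt_top Y.finite_toSet fun y _ => (h.ne_top y _).lt_top).ne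
  have h1 : lam.real (closedBall x (r / 2)) ≤ lam.real (closedBall x (r / 2)) / 2 +
      Y.card * (C * (3 * ρ) ^ m) := by
    calc lam.real (closedBall x (r / 2)) ≤ _ := measureReal_mono hcov (measure_union_ne_top
          (measure_ne_top_of_subset sdiff_subset (h.ne_top x _)) hfinB)
      _ ≤ _ := measureReal_union_le _ _
      _ ≤ _ := add_le_add hZ ((measureReal_biUnion_finset_le _ _).trans
          ((Finset.sum_le_sum fun y _ => h.upper y _ (by positivity)).trans (by simp)))
  have h2 := h.lower x (r / 2) (by positivity)
  linarith

end MetricUbiquity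

section MetricUbiquity

open Metric Set Filter Topology

variable {X : Type*} [PseudoMetricSpace X] [MeasurableSpace X] [BorelSpace X]
  {lam : Measure X} {m : ℕ} {c C : ℝ}

theorem add_two_mul_pow_le {x y : ℝ} (hx : 0 ≤ x) (hy : 0 ≤ y) (m : ℕ) :
    (x + 2 * y) ^ m ≤ 4 ^ m * (x ^ m + y ^ m) := by
  rcases le_total x (2 * y) with h | h
  · calc (x + 2 * y) ^ m ≤ (4 * y) ^ m := by gcongr; linarith
      _ = 4 ^ m * y ^ m := mul_pow _ _ _
      _ ≤ _ := by gcongr; have := pow_nonneg hx m; linarith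
  · calc (x + 2 * y) ^ m ≤ (4 * x) ^ m := by gcongr; linarith
      _ = 4 ^ m * x ^ m := mul_pow _ _ _
      _ ≤ _ := by gcongr; have := pow_nonneg hy m; linarith

theorem BallGrowth.measureReal_inter_le
    (h : BallGrowth lam m c C) {Y₁ Y₂ : Finset X} {ρ₁ ρ₂ r₁ r₂ r : ℝ} (hρ₁ : 0 < ρ₁) (hρ₂ : 0 < ρ₂)
    (hr₁ : 0 < r₁) (hr₂ : 0 < r₂) (hr : 0 < r) (h₂ : r₂ ≤ ρ₂)
    (hcard : (Y₁.card : ℝ) * (c * ρ₁ ^ m) ≤ C * r ^ m)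
    (hsep : ∀ y ∈ Y₂, ∀ z ∈ Y₂, y ≠ z → 2 * ρ₂ < dist y z) :
    lam.real ((⋃ y ∈ Y₁, closedBall y r₁) ∩ ⋃ z ∈ Y₂, closedBall z r₂) ≤
      C ^ 3 * 4 ^ m / c ^ 2 * r ^ m *
        ((r₁ / ρ₁) ^ m * (r₂ / ρ₂) ^ m + (r₂ / ρ₂) ^ m * (ρ₂ / ρ₁) ^ m) := by
  classical
  have hc := h.c_pos
  have hC := h.C_pos
  have hcnt : ∀ y, ((Y₂.filter fun z => dist z y ≤ r₁ + r₂).card : ℝ) ≤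
      C * (4 ^ m * (r₁ ^ m + ρ₂ ^ m)) / (c * ρ₂ ^ m) := by
    intro y
    rw [le_div_iff₀ (by positivity)]
    refine (h.card_le_of_separated (x := y) (R := r₁ + r₂) hρ₂ (by positivity) ?_ ?_).trans ?_
    · intro u hu v hv
      exact hsep u (Finset.mem_filter.1 hu).1 v (Finset.mem_filter.1 hv).1
    · intro u hu
      exact (Finset.mem_filter.1 hu).2
    · gcongr
      refine le_trans ?_ (add_two_mul_pow_le hr₁.le hρ₂.le m)
      exact pow_le_pow_left₀ (by positivity) (by linarith) m
  have hsub : ((⋃ y ∈ Y₁, closedBall y r₁) ∩ ⋃ z ∈ Y₂, closedBall z r₂) ⊆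
      ⋃ y ∈ Y₁, ⋃ z ∈ Y₂.filter (fun z => dist z y ≤ r₁ + r₂), closedBall z r₂ := by
    rintro x ⟨hx1, hx2⟩
    simp only [mem_iUnion, mem_closedBall, exists_prop, Finset.mem_filter] at hx1 hx2 ⊢
    obtain ⟨y, hy, hxy⟩ := hx1
    obtain ⟨z, hz, hxz⟩ := hx2
    refine ⟨y, hy, z, ⟨hz, ?_⟩, hxz⟩
    have := dist_triangle_left z y x
    linarith
  have hY₁ : (Y₁.card : ℝ) ≤ C * r ^ m / (c * ρ₁ ^ m) := by
    rwa [le_div_iff₀ (by positivity)]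
  calc lam.real ((⋃ y ∈ Y₁, closedBall y r₁) ∩ ⋃ z ∈ Y₂, closedBall z r₂)
      ≤ lam.real (⋃ y ∈ Y₁, ⋃ z ∈ Y₂.filter (fun z => dist z y ≤ r₁ + r₂), closedBall z r₂) := by
        refine measureReal_mono hsub ?_
        refine (measure_biUnion_lt_top Y₁.finite_toSet fun y _ => ?_).ne
        exact measure_biUnion_lt_top (Finset.finite_toSet _) fun z _ => (h.ne_top z _).lt_top
    _ ≤ ∑ y ∈ Y₁, ∑ z ∈ Y₂.filter (fun z => dist z y ≤ r₁ + r₂), lam.real (closedBall z r₂) := by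
        refine (measureReal_biUnion_finset_le _ _).trans (Finset.sum_le_sum fun y _ => ?_)
        exact measureReal_biUnion_finset_le _ _
    _ ≤ ∑ y ∈ Y₁, C * (4 ^ m * (r₁ ^ m + ρ₂ ^ m)) / (c * ρ₂ ^ m) * (C * r₂ ^ m) := by
        refine Finset.sum_le_sum fun y _ => ?_
        refine (Finset.sum_le_sum fun z _ => h.upper z r₂ hr₂).trans ?_
        rw [Finset.sum_const, nsmul_eq_mul]
        gcongr
        exact hcnt y
    _ = Y₁.card * (C * (4 ^ m * (r₁ ^ m + ρ₂ ^ m)) / (c * ρ₂ ^ m) * (C * r₂ ^ m)) := by simp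
    _ ≤ C * r ^ m / (c * ρ₁ ^ m) *
        (C * (4 ^ m * (r₁ ^ m + ρ₂ ^ m)) / (c * ρ₂ ^ m) * (C * r₂ ^ m)) := by gcongr
    _ = _ := by
        simp only [div_pow]
        field_simp

theorem exists_finset_sum_between {u : ℕ → ℝ} (hu : ∀ k, 0 ≤ u k) {b s : ℝ} (hub : ∀ k, u k ≤ b)
    (hs : 0 < s) (hdiv : ¬ Summable u) (k₁ : ℕ) :
    ∃ F : Finset ℕ, (∀ k ∈ F, k₁ ≤ k ∧ 0 < u k) ∧ s ≤ ∑ k ∈ F, u k ∧ ∑ k ∈ F, u k ≤ s + b := by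
  classical
  have hdiv' : ¬ Summable fun k => u (k + k₁) := by rwa [summable_nat_add_iff]
  have htop := (not_summable_iff_tendsto_nat_atTop_of_nonneg fun k => hu (k + k₁)).1 hdiv'
  have hex : ∃ N, s ≤ ∑ k ∈ Finset.range N, u (k + k₁) :=
    (htop.eventually_ge_atTop s).exists
  have hN := Nat.find_spec hex
  obtain ⟨M, hM⟩ : ∃ M, Nat.find hex = M + 1 := by
    refine Nat.exists_eq_succ_of_ne_zero fun h0 => ?_
    rw [h0] at hN
    simp at hN
    linarith
  have hM' : ∑ k ∈ Finset.range M, u (k + k₁) < s := by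
    have := Nat.find_min hex (m := M) (by omega)
    linarith
  rw [hM, Finset.sum_range_succ] at hN
  let F : Finset ℕ := ((Finset.range (M + 1)).map (addRightEmbedding k₁)).filter fun k => 0 < u k
  have hF : ∑ k ∈ F, u k = ∑ k ∈ Finset.range (M + 1), u (k + k₁) := by
    rw [Finset.sum_filter_of_ne fun k _ hk => lt_of_le_of_ne (hu k) hk.symm]
    simp
  refine ⟨F, fun k hk => ?_, ?_, ?_⟩
  · obtain ⟨h1, h2⟩ := Finset.mem_filter.1 hk
    obtain ⟨j, -, rfl⟩ := Finset.mem_map.1 h1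
    exact ⟨Nat.le_add_left _ _, h2⟩
  · rw [hF, Finset.sum_range_succ]; exact hN
  · rw [hF, Finset.sum_range_succ]
    have := hub (M + k₁)
    linarith

theorem sum_filter_lt_inv_pow_le {τ : ℝ} (hτ : 1 < τ) (F : Finset ℕ) (l : ℕ) :
    ∑ k ∈ F.filter (· < l), (τ⁻¹) ^ (l - k) ≤ 1 / (τ - 1) := by
  have h0 : 0 < τ⁻¹ := inv_pos.2 (by linarith)
  calc ∑ k ∈ F.filter (· < l), (τ⁻¹) ^ (l - k) ≤ ∑ k ∈ Finset.range l, (τ⁻¹) ^ (l - k) := by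
        refine Finset.sum_le_sum_of_subset_of_nonneg ?_ fun _ _ _ => by positivity
        intro k hk
        simpa using (Finset.mem_filter.1 hk).2
    _ = ∑ k ∈ Finset.range l, (τ⁻¹) ^ (k + 1) := by
        rw [← Finset.sum_range_reflect]
        refine Finset.sum_congr rfl fun k hk => ?_
        rw [Finset.mem_range] at hk
        congr 1
        omega
    _ = τ⁻¹ * ∑ k ∈ Finset.range l, (τ⁻¹) ^ k := by
        rw [Finset.mul_sum]; exact Finset.sum_congr rfl fun k _ => by ring
    _ ≤ τ⁻¹ * (1 - τ⁻¹)⁻¹ := by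
        gcongr
        rw [← tsum_geometric_of_lt_one h0.le (inv_lt_one_of_one_lt₀ hτ)]
        exact (summable_geometric_of_lt_one h0.le (inv_lt_one_of_one_lt₀ hτ)).sum_le_tsum _
          fun _ _ => by positivity
    _ = 1 / (τ - 1) := by
        have : τ - 1 ≠ 0 := by linarith
        field_simp

end MetricUbiquity

section MetricUbiquity

open Metric Set Filter Topology

variable {X : Type*} [PseudoMetricSpace X] [MeasurableSpace X] [BorelSpace X]
  {lam : Measure X} {m : ℕ} {c C : ℝ}

/-- If for each scale `k ∈ J` the `ρ k`-balls around `Z k` cover half of a ball, and the volume sum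
of the `δ k`-balls diverges, then the associated limsup set has proportional measure in the ball. -/
theorem BallGrowth.exists_limsup_lower_bound (h : BallGrowth lam m c C) (hm : 0 < m) :
    ∃ κ > 0, ∃ τ₀ : ℝ, 1 < τ₀ ∧ ∀ τ ≥ τ₀, ∀ (x : X) (r : ℝ), 0 < r →
      ∀ (J : Set ℕ) (Z : ℕ → Set X) (ρ δ : ℕ → ℝ), (∀ k, 0 < ρ k) → (∀ k, 0 < δ k) →
      (∀ k, ρ (k + 1) ≤ ρ k * τ⁻¹) →
      (∀ k ∈ J, lam.real (closedBall x (r / 2) \ ⋃ z ∈ Z k, closedBall z (ρ k)) ≤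
        lam.real (closedBall x (r / 2)) / 2) →
      ¬ Summable (J.indicator fun k => (min (δ k / ρ k) 1) ^ m) →
      ENNReal.ofReal (κ * r ^ m) ≤
        lam {y ∈ closedBall x r | ∃ᶠ k in atTop, k ∈ J ∧ ∃ z ∈ Z k, dist y z ≤ δ k} := by
  classical
  have hc := h.c_pos
  have hC := h.C_pos
  obtain ⟨α, hα⟩ : ∃ α, α = c ^ 2 / (2 * 6 ^ m * C) := ⟨_, rfl⟩
  obtain ⟨β, hβ⟩ : ∃ β, β = C ^ 3 * 4 ^ m / c ^ 2 := ⟨_, rfl⟩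
  have hα0 : 0 < α := by rw [hα]; positivity
  have hβ0 : 0 < β := by rw [hβ]; positivity
  obtain ⟨s, hs⟩ : ∃ s, s = α / (8 * β) := ⟨_, rfl⟩
  have hs0 : 0 < s := by rw [hs]; positivity
  obtain ⟨b, hb⟩ : ∃ b, b = min 1 s := ⟨_, rfl⟩
  have hb0 : 0 < b := by rw [hb]; positivity
  have hb1 : b ≤ 1 := by rw [hb]; exact min_le_left _ _
  have hbs : b ≤ s := by rw [hb]; exact min_le_right _ _
  refine ⟨α * s / 2, by positivity, 2 + 4 * β / α, by
    have : 0 < 4 * β / α := by positivity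
    linarith, ?_⟩
  intro τ hτ x r hr J Z ρ δ hρ hδ hρτ hcov hdiv
  have hτ4 : 4 * β / α ≤ τ - 1 := by linarith
  have hτ1 : 1 < τ := by
    have : 0 < 4 * β / α := by positivity
    linarith
  have hτβ : β * (1 / (τ - 1)) ≤ α / 4 := by
    rw [div_le_iff₀ hα0] at hτ4
    rw [mul_one_div, div_le_iff₀ (by linarith)]
    linarith
  have hτi : 0 < τ⁻¹ := inv_pos.2 (by linarith)
  have hρl : ∀ k j, ρ (k + j) ≤ ρ k * τ⁻¹ ^ j := by
    intro k j
    induction j with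
    | zero => simp
    | succ j ih =>
      calc ρ (k + (j + 1)) ≤ ρ (k + j) * τ⁻¹ := hρτ (k + j)
        _ ≤ ρ k * τ⁻¹ ^ j * τ⁻¹ := by gcongr
        _ = _ := by ring
  have hρ0 : ∃ k₂, ∀ k ≥ k₂, 4 * ρ k ≤ r := by
    have ht : Tendsto (fun k : ℕ => 4 * (ρ 0 * τ⁻¹ ^ k)) atTop (𝓝 0) := by
      have := tendsto_pow_atTop_nhds_zero_of_lt_one hτi.le (inv_lt_one_of_one_lt₀ hτ1)
      simpa using (this.const_mul (ρ 0)).const_mul 4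
    obtain ⟨k₂, hk₂⟩ := eventually_atTop.1 (ht.eventually_le_const hr)
    refine ⟨k₂, fun k hk => le_trans ?_ (hk₂ k hk)⟩
    have := hρl 0 k
    rw [zero_add] at this
    linarith
  obtain ⟨k₂, hk₂⟩ := hρ0
  have hY : ∀ k, ∃ Y : Finset X, k ∈ J → k₂ ≤ k →
      (∀ y ∈ Y, y ∈ Z k ∧ dist y x ≤ r / 2 + ρ k) ∧
      (∀ y ∈ Y, ∀ z ∈ Y, y ≠ z → 2 * ρ k < dist y z) ∧
      c * (r / 2) ^ m / 2 ≤ Y.card * (C * (3 * ρ k) ^ m) ∧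
      (Y.card : ℝ) * (c * ρ k ^ m) ≤ C * r ^ m := by
    intro k
    by_cases hk : k ∈ J ∧ k₂ ≤ k
    · obtain ⟨Y, hY⟩ := h.exists_separated (hρ k) hr (hk₂ k hk.2) (hcov k hk.1)
      exact ⟨Y, fun _ _ => hY⟩
    · exact ⟨∅, fun h1 h2 => absurd ⟨h1, h2⟩ hk⟩
  choose Y hY using hY
  obtain ⟨r', hr'⟩ : ∃ r' : ℕ → ℝ, r' = fun k => min (δ k) (b * ρ k) := ⟨_, rfl⟩
  have hr'0 : ∀ k, 0 < r' k := fun k => by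
    rw [hr']; exact lt_min (hδ k) (mul_pos hb0 (hρ k))
  have hr'δ : ∀ k, r' k ≤ δ k := fun k => by rw [hr']; exact min_le_left _ _
  have hr'b : ∀ k, r' k ≤ b * ρ k := fun k => by rw [hr']; exact min_le_right _ _
  have hr'ρ : ∀ k, r' k ≤ ρ k := fun k => (hr'b k).trans (by nlinarith [hρ k])
  obtain ⟨v, hv⟩ : ∃ v : ℕ → ℝ, v = fun k => (r' k / ρ k) ^ m := ⟨_, rfl⟩
  have hv0 : ∀ k, 0 < v k := fun k => by rw [hv]; exact pow_pos (div_pos (hr'0 k) (hρ k)) m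
  have hvb : ∀ k, v k ≤ b := fun k => by
    rw [hv]
    have h1 : r' k / ρ k ≤ b := by rw [div_le_iff₀ (hρ k)]; exact hr'b k
    have h0 : 0 ≤ r' k / ρ k := (div_pos (hr'0 k) (hρ k)).le
    calc (r' k / ρ k) ^ m ≤ b ^ m := by gcongr
      _ ≤ b := pow_le_of_le_one hb0.le hb1 hm.ne'
  have hvdiv : ¬ Summable (J.indicator v) := by
    intro hsum
    refine hdiv (Summable.of_nonneg_of_le (fun k => ?_) (fun k => ?_) (hsum.mul_left ((b ^ m)⁻¹)))
    · refine indicator_nonneg (fun k _ => ?_) k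
      have := (div_pos (hδ k) (hρ k)).le
      positivity
    · by_cases hk : k ∈ J
      · rw [indicator_of_mem hk, indicator_of_mem hk, inv_mul_eq_div, le_div_iff₀ (by positivity),
          ← mul_pow, hv]
        have h0 : 0 ≤ min (δ k / ρ k) 1 := le_min (div_pos (hδ k) (hρ k)).le zero_le_one
        have h1 : min (δ k / ρ k) 1 * b ≤ r' k / ρ k := by
          rw [le_div_iff₀ (hρ k), hr']
          refine le_min ?_ ?_
          · calc min (δ k / ρ k) 1 * b * ρ k ≤ (δ k / ρ k) * 1 * ρ k := by
                  have := (hρ k).le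
                  have := (div_pos (hδ k) (hρ k)).le
                  gcongr
                  exact min_le_left _ _
              _ = δ k := by have := (hρ k).ne'; field_simp
          · calc min (δ k / ρ k) 1 * b * ρ k ≤ 1 * b * ρ k := by
                  have := (hρ k).le
                  gcongr
                  exact min_le_right _ _
              _ = _ := by ring
        exact pow_le_pow_left₀ (mul_nonneg h0 hb0.le) h1 m
      · simp [indicator_of_notMem hk]
  obtain ⟨E, hE⟩ : ∃ E : ℕ → Set X, E = fun k => ⋃ y ∈ Y k, closedBall y (r' k) := ⟨_, rfl⟩
  have hEm : ∀ k, MeasurableSet (E k) := fun k => by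
    rw [hE]; exact Finset.measurableSet_biUnion _ fun y _ => measurableSet_closedBall
  have hEfin : ∀ k, lam (E k) ≠ ⊤ := fun k => by
    rw [hE]
    exact (measure_biUnion_lt_top (Y k).finite_toSet fun y _ => (h.ne_top y _).lt_top).ne
  have hEsub : ∀ k ∈ J, k₂ ≤ k → E k ⊆ closedBall x r := by
    intro k hk hkk
    rw [hE]
    refine iUnion₂_subset fun y hy => closedBall_subset_closedBall' ?_
    have h1 := ((hY k hk hkk).1 y hy).2
    have h2 := hr'ρ k
    have h3 := hk₂ k hkk
    linarith
  have hElow : ∀ k ∈ J, k₂ ≤ k → α * r ^ m * v k ≤ lam.real (E k) := by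
    intro k hk hkk
    obtain ⟨-, hsep, hlo, -⟩ := hY k hk hkk
    have hρk := hρ k
    have hr'k := hr'0 k
    rw [hE, h.measureReal_biUnion_closedBall fun y hy z hz hyz => lt_of_le_of_lt
      (by linarith [hr'ρ k]) (hsep y hy z hz hyz)]
    refine le_trans ?_ (Finset.sum_le_sum fun y _ => h.lower y (r' k) hr'k)
    rw [Finset.sum_const, nsmul_eq_mul]
    have hcard : c * (r / 2) ^ m / 2 / (C * (3 * ρ k) ^ m) ≤ (Y k).card := by
      rw [div_le_iff₀ (by positivity)]; exact hlo
    refine le_trans (le_of_eq ?_) (mul_le_mul_of_nonneg_right hcard (by positivity))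
    rw [hα, hv]
    have h6 : (6 : ℝ) ^ m = 2 ^ m * 3 ^ m := by rw [← mul_pow]; norm_num
    simp only [div_pow, mul_pow, h6]
    field_simp
  have hinter : ∀ l ∈ J, k₂ ≤ l → ∀ k ∈ J, k₂ ≤ k → k < l → lam.real (E k ∩ E l) ≤
      β * r ^ m * (v k * v l + v l * τ⁻¹ ^ (l - k)) := by
    intro l hl hll k hk hkk hkl
    have hρk := hρ k
    have hρl' := hρ l
    rw [hE, hβ]
    refine (h.measureReal_inter_le (hρ k) (hρ l) (hr'0 k) (hr'0 l) hr (hr'ρ l)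
      (hY k hk hkk).2.2.2 (hY l hl hll).2.1).trans ?_
    have hvl := (hv0 l).le
    have : (ρ l / ρ k) ^ m ≤ τ⁻¹ ^ (l - k) := by
      have h1 : ρ l / ρ k ≤ τ⁻¹ ^ (l - k) := by
        rw [div_le_iff₀ (hρ k), mul_comm]
        have := hρl k (l - k)
        rwa [Nat.add_sub_cancel' hkl.le] at this
      have h2 : ρ l / ρ k ≤ 1 := h1.trans (pow_le_one₀ hτi.le (inv_le_one_of_one_le₀ hτ1.le))
      exact (pow_le_of_le_one (by positivity) h2 hm.ne').trans h1
    rw [hv] at hvl ⊢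
    gcongr
  obtain ⟨V, hV⟩ : ∃ V : ℕ → Set X, V = fun k₁ => ⋃ k, ⋃ (_ : k ∈ J ∧ k₂ ≤ k ∧ k₁ ≤ k), E k :=
    ⟨_, rfl⟩
  have hVm : ∀ k, MeasurableSet (V k) := fun k => by
    rw [hV]
    exact MeasurableSet.iUnion fun j => MeasurableSet.iUnion fun _ => hEm j
  have hVsub : ∀ k, V k ⊆ closedBall x r := fun k => by
    rw [hV]
    exact iUnion₂_subset fun j hj => hEsub j hj.1 hj.2.1
  have hVfin : ∀ k, lam (V k) ≠ ⊤ := fun k => measure_ne_top_of_subset (hVsub k) (h.ne_top x r)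
  have hVanti : Antitone V := by
    intro i j hij
    rw [hV]
    refine iUnion₂_subset fun k hk => ?_
    exact subset_iUnion₂_of_subset k ⟨hk.1, hk.2.1, hij.trans hk.2.2⟩ subset_rfl
  have hVlow : ∀ k₁, α * s / 2 * r ^ m ≤ lam.real (V k₁) := by
    intro k₁
    obtain ⟨F, hF, hFs, hFb⟩ := exists_finset_sum_between (u := J.indicator v) (b := b)
      (fun k => indicator_nonneg (fun k _ => (hv0 k).le) k)
      (fun k => indicator_apply_le' (fun _ => hvb k) fun _ => hb0.le) hs0 hvdiv (max k₁ k₂)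
    have hFJ : ∀ k ∈ F, k ∈ J := fun k hk => by
      by_contra hkJ
      have := (hF k hk).2
      rw [indicator_of_notMem hkJ] at this
      exact lt_irrefl _ this
    have hFk₂ : ∀ k ∈ F, k₂ ≤ k := fun k hk => (le_max_right _ _).trans (hF k hk).1
    have hFv : ∑ k ∈ F, J.indicator v k = ∑ k ∈ F, v k :=
      Finset.sum_congr rfl fun k hk => indicator_of_mem (hFJ k hk) _
    rw [hFv] at hFs hFb
    have hbon := sum_measureReal_le_biUnion_add lam E hEm hEfin F
    have hlow : α * r ^ m * ∑ k ∈ F, v k ≤ ∑ k ∈ F, lam.real (E k) := by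
      rw [Finset.mul_sum]
      exact Finset.sum_le_sum fun k hk => hElow k (hFJ k hk) (hFk₂ k hk)
    have hcross : ∑ l ∈ F, ∑ k ∈ F.filter (· < l), lam.real (E k ∩ E l) ≤
        ∑ l ∈ F, v l * (r ^ m * (α / 2)) := by
      refine Finset.sum_le_sum fun l hl => ?_
      have hvl := (hv0 l).le
      calc ∑ k ∈ F.filter (· < l), lam.real (E k ∩ E l)
          ≤ ∑ k ∈ F.filter (· < l), β * r ^ m * (v k * v l + v l * τ⁻¹ ^ (l - k)) := by
            refine Finset.sum_le_sum fun k hk => ?_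
            obtain ⟨hkF, hkl⟩ := Finset.mem_filter.1 hk
            exact hinter l (hFJ l hl) (hFk₂ l hl) k (hFJ k hkF) (hFk₂ k hkF) hkl
        _ = v l * (r ^ m * (β * ∑ k ∈ F.filter (· < l), v k +
              β * ∑ k ∈ F.filter (· < l), τ⁻¹ ^ (l - k))) := by
            rw [← mul_add, ← Finset.sum_add_distrib, ← mul_assoc, ← mul_assoc, Finset.mul_sum]
            exact Finset.sum_congr rfl fun k _ => by ring
        _ ≤ v l * (r ^ m * (β * (s + b) + β * (1 / (τ - 1)))) := by
            gcongr
            · refine le_trans ?_ hFb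
              exact Finset.sum_le_sum_of_subset_of_nonneg (Finset.filter_subset _ _)
                fun k _ _ => (hv0 k).le
            · exact sum_filter_lt_inv_pow_le hτ1 F l
        _ ≤ v l * (r ^ m * (α / 2)) := by
            gcongr
            have : β * (s + b) ≤ α / 4 := by
              calc β * (s + b) ≤ β * (s + s) := by gcongr
                _ = α / 4 := by rw [hs]; field_simp; norm_num
            linarith
    rw [← Finset.sum_mul] at hcross
    have hsubV : lam.real (⋃ k ∈ F, E k) ≤ lam.real (V k₁) := by
      refine measureReal_mono ?_ (hVfin k₁)
      rw [hV]
      refine iUnion₂_subset fun k hk => subset_iUnion₂_of_subset k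
        ⟨hFJ k hk, hFk₂ k hk, (le_max_left _ _).trans (hF k hk).1⟩ subset_rfl
    have hrm : 0 < r ^ m := by positivity
    have hfin : α * s / 2 * r ^ m ≤ α * r ^ m / 2 * ∑ k ∈ F, v k := by
      calc α * s / 2 * r ^ m = α * r ^ m / 2 * s := by ring
        _ ≤ _ := by gcongr
    have : (∑ k ∈ F, v k) * (r ^ m * (α / 2)) = α * r ^ m / 2 * ∑ k ∈ F, v k := by ring
    linarith
  have hlim := tendsto_measure_iInter_atTop (μ := lam) (fun k => (hVm k).nullMeasurableSet) hVanti
    ⟨0, hVfin 0⟩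
  have hge : ENNReal.ofReal (α * s / 2 * r ^ m) ≤ lam (⋂ k, V k) := by
    refine ge_of_tendsto' hlim fun k => ?_
    rw [Function.comp_apply, ← ofReal_measureReal (hVfin k)]
    exact ENNReal.ofReal_le_ofReal (hVlow k)
  refine hge.trans (measure_mono ?_)
  intro y hy
  rw [mem_iInter] at hy
  refine ⟨hVsub 0 (hy 0), frequently_atTop.2 fun k₁ => ?_⟩
  have := hy k₁
  simp only [hV, hE, mem_iUnion, mem_closedBall, exists_prop] at this
  obtain ⟨k, ⟨hkJ, hkk, hk₁⟩, z, hz, hyz⟩ := this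
  exact ⟨k, hk₁, hkJ, z, ((hY k hkJ hkk).1 z hz).1, hyz.trans (hr'δ k)⟩

end MetricUbiquity

section FirstMoment

open Metric Set Filter Topology

theorem lintegral_measure_add_mem {G X : Type*} [AddGroup G] [MeasurableSpace G]
    [MeasurableAdd₂ G] [MeasurableSpace X] (ν : Measure G) (lam : Measure X) [SFinite ν]
    [SFinite lam] [ν.IsAddRightInvariant] {g : X → G} (hg : Measurable g) {S : Set G} {D : Set X}
    (hS : MeasurableSet S) (hD : MeasurableSet D) :
    ∫⁻ A, lam {x ∈ D | A + g x ∈ S} ∂ν = lam D * ν S := by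
  have hU : MeasurableSet {z : G × X | z.2 ∈ D ∧ z.1 + g z.2 ∈ S} :=
    (measurable_snd hD).inter ((measurable_fst.add (hg.comp measurable_snd)) hS)
  have h1 := Measure.prod_apply (μ := ν) (ν := lam) hU
  rw [Measure.prod_apply_symm hU] at h1
  calc ∫⁻ A, lam {x ∈ D | A + g x ∈ S} ∂ν
      = ∫⁻ x, ν ((fun A => (A, x)) ⁻¹' {z : G × X | z.2 ∈ D ∧ z.1 + g z.2 ∈ S}) ∂lam := h1.symm
    _ = ∫⁻ x, D.indicator (fun _ => ν S) x ∂lam := by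
        refine lintegral_congr fun x => ?_
        by_cases hx : x ∈ D
        · rw [indicator_of_mem hx, ← measure_preimage_add_right ν (g x) S]
          congr 1
          ext A
          simp [hx]
        · rw [indicator_of_notMem hx]
          convert measure_empty (μ := ν)
          ext A
          simp [hx]
    _ = lam D * ν S := by rw [lintegral_indicator_const hD, mul_comm]

/-- If the sets `M k` eventually have measure at most `ε` then, outside a set of measure at most
`ε`, a divergent series still diverges after removing the indices `k` with `A ∈ M k`. -/
theorem measure_summable_ite_le {α : Type*} [MeasurableSpace α] (μ : Measure α) {M : ℕ → Set α}
    (hM : ∀ k, MeasurableSet (M k)) {ε : ENNReal} {k₀ : ℕ} (hε : ∀ k ≥ k₀, μ (M k) ≤ ε)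
    {w : ℕ → ℝ} (hw : ∀ k, 0 ≤ w k) (hdiv : ¬ Summable w) :
    μ {A | Summable fun k => (M k)ᶜ.indicator (fun _ => w k) A} ≤ ε := by
  have hdiv' : ¬ Summable fun k => w (k + k₀) := fun h => hdiv ((summable_nat_add_iff k₀).1 h)
  have hW := (not_summable_iff_tendsto_nat_atTop_of_nonneg fun k => hw (k + k₀)).1 hdiv'
  obtain ⟨W, hWd⟩ : ∃ W : ℕ → ℝ, W = fun K => ∑ k ∈ Finset.range K, w (k + k₀) := ⟨_, rfl⟩
  rw [← hWd] at hW
  let f : ℕ → α → ENNReal := fun K A =>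
    (∑ k ∈ Finset.range K, (M (k + k₀)).indicator (fun _ => ENNReal.ofReal (w (k + k₀))) A) /
      ENNReal.ofReal (W K)
  have hsm : ∀ K, Measurable fun A => ∑ k ∈ Finset.range K,
      (M (k + k₀)).indicator (fun _ => ENNReal.ofReal (w (k + k₀))) A := fun K =>
    Finset.measurable_sum _ fun k _ => measurable_const.indicator (hM _)
  have hfm : ∀ K, Measurable (f K) := fun K => (hsm K).div_const _
  have hint : ∀ᶠ K in atTop, ∫⁻ A, f K A ∂μ ≤ ε := by
    filter_upwards [hW.eventually_gt_atTop 0] with K hK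
    have hK' : ENNReal.ofReal (W K) ≠ 0 := by simpa using hK
    simp only [f, div_eq_mul_inv]
    rw [lintegral_mul_const _ (hsm K), ← div_eq_mul_inv,
      lintegral_finsetSum _ fun k _ => measurable_const.indicator (hM _)]
    refine ENNReal.div_le_of_le_mul ?_
    have : ENNReal.ofReal (W K) = ∑ k ∈ Finset.range K, ENNReal.ofReal (w (k + k₀)) := by
      rw [hWd, ENNReal.ofReal_sum_of_nonneg fun k _ => hw _]
    rw [this, Finset.mul_sum]
    refine Finset.sum_le_sum fun k _ => ?_
    rw [lintegral_indicator_const (hM _), mul_comm]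
    gcongr
    exact hε _ (by omega)
  have hfatou : ∫⁻ A, liminf (fun K => f K A) atTop ∂μ ≤ ε := by
    refine (lintegral_liminf_le hfm).trans ?_
    exact liminf_le_of_frequently_le' hint.frequently
  have hmark := mul_meas_ge_le_lintegral (μ := μ) (Measurable.liminf hfm) 1
  rw [one_mul] at hmark
  refine le_trans (measure_mono fun A hA => ?_) (hmark.trans hfatou)
  simp only [mem_ofPred_eq] at hA ⊢
  obtain ⟨T, hT⟩ : ∃ T, T = ∑' k, (M k)ᶜ.indicator (fun _ => w k) A := ⟨_, rfl⟩
  have hnn : ∀ k, 0 ≤ (M k)ᶜ.indicator (fun _ => w k) A := fun k =>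
    indicator_nonneg (fun _ _ => hw k) A
  have hT' : ∀ K, ∑ k ∈ Finset.range K, (M (k + k₀))ᶜ.indicator (fun _ => w (k + k₀)) A ≤ T := by
    intro K
    have h1 := (summable_nat_add_iff k₀).2 hA
    refine (h1.sum_le_tsum _ fun k _ => hnn _).trans ?_
    rw [hT, ← hA.sum_add_tsum_nat_add k₀]
    have : 0 ≤ ∑ k ∈ Finset.range k₀, (M k)ᶜ.indicator (fun _ => w k) A :=
      Finset.sum_nonneg fun k _ => hnn k
    linarith
  have hlow : ∀ᶠ K in atTop, ENNReal.ofReal ((W K - T) / W K) ≤ f K A := by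
    filter_upwards [hW.eventually_gt_atTop 0] with K hK
    rw [ENNReal.ofReal_div_of_pos hK]
    refine ENNReal.div_le_div_right ?_ _
    have hs : W K - T ≤ ∑ k ∈ Finset.range K, (M (k + k₀)).indicator (fun _ => w (k + k₀)) A := by
      have : W K = ∑ k ∈ Finset.range K, (M (k + k₀)).indicator (fun _ => w (k + k₀)) A +
          ∑ k ∈ Finset.range K, (M (k + k₀))ᶜ.indicator (fun _ => w (k + k₀)) A := by
        rw [hWd, ← Finset.sum_add_distrib]
        exact Finset.sum_congr rfl fun k _ =>
          (indicator_self_add_compl_apply (M (k + k₀)) (fun _ => w (k + k₀)) A).symm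
      linarith [hT' K]
    refine (ENNReal.ofReal_le_ofReal hs).trans (le_of_eq ?_)
    rw [ENNReal.ofReal_sum_of_nonneg fun k _ => indicator_nonneg (fun _ _ => hw _) A]
    refine Finset.sum_congr rfl fun k _ => ?_
    by_cases h : A ∈ M (k + k₀)
    · rw [indicator_of_mem h, indicator_of_mem h]
    · rw [indicator_of_notMem h, indicator_of_notMem h, ENNReal.ofReal_zero]
  have hlim : Tendsto (fun K => ENNReal.ofReal ((W K - T) / W K)) atTop (𝓝 1) := by
    have h1 : Tendsto (fun K => 1 - T / W K) atTop (𝓝 (1 - 0)) :=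
      tendsto_const_nhds.sub (hW.const_div_atTop T)
    have h2 : Tendsto (fun K => (W K - T) / W K) atTop (𝓝 1) := by
      rw [sub_zero] at h1
      refine h1.congr' ?_
      filter_upwards [hW.eventually_gt_atTop 0] with K hK
      rw [sub_div, div_self hK.ne']
    simpa using ENNReal.tendsto_ofReal h2
  calc (1 : ENNReal) = liminf (fun K => ENNReal.ofReal ((W K - T) / W K)) atTop :=
        hlim.liminf_eq.symm
    _ ≤ _ := liminf_le_liminf hlow

end FirstMoment

section AffineForm

open Metric Set

variable {K : Type*} [NormedField K] {m n : ℕ}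

theorem exists_norm_apply_eq_norm {q : Fin n → K} (hq : q ≠ 0) : ∃ b, ‖q b‖ = ‖q‖ := by
  have : Nonempty (Fin n) := by
    by_contra hne
    rw [not_nonempty_iff] at hne
    exact hq (Subsingleton.elim _ _)
  obtain ⟨b, hb⟩ := Finite.exists_max fun b => ‖q b‖
  exact ⟨b, le_antisymm (norm_le_pi_norm q b)
    ((pi_norm_le_iff_of_nonneg (norm_nonneg _)).2 hb)⟩

/-- The value `A q + P` of the system of affine forms. -/
def affForm (A : Fin m → Fin n → K) (q : Fin n → K) (P : Fin m → K) : Fin m → K :=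
  fun a => (∑ b, A a b * q b) + P a

/-- The matrix whose column `b` is `x`, and whose other columns vanish. -/
def columnEmb (b : Fin n) (x : Fin m → K) : Fin m → Fin n → K := fun a => Pi.single b (x a)

theorem affForm_add_columnEmb (A : Fin m → Fin n → K) (b : Fin n) (x : Fin m → K) (q : Fin n → K)
    (P : Fin m → K) : affForm (A + columnEmb b x) q P = affForm A q P + q b • x := by
  funext a
  simp only [affForm, columnEmb, Pi.add_apply, add_mul, Finset.sum_add_distrib, Pi.smul_apply,
    smul_eq_mul]
  have : ∑ c, (Pi.single b (x a) : Fin n → K) c * q c = x a * q b := by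
    rw [Finset.sum_eq_single b (fun c _ hc => by rw [Pi.single_eq_of_ne hc, zero_mul]) (by simp),
      Pi.single_eq_same]
  rw [this]
  ring

theorem norm_columnEmb_le (b : Fin n) (x : Fin m → K) : ‖columnEmb b x‖ ≤ ‖x‖ := by
  refine (pi_norm_le_iff_of_nonneg (norm_nonneg _)).2 fun a => ?_
  refine (pi_norm_le_iff_of_nonneg (norm_nonneg _)).2 fun c => ?_
  by_cases h : c = b
  · subst h
    simpa [columnEmb] using norm_le_pi_norm x a
  · simp [columnEmb, Pi.single_eq_of_ne h]

theorem continuous_columnEmb (b : Fin n) : Continuous (columnEmb b : (Fin m → K) → _) := by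
  refine continuous_pi fun a => continuous_pi fun c => ?_
  by_cases h : c = b
  · subst h
    simpa [columnEmb] using continuous_apply a
  · simpa [columnEmb, Pi.single_eq_of_ne h] using continuous_const

theorem continuous_affForm (q : Fin n → K) (P : Fin m → K) :
    Continuous fun A : Fin m → Fin n → K => affForm A q P := by
  unfold affForm
  fun_prop

/-- The translates of `A` in column `b` for which the affine form is small lie in a small ball. -/
theorem norm_affForm_add_columnEmb_le_iff {A : Fin m → Fin n → K} {b : Fin n} {x : Fin m → K}
    {q : Fin n → K} {P : Fin m → K} (hq : q b ≠ 0) {ρ : ℝ} :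
    ‖affForm (A + columnEmb b x) q P‖ ≤ ρ ↔
      x ∈ closedBall (-((q b)⁻¹ • affForm A q P)) (ρ / ‖q b‖) := by
  have hq' : 0 < ‖q b‖ := norm_pos_iff.2 hq
  rw [affForm_add_columnEmb, mem_closedBall, dist_eq_norm, sub_neg_eq_add, le_div_iff₀ hq',
    mul_comm, ← norm_smul, smul_add, smul_inv_smul₀ hq, add_comm]

theorem exists_measure_norm_affForm_le [ProperSpace K] [MeasurableSpace K] [BorelSpace K]
    (ν : Measure (Fin m → Fin n → K)) [ν.IsAddHaarMeasure]
    (lam : Measure (Fin m → K)) [lam.IsAddHaarMeasure] {c C : ℝ} (h : BallGrowth lam m c C)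
    (R : ℝ) : ∃ D > 0, ∀ q : Fin n → K, q ≠ 0 → ∀ (P : Fin m → K) (ρ : ℝ), 0 < ρ →
      ν (closedBall 0 R ∩ {A | ‖affForm A q P‖ ≤ ρ}) ≤ ENNReal.ofReal (D * (ρ / ‖q‖) ^ m) := by
  have hc := h.c_pos
  have hC := h.C_pos
  have hfin : ν (closedBall 0 (R + 1)) ≠ ⊤ := measure_closedBall_lt_top.ne
  refine ⟨(ν.real (closedBall 0 (R + 1)) + 1) * C / c, by positivity, ?_⟩
  intro q hq P ρ hρ
  obtain ⟨b, hb⟩ := exists_norm_apply_eq_norm hq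
  have hqb : q b ≠ 0 := by
    rw [← norm_ne_zero_iff, hb]; exact norm_ne_zero_iff.2 hq
  have hq0 : 0 < ‖q‖ := norm_pos_iff.2 hq
  obtain ⟨S, hS⟩ : ∃ S, S = closedBall 0 R ∩ {A : Fin m → Fin n → K | ‖affForm A q P‖ ≤ ρ} :=
    ⟨_, rfl⟩
  have hSm : MeasurableSet S := by
    rw [hS]
    exact (isClosed_closedBall.inter
      (isClosed_le (continuous_affForm q P).norm continuous_const)).measurableSet
  rw [← hS]
  have hL := lintegral_measure_add_mem ν lam (continuous_columnEmb b).measurable hSm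
    (measurableSet_closedBall (x := 0) (ε := 1))
  have hub : ∫⁻ A, lam {x ∈ closedBall 0 1 | A + columnEmb b x ∈ S} ∂ν ≤
      ENNReal.ofReal (C * (ρ / ‖q‖) ^ m) * ν (closedBall 0 (R + 1)) := by
    calc ∫⁻ A, lam {x ∈ closedBall 0 1 | A + columnEmb b x ∈ S} ∂ν
        ≤ ∫⁻ A, (closedBall 0 (R + 1)).indicator
            (fun _ => ENNReal.ofReal (C * (ρ / ‖q‖) ^ m)) A ∂ν := by
          refine lintegral_mono fun A => ?_
          by_cases hA : A ∈ closedBall 0 (R + 1)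
          · rw [indicator_of_mem hA]
            refine le_trans (measure_mono (t := closedBall (-((q b)⁻¹ • affForm A q P))
              (ρ / ‖q b‖)) ?_) ?_
            · rintro x ⟨-, hx⟩
              rw [hS] at hx
              exact (norm_affForm_add_columnEmb_le_iff hqb).1 hx.2
            · rw [← ofReal_measureReal (h.ne_top _ _), hb]
              exact ENNReal.ofReal_le_ofReal (h.upper _ _ (by positivity))
          · rw [indicator_of_notMem hA, nonpos_iff_eq_zero]
            convert measure_empty (μ := lam)
            ext x
            simp only [mem_ofPred_eq, mem_empty_iff_false, iff_false, not_and]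
            intro hx hxS
            rw [hS] at hxS
            refine hA ?_
            have h1 := mem_closedBall_zero_iff.1 hxS.1
            have h2 := mem_closedBall_zero_iff.1 hx
            rw [mem_closedBall_zero_iff]
            calc ‖A‖ = ‖(A + columnEmb b x) - columnEmb b x‖ := by rw [add_sub_cancel_right]
              _ ≤ ‖A + columnEmb b x‖ + ‖columnEmb b x‖ := norm_sub_le _ _
              _ ≤ R + 1 := add_le_add h1 ((norm_columnEmb_le b x).trans h2)
      _ = _ := lintegral_indicator_const measurableSet_closedBall _
  rw [hL] at hub
  have hlow : ENNReal.ofReal c ≤ lam (closedBall 0 1) := by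
    rw [← ofReal_measureReal (h.ne_top _ _)]
    have := h.lower 0 1 one_pos
    rw [one_pow, mul_one] at this
    exact ENNReal.ofReal_le_ofReal this
  have hfinal : ENNReal.ofReal c * ν S ≤
      ENNReal.ofReal c * ENNReal.ofReal
        ((ν.real (closedBall 0 (R + 1)) + 1) * C / c * (ρ / ‖q‖) ^ m) := by
    refine (mul_le_mul_left hlow _).trans (hub.trans ?_)
    rw [← ofReal_measureReal hfin, ← ENNReal.ofReal_mul (by positivity),
      ← ENNReal.ofReal_mul hc.le]
    refine ENNReal.ofReal_le_ofReal ?_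
    have h1 : c * ((ν.real (closedBall 0 (R + 1)) + 1) * C / c * (ρ / ‖q‖) ^ m) =
      C * (ρ / ‖q‖) ^ m * (ν.real (closedBall 0 (R + 1)) + 1) := by field_simp
    rw [h1]
    gcongr
    linarith
  exact (ENNReal.mul_le_mul_iff_right (by simpa using hc) ENNReal.ofReal_ne_top).1 hfinal

end AffineForm

section AbstractUbiquity

open Metric Set Filter Topology

theorem measurableSet_setOf_infinite {α I : Type*} [MeasurableSpace α] [Countable I]
    {B : I → Set α} (hB : ∀ i, MeasurableSet (B i)) :
    MeasurableSet {A | {i | A ∈ B i}.Infinite} := by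
  have : {A | {i | A ∈ B i}.Infinite} = ⋂ F : Finset I, ⋃ i, ⋃ (_ : i ∉ F), B i := by
    ext A
    simp only [mem_ofPred_eq, mem_iInter, mem_iUnion, exists_prop]
    constructor
    · intro h F
      obtain ⟨i, hi, hiF⟩ := h.exists_notMem_finset F
      exact ⟨i, hiF, hi⟩
    · intro h hfin
      obtain ⟨i, hi, hiA⟩ := h hfin.toFinset
      exact hi (hfin.mem_toFinset.2 hiA)
  rw [this]
  exact MeasurableSet.iInter fun F => MeasurableSet.iUnion fun i =>
    MeasurableSet.iUnion fun _ => hB i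

theorem not_summable_min_one {u : ℕ → ℝ} (hdiv : ¬ Summable u) {c : ℝ} (hc : 0 < c) :
    ¬ Summable fun k => min (u k / c) 1 := by
  intro h
  refine hdiv ?_
  have h0 := h.tendsto_atTop_zero.eventually_lt_const one_pos
  have h1 : Summable fun k => u k / c := by
    refine h.congr_cofinite ?_
    rw [Nat.cofinite_eq_atTop]
    filter_upwards [h0] with k hk
    rcases min_lt_iff.1 hk with h | h
    · exact (min_eq_left h.le)
    · exact absurd h (lt_irrefl _)
  refine (h1.mul_right c).congr fun k => ?_
  field_simp

/-- If `E` has finite measure and is disjoint from `S`, then few points of `E` are moved into `S` by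
a positive proportion of small translations. -/
theorem exists_radius_measure_translate_le {G X : Type*} [NormedAddCommGroup G] [ProperSpace G]
    [MeasurableSpace G] [BorelSpace G] [NormedAddCommGroup X] [ProperSpace X]
    [MeasurableSpace X] [BorelSpace X] (ν : Measure G) [ν.IsAddHaarMeasure]
    (lam : Measure X) [lam.IsAddHaarMeasure] {g : X → G} (hg : Continuous g) (hg0 : g 0 = 0)
    {E S : Set G} (hE : MeasurableSet E) (hS : MeasurableSet S) (hES : Disjoint E S)
    (hEfin : ν E ≠ ⊤) {η : ENNReal} (hη : 0 < η) :
    ∃ r₀ > 0, ∀ r ≤ r₀, ∀ t : ENNReal,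
      t * ν {A ∈ E | t ≤ lam {x ∈ closedBall 0 r | A + g x ∈ S}} ≤ η * lam (closedBall 0 r) := by
  let f : X → C(G, G) := fun x => ⟨fun A => A + g x, by fun_prop⟩
  have hf : Continuous f := by
    refine ContinuousMap.continuous_of_continuous_uncurry f ?_
    change Continuous fun z : X × G => z.2 + g z.1
    fun_prop
  have hlim := tendsto_measure_symmDiff_preimage_nhds_zero (μ := ν) (ν := ν) (f := f)
    (l := 𝓝 0) (g := f 0) (s := E) hf.continuousAt
    (Eventually.of_forall fun x => measurePreserving_add_right ν (g x))
    (measurePreserving_add_right ν (g 0)) hE.nullMeasurableSet hEfin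
  have hev := hlim.eventually_le_const hη
  obtain ⟨r₀, hr₀, hball⟩ := Metric.nhds_basis_closedBall.eventually_iff.1 hev
  refine ⟨r₀, hr₀, fun r hr t => ?_⟩
  obtain ⟨U, hU⟩ : ∃ U : Set (G × X),
    U = {z | z.1 ∈ E ∧ z.2 ∈ closedBall 0 r ∧ z.1 + g z.2 ∈ S} := ⟨_, rfl⟩
  have hUm : MeasurableSet U := by
    rw [hU]
    exact (measurable_fst hE).inter ((measurable_snd measurableSet_closedBall).inter
      ((measurable_fst.add (hg.measurable.comp measurable_snd)) hS))
  calc t * ν {A ∈ E | t ≤ lam {x ∈ closedBall 0 r | A + g x ∈ S}}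
      ≤ t * ν {A | t ≤ lam (Prod.mk A ⁻¹' U)} := by
        refine mul_le_mul_right (measure_mono ?_) t
        rintro A ⟨hAE, hA⟩
        refine hA.trans (measure_mono fun x hx => ?_)
        rw [hU]
        exact ⟨hAE, hx.1, hx.2⟩
    _ ≤ ∫⁻ A, lam (Prod.mk A ⁻¹' U) ∂ν :=
        mul_meas_ge_le_lintegral (measurable_measure_prodMk_left hUm) t
    _ = ∫⁻ x, ν ((fun A => (A, x)) ⁻¹' U) ∂lam := by
        rw [← Measure.prod_apply hUm, Measure.prod_apply_symm hUm]
    _ ≤ ∫⁻ x, (closedBall 0 r).indicator (fun _ => η) x ∂lam := by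
        refine lintegral_mono fun x => ?_
        by_cases hx : x ∈ closedBall 0 r
        · rw [indicator_of_mem hx]
          refine (measure_mono ?_).trans (hball (closedBall_subset_closedBall hr hx))
          intro A hA
          rw [hU] at hA
          refine Or.inr ⟨?_, ?_⟩
          · change A + g 0 ∈ E
            rw [hg0, add_zero]
            exact hA.1
          · exact fun h => disjoint_left.1 hES h hA.2.2
        · rw [indicator_of_notMem hx, nonpos_iff_eq_zero]
          convert measure_empty (μ := ν)
          ext A
          rw [hU]
          simp only [mem_preimage, mem_ofPred_eq, mem_empty_iff_false, iff_false]
          exact fun h => hx h.2.1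
    _ = η * lam (closedBall 0 r) := lintegral_indicator_const measurableSet_closedBall _

variable {K : Type*} [NormedField K] [ProperSpace K] [MeasurableSpace K] [BorelSpace K] {m n : ℕ}

theorem ae_infinite_of_ubiquity (hm : 0 < m)
    (ν : Measure (Fin m → Fin n → K)) [ν.IsAddHaarMeasure]
    (lam : Measure (Fin m → K)) [lam.IsAddHaarMeasure] {c C : ℝ} (h : BallGrowth lam m c C) :
    ∃ τ₀ : ℝ, 1 < τ₀ ∧ ∀ τ ≥ τ₀, ∀ {I : Type} [Countable I] (P : I → Fin m → K)
      (q : I → Fin n → K) (b₀ : Fin n) (ψ : ℝ → ℝ), (∀ t, 0 < ψ t) →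
      (∀ ⦃t₁ t₂ : ℝ⦄, 0 < t₁ → t₁ ≤ t₂ → ψ t₂ ≤ ψ t₁) →
      (¬ Summable fun k : ℕ => (τ ^ k) ^ n * ψ ((τ ^ k) ^ n)) →
      (∀ R > 0, ∀ ε > 0, ∃ L ≥ (1 : ℝ), ∃ k₀ : ℕ, ∀ k ≥ k₀,
        ν (closedBall 0 R ∩ {A | ¬ ∃ i, ‖affForm A (q i) (P i)‖ ≤ L / ((τ ^ k) ^ n) ^ (m : ℝ)⁻¹ ∧
          τ ^ k / L ≤ ‖q i b₀‖ ∧ ‖q i‖ ≤ τ ^ k}) ≤ ENNReal.ofReal ε) →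
      ∀ᵐ A ∂ν, {i | ‖affForm A (q i) (P i)‖ ^ m ≤ ψ (‖q i‖ ^ n)}.Infinite := by
  obtain ⟨κ, hκ, τ₀, hτ₀, hlim⟩ := h.exists_limsup_lower_bound hm
  refine ⟨τ₀, hτ₀, fun τ hτ I _ P q b₀ ψ hψ hanti hdiv hub => ?_⟩
  have hC := h.C_pos
  have hτ1 : 1 < τ := hτ₀.trans_le hτ
  have hT0 : ∀ k : ℕ, 0 < τ ^ k := fun k => by positivity
  obtain ⟨S, hS⟩ : ∃ S : Set (Fin m → Fin n → K),
    S = {A | {i | ‖affForm A (q i) (P i)‖ ^ m ≤ ψ (‖q i‖ ^ n)}.Infinite} := ⟨_, rfl⟩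
  have hSm : MeasurableSet S := by
    rw [hS]
    exact measurableSet_setOf_infinite
      (B := fun i => {A | ‖affForm A (q i) (P i)‖ ^ m ≤ ψ (‖q i‖ ^ n)}) fun i =>
        (isClosed_le ((continuous_affForm _ _).norm.pow m) continuous_const).measurableSet
  obtain ⟨e, he⟩ : ∃ e : ℕ → ℝ, e = fun k => ((τ ^ k) ^ n) ^ (m : ℝ)⁻¹ := ⟨_, rfl⟩
  have he0 : ∀ k, 0 < e k := fun k => by rw [he]; positivity
  have hem : ∀ k, e k ^ m = (τ ^ k) ^ n := fun k => by
    rw [he]; exact Real.rpow_inv_natCast_pow (by positivity) hm.ne'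
  have hemono : ∀ k, e k ≤ e (k + 1) := fun k => by
    rw [he]
    have : τ ^ k ≤ τ ^ (k + 1) := pow_le_pow_right₀ hτ1.le (Nat.le_succ k)
    have := hT0 k
    simp only
    gcongr
  have hball : ∀ R : ℝ, 0 < R → ν (Sᶜ ∩ closedBall 0 R) = 0 := by
    intro R hR
    obtain ⟨E, hE⟩ : ∃ E, E = Sᶜ ∩ closedBall (0 : Fin m → Fin n → K) R := ⟨_, rfl⟩
    have hEm : MeasurableSet E := by rw [hE]; exact hSm.compl.inter measurableSet_closedBall
    have hES : Disjoint E S := by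
      rw [hE]; exact disjoint_compl_left.mono_left inter_subset_left
    have hEfin : ν E ≠ ⊤ := by
      rw [hE]
      exact measure_ne_top_of_subset inter_subset_right measure_closedBall_lt_top.ne
    rw [← hE]
    have key : ∀ ε : ℝ, 0 < ε → ν E ≤ ENNReal.ofReal (2 * ε + ε * C / κ) := by
      intro ε hε
      obtain ⟨L, hL, k₀, hk₀⟩ := hub (R + 1) (by linarith) ε hε
      have hL0 : 0 < L := by linarith
      obtain ⟨r₀, hr₀, hr₀E⟩ := exists_radius_measure_translate_le ν lam
        (continuous_columnEmb b₀) (by funext a; simp [columnEmb]) hEm hSm hES hEfin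
        (ENNReal.ofReal_pos.2 hε)
      obtain ⟨r, hrd⟩ : ∃ r, r = min r₀ 1 := ⟨_, rfl⟩
      have hr : 0 < r := by rw [hrd]; exact lt_min hr₀ one_pos
      have hr1 : r ≤ 1 := by rw [hrd]; exact min_le_right _ _
      have hrr : r ≤ r₀ := by rw [hrd]; exact min_le_left _ _
      obtain ⟨Bad, hBad⟩ : ∃ Bad : ℕ → Set (Fin m → Fin n → K), Bad = fun k =>
        closedBall 0 (R + 1) ∩ {A | ¬ ∃ i, ‖affForm A (q i) (P i)‖ ≤ L / e k ∧
          τ ^ k / L ≤ ‖q i b₀‖ ∧ ‖q i‖ ≤ τ ^ k} := ⟨_, rfl⟩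
      have hBadm : ∀ k, MeasurableSet (Bad k) := by
        intro k
        rw [hBad]
        refine measurableSet_closedBall.inter ?_
        rw [← compl_ofPred, ofPred_exists]
        refine MeasurableSet.compl ?_
        refine MeasurableSet.iUnion fun i => MeasurableSet.inter ?_ (MeasurableSet.const _)
        exact (isClosed_le (continuous_affForm _ _).norm continuous_const).measurableSet
      have hBadν : ∀ k ≥ k₀, ν (Bad k) ≤ ENNReal.ofReal ε := fun k hk => by
        rw [hBad, he]; exact hk₀ k hk
      obtain ⟨Λ, hΛ⟩ : ∃ Λ, Λ = lam.real (closedBall 0 (r / 2)) := ⟨_, rfl⟩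
      have hΛ0 : 0 < Λ := by
        have h1 := h.lower 0 (r / 2) (by positivity)
        have h2 := h.c_pos
        rw [hΛ]
        exact lt_of_lt_of_le (by positivity) h1
      have hΛe : lam (closedBall 0 (r / 2)) = ENNReal.ofReal Λ := by
        rw [hΛ, ofReal_measureReal (h.ne_top _ _)]
      obtain ⟨M, hM⟩ : ∃ M : ℕ → Set (Fin m → Fin n → K), M = fun k => {A | ENNReal.ofReal (Λ / 2) ≤
        lam {x ∈ closedBall 0 (r / 2) | A + columnEmb b₀ x ∈ Bad k}} := ⟨_, rfl⟩
      have hsecm : ∀ k, Measurable fun A : Fin m → Fin n → K =>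
          lam {x ∈ closedBall 0 (r / 2) | A + columnEmb b₀ x ∈ Bad k} := by
        intro k
        have hU : MeasurableSet {z : (Fin m → Fin n → K) × (Fin m → K) |
            z.2 ∈ closedBall 0 (r / 2) ∧ z.1 + columnEmb b₀ z.2 ∈ Bad k} :=
          (measurable_snd measurableSet_closedBall).inter
            ((measurable_fst.add ((continuous_columnEmb b₀).measurable.comp measurable_snd))
              (hBadm k))
        exact measurable_measure_prodMk_left hU
      have hMm : ∀ k, MeasurableSet (M k) := by
        intro k
        rw [hM]
        exact measurableSet_le measurable_const (hsecm k)
      have hMν : ∀ k ≥ k₀, ν (M k) ≤ ENNReal.ofReal (2 * ε) := by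
        intro k hk
        have h1 := mul_meas_ge_le_lintegral (μ := ν) (hsecm k) (ENNReal.ofReal (Λ / 2))
        rw [lintegral_measure_add_mem ν lam (continuous_columnEmb b₀).measurable (hBadm k)
          measurableSet_closedBall, hΛe] at h1
        have h2 : ENNReal.ofReal (Λ / 2) * ν (M k) ≤
            ENNReal.ofReal (Λ / 2) * ENNReal.ofReal (2 * ε) := by
          rw [hM]
          refine h1.trans ((mul_le_mul_right (hBadν k hk) _).trans (le_of_eq ?_))
          rw [← ENNReal.ofReal_mul (by positivity), ← ENNReal.ofReal_mul (by positivity)]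
          congr 1
          ring
        have hpos : 0 < Λ / 2 := by positivity
        exact (ENNReal.mul_le_mul_iff_right (by simpa using hpos) ENNReal.ofReal_ne_top).1 h2
      obtain ⟨ρ, hρ⟩ : ∃ ρ : ℕ → ℝ, ρ = fun k => L ^ 2 / (e k * τ ^ k) := ⟨_, rfl⟩
      obtain ⟨δ, hδ⟩ : ∃ δ : ℕ → ℝ, δ = fun k => ψ ((τ ^ k) ^ n) ^ (m : ℝ)⁻¹ / τ ^ k := ⟨_, rfl⟩
      have hρ0 : ∀ k, 0 < ρ k := fun k => by
        rw [hρ]; have := he0 k; have := hT0 k; positivity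
      have hδ0 : ∀ k, 0 < δ k := fun k => by
        rw [hδ]; have := hψ ((τ ^ k) ^ n); have := hT0 k; positivity
      have hρτ : ∀ k, ρ (k + 1) ≤ ρ k * τ⁻¹ := by
        intro k
        rw [hρ]
        have h1 := hemono k
        have h2 := he0 k
        have h3 := hT0 k
        calc L ^ 2 / (e (k + 1) * τ ^ (k + 1)) ≤ L ^ 2 / (e k * τ ^ (k + 1)) := by gcongr
          _ = L ^ 2 / (e k * τ ^ k) * τ⁻¹ := by field_simp; ring
      obtain ⟨w, hw⟩ : ∃ w : ℕ → ℝ, w = fun k => (min (δ k / ρ k) 1) ^ m := ⟨_, rfl⟩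
      have hquot : ∀ k, (δ k / ρ k) ^ m = (τ ^ k) ^ n * ψ ((τ ^ k) ^ n) / (L ^ 2) ^ m := by
        intro k
        have h1 : δ k / ρ k = ψ ((τ ^ k) ^ n) ^ (m : ℝ)⁻¹ * e k / L ^ 2 := by
          rw [hδ, hρ]
          have := he0 k
          have := hT0 k
          field_simp
        rw [h1, div_pow, mul_pow, hem, Real.rpow_inv_natCast_pow (hψ _).le hm.ne']
        ring
      have hw' : ∀ k, w k = min ((τ ^ k) ^ n * ψ ((τ ^ k) ^ n) / (L ^ 2) ^ m) 1 := by
        intro k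
        have h0 : 0 ≤ δ k / ρ k := (div_pos (hδ0 k) (hρ0 k)).le
        rw [hw, ← hquot]
        simp only
        rcases le_total (δ k / ρ k) 1 with h1 | h1
        · rw [min_eq_left h1, min_eq_left (pow_le_one₀ h0 h1)]
        · rw [min_eq_right h1, min_eq_right (one_le_pow₀ h1), one_pow]
      have hw0 : ∀ k, 0 ≤ w k := fun k => by
        rw [hw]
        have := (div_pos (hδ0 k) (hρ0 k)).le
        positivity
      have hwdiv : ¬ Summable w := by
        have := not_summable_min_one hdiv (c := (L ^ 2) ^ m) (by positivity)
        rwa [show w = _ from funext hw']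
      have hex := measure_summable_ite_le ν hMm hMν hw0 hwdiv
      have hgood : ∀ A ∈ E, (¬ Summable fun k => (M k)ᶜ.indicator (fun _ => w k) A) →
          ENNReal.ofReal (κ * r ^ m) ≤ lam {x ∈ closedBall 0 r | A + columnEmb b₀ x ∈ S} := by
        intro A hA hns
        have hAR : ‖A‖ ≤ R := by
          rw [hE] at hA
          exact mem_closedBall_zero_iff.1 hA.2
        obtain ⟨Z, hZ⟩ : ∃ Z : ℕ → Set (Fin m → K), Z = fun k =>
          (fun i => -((q i b₀)⁻¹ • affForm A (q i) (P i))) ''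
            {i | τ ^ k / L ≤ ‖q i b₀‖ ∧ ‖q i‖ ≤ τ ^ k} := ⟨_, rfl⟩
        have hq0 : ∀ k i, τ ^ k / L ≤ ‖q i b₀‖ → 0 < ‖q i b₀‖ := fun k i hi =>
          lt_of_lt_of_le (div_pos (hT0 k) hL0) hi
        have hL1 := hlim τ hτ 0 r hr {k | A ∉ M k} Z ρ δ hρ0 hδ0 hρτ ?_ ?_
        · refine hL1.trans (measure_mono ?_)
          rintro y ⟨hy, hfr⟩
          refine ⟨hy, ?_⟩
          rw [hS]
          intro hfin
          obtain ⟨B, hB⟩ : ∃ B : ℝ, ∀ i, ‖affForm (A + columnEmb b₀ y) (q i) (P i)‖ ^ m ≤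
              ψ (‖q i‖ ^ n) → ‖q i b₀‖ ≤ B := by
            obtain ⟨B, hB⟩ := (hfin.image fun i => ‖q i b₀‖).bddAbove
            exact ⟨B, fun i hi => hB ⟨i, hi, rfl⟩⟩
          have hbig : ∀ᶠ k : ℕ in atTop, B < τ ^ k / L :=
            ((tendsto_pow_atTop_atTop_of_one_lt hτ1).atTop_div_const hL0).eventually_gt_atTop B
          obtain ⟨k, ⟨-, z, hz, hyz⟩, hBk⟩ := (hfr.and_eventually hbig).exists
          rw [hZ] at hz
          obtain ⟨i, ⟨hi1, hi2⟩, rfl⟩ := hz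
          have hqi := hq0 k i hi1
          have hqi' : 0 < ‖q i‖ := hqi.trans_le (norm_le_pi_norm _ _)
          have hle := (norm_affForm_add_columnEmb_le_iff (A := A) (b := b₀) (x := y) (q := q i)
            (P := P i) (norm_pos_iff.1 hqi) (ρ := ψ ((τ ^ k) ^ n) ^ (m : ℝ)⁻¹)).2 ?_
          · refine absurd (hB i ?_) (not_le.2 (hBk.trans_le hi1))
            calc ‖affForm (A + columnEmb b₀ y) (q i) (P i)‖ ^ m
                ≤ (ψ ((τ ^ k) ^ n) ^ (m : ℝ)⁻¹) ^ m := by gcongr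
              _ = ψ ((τ ^ k) ^ n) := Real.rpow_inv_natCast_pow (hψ _).le hm.ne'
              _ ≤ ψ (‖q i‖ ^ n) := hanti (by positivity) (by gcongr)
          · rw [mem_closedBall]
            refine hyz.trans ?_
            rw [hδ]
            have := hψ ((τ ^ k) ^ n)
            have := hT0 k
            have h3 : ‖q i b₀‖ ≤ τ ^ k := (norm_le_pi_norm _ _).trans hi2
            simp only
            gcongr
        · intro k hk
          have hk' : lam {x ∈ closedBall 0 (r / 2) | A + columnEmb b₀ x ∈ Bad k} <
              ENNReal.ofReal (Λ / 2) := by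
            rw [hM] at hk
            exact not_le.1 hk
          rw [← hΛ, measureReal_def]
          refine ENNReal.toReal_le_of_le_ofReal (by positivity) (le_trans (measure_mono ?_) hk'.le)
          rintro x ⟨hx, hxZ⟩
          refine ⟨hx, ?_⟩
          have hx2 := mem_closedBall_zero_iff.1 hx
          rw [hBad]
          refine ⟨?_, ?_⟩
          · rw [mem_closedBall_zero_iff]
            refine (norm_add_le _ _).trans (add_le_add hAR ?_)
            exact (norm_columnEmb_le _ _).trans (hx2.trans (by linarith))
          · rintro ⟨i, hi, hi1, hi2⟩
            refine hxZ (mem_iUnion₂.2 ⟨-((q i b₀)⁻¹ • affForm A (q i) (P i)), ?_, ?_⟩)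
            · rw [hZ]
              exact ⟨i, ⟨hi1, hi2⟩, rfl⟩
            · have hqi := hq0 k i hi1
              have h1 := (norm_affForm_add_columnEmb_le_iff (norm_pos_iff.1 hqi)).1 hi
              refine closedBall_subset_closedBall ?_ h1
              rw [hρ]
              have h4 := he0 k
              have h5 := hT0 k
              calc L / e k / ‖q i b₀‖ ≤ L / e k / (τ ^ k / L) := by gcongr
                _ = L ^ 2 / (e k * τ ^ k) := by field_simp
        · rw [hw] at hns
          refine fun hsum => hns (hsum.congr fun k => ?_)
          by_cases hk : A ∈ M k
          · rw [indicator_of_notMem (by simpa using hk), indicator_of_notMem (by simpa using hk)]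
          · rw [indicator_of_mem (by simpa using hk), indicator_of_mem (by simpa using hk)]
      have hκr : 0 < κ * r ^ m := by positivity
      have hmeas := hr₀E r hrr (ENNReal.ofReal (κ * r ^ m))
      have hmeas' : ν {A ∈ E | ENNReal.ofReal (κ * r ^ m) ≤
          lam {x ∈ closedBall 0 r | A + columnEmb b₀ x ∈ S}} ≤ ENNReal.ofReal (ε * C / κ) := by
        refine (ENNReal.mul_le_mul_iff_right (a := ENNReal.ofReal (κ * r ^ m))
          (by simpa using hκr) ENNReal.ofReal_ne_top).1 (hmeas.trans ?_)
        rw [← ENNReal.ofReal_mul hκr.le, ← ofReal_measureReal (h.ne_top _ _),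
          ← ENNReal.ofReal_mul hε.le]
        refine ENNReal.ofReal_le_ofReal ?_
        calc ε * lam.real (closedBall 0 r) ≤ ε * (C * r ^ m) := by
              gcongr; exact h.upper 0 r hr
          _ = κ * r ^ m * (ε * C / κ) := by field_simp
      rw [ENNReal.ofReal_add (by positivity) (by positivity)]
      refine le_trans (measure_mono ?_) ((measure_union_le _ _).trans (add_le_add hex hmeas'))
      intro A hA
      by_cases hs : Summable fun k => (M k)ᶜ.indicator (fun _ => w k) A
      · exact Or.inl hs
      · exact Or.inr ⟨hA, hgood A hA hs⟩
    by_contra hne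
    have hpos : 0 < ν.real E := ENNReal.toReal_pos hne hEfin
    have hD : 0 < 2 + C / κ := by positivity
    have h1 := key (ν.real E / (2 * (2 + C / κ))) (by positivity)
    rw [← ofReal_measureReal hEfin] at h1
    have h2 := (ENNReal.ofReal_le_ofReal_iff (by positivity)).1 h1
    have h3 : 2 * (ν.real E / (2 * (2 + C / κ))) + ν.real E / (2 * (2 + C / κ)) * C / κ =
        ν.real E / 2 := by
      field_simp
    linarith
  have hnull : ν Sᶜ = 0 := by
    have : Sᶜ = ⋃ j : ℕ, Sᶜ ∩ closedBall (0 : Fin m → Fin n → K) ((j : ℝ) + 1) := by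
      ext A
      simp only [mem_iUnion, mem_inter_iff, mem_closedBall_zero_iff, exists_and_left]
      refine ⟨fun hA => ⟨hA, ?_⟩, fun hA => hA.1⟩
      obtain ⟨j, hj⟩ := exists_nat_ge ‖A‖
      exact ⟨j, hj.trans (by linarith)⟩
    rw [this]
    exact measure_iUnion_null fun j => hball _ (by positivity)
  rw [ae_iff]
  convert hnull using 2
  rw [hS]
  rfl

end AbstractUbiquity

section Growth

open Metric Set Filter Topology

theorem not_summable_of_lintegral_eq_top {X : Type*} [NormedAddCommGroup X] [MeasurableSpace X]
    [BorelSpace X] {μ : Measure X} {n : ℕ} {c C : ℝ} (h : BallGrowth μ n c C) {ψ : ℝ → ℝ}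
    (hψ : ∀ t, 0 < ψ t) (hanti : ∀ ⦃t₁ t₂ : ℝ⦄, 0 < t₁ → t₁ ≤ t₂ → ψ t₂ ≤ ψ t₁)
    (hone : ∀ ⦃t : ℝ⦄, t ≤ 1 → ψ t = 1)
    (hint : ∫⁻ y, ENNReal.ofReal (ψ (‖y‖ ^ n)) ∂μ = ⊤) {τ : ℝ} (hτ : 1 < τ) :
    ¬ Summable fun k : ℕ => (τ ^ k) ^ n * ψ ((τ ^ k) ^ n) := by
  intro hs
  have hC := h.C_pos
  let f : ℕ → X → ENNReal := fun k =>
    (closedBall 0 (τ ^ (k + 1))).indicator fun _ => ENNReal.ofReal (ψ ((τ ^ k) ^ n))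
  have hle : ∀ y, ENNReal.ofReal (ψ (‖y‖ ^ n)) ≤
      (closedBall 0 1).indicator (fun _ => 1) y + ∑' k, f k y := by
    intro y
    rcases le_or_gt ‖y‖ 1 with hy | hy
    · rw [indicator_of_mem (mem_closedBall_zero_iff.2 hy),
        hone (pow_le_one₀ (norm_nonneg y) hy), ENNReal.ofReal_one]
      exact le_self_add
    · obtain ⟨k, hk1, hk2⟩ := exists_nat_pow_near hy.le hτ
      refine le_trans ?_ le_add_self
      refine le_trans ?_ (ENNReal.le_tsum k)
      simp only [f]
      rw [indicator_of_mem (mem_closedBall_zero_iff.2 hk2.le)]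
      exact ENNReal.ofReal_le_ofReal (hanti (by positivity) (by gcongr))
  have hball : ∀ r, 0 < r → μ (closedBall 0 r) ≤ ENNReal.ofReal (C * r ^ n) := fun r hr => by
    rw [← ofReal_measureReal (h.ne_top _ _)]
    exact ENNReal.ofReal_le_ofReal (h.upper 0 r hr)
  have hfin : ∫⁻ y, ENNReal.ofReal (ψ (‖y‖ ^ n)) ∂μ < ⊤ := by
    refine lt_of_le_of_lt (lintegral_mono hle) ?_
    rw [lintegral_add_left (measurable_const.indicator measurableSet_closedBall),
      lintegral_tsum fun k => (measurable_const.indicator measurableSet_closedBall).aemeasurable,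
      lintegral_indicator_const measurableSet_closedBall, one_mul]
    refine ENNReal.add_lt_top.2 ⟨(h.ne_top _ _).lt_top, ?_⟩
    have h1 : ∀ k, ∫⁻ y, f k y ∂μ ≤
        ENNReal.ofReal (C * τ ^ n * ((τ ^ k) ^ n * ψ ((τ ^ k) ^ n))) := by
      intro k
      have := hψ ((τ ^ k) ^ n)
      simp only [f]
      rw [lintegral_indicator_const measurableSet_closedBall]
      refine (mul_le_mul_right (hball _ (by positivity)) _).trans (le_of_eq ?_)
      rw [← ENNReal.ofReal_mul this.le]
      congr 1
      rw [pow_succ, mul_pow]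
      ring
    refine lt_of_le_of_lt (ENNReal.tsum_le_tsum h1) ?_
    exact ((hs.mul_left (C * τ ^ n)).tsum_ofReal_lt_top)
  exact hfin.ne hint

theorem ballGrowth_volume_pi (m : ℕ) :
    BallGrowth (volume : Measure (Fin m → ℝ)) m (2 ^ m) (2 ^ m) := by
  have key : ∀ (x : Fin m → ℝ) (r : ℝ), 0 < r → volume.real (closedBall x r) = 2 ^ m * r ^ m := by
    intro x r hr
    rw [measureReal_def, Real.volume_pi_closedBall x hr.le, ENNReal.toReal_ofReal (by positivity),
      Fintype.card_fin, mul_pow]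
  exact ⟨by positivity, by positivity, fun x r => measure_closedBall_lt_top.ne,
    fun x r hr => (key x r hr).ge, fun x r hr => (key x r hr).le⟩

variable {p : ℕ} [hp : Fact p.Prime]

theorem exists_norm_sub_natCast_mul_zpow_le {k : ℤ} {x : ℚ_[p]} (hx : ‖x‖ ≤ (p : ℝ) ^ (k + 1)) :
    ∃ j : Fin p, ‖x - (j : ℕ) * (p : ℚ_[p]) ^ (-(k + 1))‖ ≤ (p : ℝ) ^ k := by
  have hp0 : (p : ℚ_[p]) ≠ 0 := by exact_mod_cast hp.1.ne_zero
  have hpR : (0 : ℝ) < p := by exact_mod_cast hp.1.pos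
  have hnorm : ∀ l : ℤ, ‖(p : ℚ_[p]) ^ l‖ = (p : ℝ) ^ (-l) := fun l => Padic.norm_p_zpow l
  have hz : ‖x * (p : ℚ_[p]) ^ (k + 1)‖ ≤ 1 := by
    rw [norm_mul, hnorm]
    calc ‖x‖ * (p : ℝ) ^ (-(k + 1)) ≤ (p : ℝ) ^ (k + 1) * (p : ℝ) ^ (-(k + 1)) := by gcongr
      _ = 1 := by rw [← zpow_add₀ hpR.ne']; simp
  obtain ⟨j, hj, hmem⟩ := PadicInt.exists_mem_range (⟨x * (p : ℚ_[p]) ^ (k + 1), hz⟩ : ℤ_[p])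
  refine ⟨⟨j, hj⟩, ?_⟩
  rw [PadicInt.maximalIdeal_eq_span_p, Ideal.mem_span_singleton] at hmem
  obtain ⟨y, hy⟩ := hmem
  have hy' : x * (p : ℚ_[p]) ^ (k + 1) - j = p * (y : ℚ_[p]) := by
    have := congrArg (fun t : ℤ_[p] => (t : ℚ_[p])) hy
    push_cast at this
    exact this
  have hx' : x - j * (p : ℚ_[p]) ^ (-(k + 1)) = (p : ℚ_[p]) ^ (-k) * y := by
    have h1 : x = x * (p : ℚ_[p]) ^ (k + 1) * (p : ℚ_[p]) ^ (-(k + 1)) := by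
      rw [mul_assoc, ← zpow_add₀ hp0]; simp
    calc x - j * (p : ℚ_[p]) ^ (-(k + 1))
        = (x * (p : ℚ_[p]) ^ (k + 1) - j) * (p : ℚ_[p]) ^ (-(k + 1)) := by
          rw [sub_mul, ← h1]
      _ = (p : ℚ_[p]) ^ (1 + -(k + 1)) * y := by rw [hy', zpow_add₀ hp0, zpow_one]; ring
      _ = _ := by congr 2; ring
  simp only
  rw [hx', norm_mul, hnorm, neg_neg]
  have := y.norm_le_one
  exact mul_le_of_le_one_right (by positivity) this

theorem measure_closedBall_eq_zero_center {G : Type*} [NormedAddCommGroup G] [MeasurableSpace G]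
    [BorelSpace G] (μ : Measure G) [μ.IsAddRightInvariant] (x : G) (r : ℝ) :
    μ (closedBall x r) = μ (closedBall 0 r) := by
  rw [← measure_preimage_add_right μ x (closedBall x r), preimage_add_right_closedBall, sub_self]

variable [MeasurableSpace ℚ_[p]] [BorelSpace ℚ_[p]] {n : ℕ}

theorem padic_measure_closedBall_succ (μ : Measure (Fin n → ℚ_[p])) [μ.IsAddHaarMeasure] (k : ℤ) :
    μ (closedBall 0 ((p : ℝ) ^ (k + 1))) = p ^ n * μ (closedBall 0 ((p : ℝ) ^ k)) := by
  have hpR : (0 : ℝ) < p := by exact_mod_cast hp.1.pos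
  let z : (Fin n → Fin p) → Fin n → ℚ_[p] := fun j b =>
    ((j b : ℕ) : ℚ_[p]) * (p : ℚ_[p]) ^ (-(k + 1))
  have hnorm : ‖(p : ℚ_[p]) ^ (-(k + 1))‖ = (p : ℝ) ^ (k + 1) := by
    rw [Padic.norm_p_zpow, neg_neg]
  have hcov : closedBall 0 ((p : ℝ) ^ (k + 1)) = ⋃ j, closedBall (z j) ((p : ℝ) ^ k) := by
    ext x
    simp only [mem_iUnion, mem_closedBall, dist_eq_norm, sub_zero]
    constructor
    · intro hx
      choose j hj using fun b => exists_norm_sub_natCast_mul_zpow_le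
        ((norm_le_pi_norm x b).trans hx)
      exact ⟨j, (pi_norm_le_iff_of_nonneg (by positivity)).2 hj⟩
    · rintro ⟨j, hj⟩
      refine (pi_norm_le_iff_of_nonneg (by positivity)).2 fun b => ?_
      have h1 : ‖x b - z j b‖ ≤ (p : ℝ) ^ (k + 1) := ((norm_le_pi_norm (x - z j) b).trans hj).trans
        (zpow_le_zpow_right₀ (by exact_mod_cast hp.1.one_lt.le) (by omega))
      have h2 : ‖z j b‖ ≤ (p : ℝ) ^ (k + 1) := by
        simp only [z]
        rw [norm_mul, hnorm]
        exact mul_le_of_le_one_left (by positivity)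
          (by exact_mod_cast Padic.norm_int_le_one ((j b : ℕ) : ℤ))
      calc ‖x b‖ = ‖(x b - z j b) + z j b‖ := by rw [sub_add_cancel]
        _ ≤ max ‖x b - z j b‖ ‖z j b‖ := Padic.nonarchimedean _ _
        _ ≤ _ := max_le h1 h2
  have hdisj : Pairwise (Function.onFun Disjoint fun j => closedBall (z j) ((p : ℝ) ^ k)) := by
    intro i j hij
    refine disjoint_left.2 fun x hxi hxj => hij ?_
    funext b
    have h1 : ‖x b - z i b‖ ≤ (p : ℝ) ^ k := by
      rw [mem_closedBall, dist_eq_norm] at hxi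
      exact (norm_le_pi_norm (x - z i) b).trans hxi
    have h2 : ‖x b - z j b‖ ≤ (p : ℝ) ^ k := by
      rw [mem_closedBall, dist_eq_norm] at hxj
      exact (norm_le_pi_norm (x - z j) b).trans hxj
    have h3 : ‖z i b - z j b‖ ≤ (p : ℝ) ^ k := by
      calc ‖z i b - z j b‖ = ‖(x b - z j b) + -(x b - z i b)‖ := by congr 1; ring
        _ ≤ max ‖x b - z j b‖ ‖-(x b - z i b)‖ := Padic.nonarchimedean _ _
        _ ≤ _ := max_le h2 (by rwa [norm_neg])
    have h4 : z i b - z j b =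
        (((i b : ℕ) : ℤ) - ((j b : ℕ) : ℤ) : ℤ) * (p : ℚ_[p]) ^ (-(k + 1)) := by
      simp only [z]
      push_cast
      ring
    rw [h4, norm_mul, hnorm, zpow_add₀ hpR.ne', zpow_one] at h3
    have h5 : ‖((((i b : ℕ) : ℤ) - ((j b : ℕ) : ℤ) : ℤ) : ℚ_[p])‖ < 1 := by
      by_contra hge
      have hk : (0 : ℝ) < (p : ℝ) ^ k := by positivity
      have hp1 : (1 : ℝ) < p := by exact_mod_cast hp.1.one_lt
      nlinarith [mul_le_mul_of_nonneg_right (not_lt.1 hge) (by positivity : 0 ≤ (p : ℝ) ^ k * p)]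
    rw [Padic.norm_intCast_lt_one_iff] at h5
    have hi := (i b).2
    have hj := (j b).2
    have h6 : ((i b : ℕ) : ℤ) - ((j b : ℕ) : ℤ) = 0 :=
      Int.eq_zero_of_abs_lt_dvd h5 (by rw [abs_lt]; omega)
    exact Fin.ext (by omega)
  rw [hcov, measure_iUnion hdisj fun j => measurableSet_closedBall, tsum_fintype]
  simp_rw [measure_closedBall_eq_zero_center μ (z _)]
  simp

theorem padic_measureReal_closedBall_zpow (μ : Measure (Fin n → ℚ_[p])) [μ.IsAddHaarMeasure]
    (k : ℤ) :
    μ.real (closedBall 0 ((p : ℝ) ^ k)) = ((p : ℝ) ^ k) ^ n * μ.real (closedBall 0 1) := by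
  have hpR : (0 : ℝ) < p := by exact_mod_cast hp.1.pos
  have hstep : ∀ k : ℤ, μ.real (closedBall 0 ((p : ℝ) ^ (k + 1))) =
      (p : ℝ) ^ n * μ.real (closedBall 0 ((p : ℝ) ^ k)) := fun k => by
    rw [measureReal_def, padic_measure_closedBall_succ, ENNReal.toReal_mul, measureReal_def]
    simp
  induction k using Int.induction_on with
  | zero => simp
  | succ k ih => rw [hstep, ih, zpow_add₀ hpR.ne', zpow_one, mul_pow]; ring
  | pred k ih =>
    have h1 := hstep (-k - 1)
    rw [sub_add_cancel, ih] at h1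
    have h2 : ((p : ℝ) ^ (-(k : ℤ))) ^ n = ((p : ℝ) ^ (-(k : ℤ) - 1)) ^ n * (p : ℝ) ^ n := by
      rw [← mul_pow, ← zpow_add_one₀ hpR.ne', sub_add_cancel]
    rw [h2] at h1
    have hpn : (p : ℝ) ^ n ≠ 0 := by positivity
    refine mul_left_cancel₀ hpn ?_
    rw [← h1]
    ring

theorem exists_ballGrowth_padic (μ : Measure (Fin n → ℚ_[p])) [μ.IsAddHaarMeasure] :
    ∃ c C : ℝ, BallGrowth μ n c C := by
  have hpR : (0 : ℝ) < p := by exact_mod_cast hp.1.pos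
  have hp1 : (1 : ℝ) < p := by exact_mod_cast hp.1.one_lt
  obtain ⟨M, hM⟩ : ∃ M, M = μ.real (closedBall 0 1) := ⟨_, rfl⟩
  have hM0 : 0 < M := by
    rw [hM]
    exact ENNReal.toReal_pos (measure_closedBall_pos μ 0 one_pos).ne' measure_closedBall_lt_top.ne
  have hnear : ∀ r : ℝ, 0 < r → ∃ k : ℤ, (p : ℝ) ^ k ≤ r ∧ r ≤ (p : ℝ) ^ (k + 1) := fun r hr => by
    obtain ⟨k, hk⟩ := exists_mem_Ico_zpow hr hp1
    exact ⟨k, hk.1, hk.2.le⟩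
  refine ⟨M / p ^ n, M * p ^ n, by positivity, by positivity,
    fun x r => measure_closedBall_lt_top.ne, fun x r hr => ?_, fun x r hr => ?_⟩
  · obtain ⟨k, hk1, hk2⟩ := hnear r hr
    rw [measureReal_def, measure_closedBall_eq_zero_center, ← measureReal_def]
    calc M / p ^ n * r ^ n ≤ M / p ^ n * ((p : ℝ) ^ (k + 1)) ^ n := by gcongr
      _ = ((p : ℝ) ^ k) ^ n * M := by rw [zpow_add_one₀ hpR.ne', mul_pow]; field_simp
      _ = μ.real (closedBall 0 ((p : ℝ) ^ k)) := by rw [padic_measureReal_closedBall_zpow, hM]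
      _ ≤ _ := measureReal_mono (closedBall_subset_closedBall hk1) measure_closedBall_lt_top.ne
  · obtain ⟨k, hk1, hk2⟩ := hnear r hr
    rw [measureReal_def, measure_closedBall_eq_zero_center, ← measureReal_def]
    calc μ.real (closedBall 0 r) ≤ μ.real (closedBall 0 ((p : ℝ) ^ (k + 1))) :=
          measureReal_mono (closedBall_subset_closedBall hk2) measure_closedBall_lt_top.ne
      _ = ((p : ℝ) ^ (k + 1)) ^ n * M := by rw [padic_measureReal_closedBall_zpow, hM]
      _ = M * p ^ n * ((p : ℝ) ^ k) ^ n := by rw [zpow_add_one₀ hpR.ne', mul_pow]; ring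
      _ ≤ M * p ^ n * r ^ n := by gcongr

end Growth

section Counting

open Metric Set

/-- A measure-theoretic pigeonhole principle for points in a ball. -/
theorem BallGrowth.exists_card_filter_dist_le {X β : Type*} [NormedAddCommGroup X]
    [MeasurableSpace X] [BorelSpace X] {lam : Measure X} {m : ℕ} {c C : ℝ}
    (h : BallGrowth lam m c C) {W : Finset β} (hW : W.Nonempty) {f : β → X} {R ρ : ℝ} (hρ : 0 < ρ)
    (hρR : ρ ≤ R) (hf : ∀ w ∈ W, ‖f w‖ ≤ R) :
    ∃ w₀ ∈ W, (W.card : ℝ) * (c * (ρ / 2) ^ m) ≤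
      (W.filter fun w => dist (f w) (f w₀) ≤ ρ).card * (C * (2 * R) ^ m) := by
  classical
  have hc := h.c_pos
  have hC := h.C_pos
  let Sep : Finset β → Prop := fun Y => ∀ y ∈ Y, ∀ z ∈ Y, y ≠ z → ρ < dist (f y) (f z)
  obtain ⟨Y, hY, hmax⟩ := Finset.exists_max_image (W.powerset.filter Sep) Finset.card
    ⟨∅, by simp [Sep]⟩
  obtain ⟨hYW, hsep⟩ := Finset.mem_filter.1 hY
  rw [Finset.mem_powerset] at hYW
  have hcover : ∀ w ∈ W, ∃ y ∈ Y, dist (f w) (f y) ≤ ρ := by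
    intro w hw
    by_contra! hfar
    have hwY : w ∉ Y := fun hwY => by
      have := hfar w hwY
      rw [dist_self] at this
      linarith
    have := hmax (insert w Y) (by
      rw [Finset.mem_filter, Finset.mem_powerset]
      refine ⟨Finset.insert_subset hw hYW, ?_⟩
      intro y hy z hz hyz
      rcases Finset.mem_insert.1 hy with hyw | hyY <;>
        rcases Finset.mem_insert.1 hz with hzw | hzY
      · exact absurd (hyw.trans hzw.symm) hyz
      · rw [hyw]; exact hfar z hzY
      · rw [hzw, dist_comm]; exact hfar y hyY
      · exact hsep y hyY z hzY hyz)
    rw [Finset.card_insert_of_notMem hwY] at this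
    omega
  have hYne : Y.Nonempty := by
    obtain ⟨w, hw⟩ := hW
    obtain ⟨y, hy, -⟩ := hcover w hw
    exact ⟨y, hy⟩
  obtain ⟨w₀, hw₀, hw₀max⟩ := Finset.exists_max_image Y
    (fun y => (W.filter fun w => dist (f w) (f y) ≤ ρ).card) hYne
  refine ⟨w₀, hYW hw₀, ?_⟩
  have hinj : Set.InjOn f Y := by
    intro y hy z hz hyz
    by_contra hne
    have := hsep y hy z hz hne
    rw [hyz, dist_self] at this
    linarith
  have hYcard : (Y.card : ℝ) * (c * (ρ / 2) ^ m) ≤ C * (2 * R) ^ m := by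
    have h1 := h.card_le_of_separated (Y := Y.image f) (ρ := ρ / 2) (R := R) (x := 0)
      (by positivity) (by linarith) ?_ ?_
    · rw [Finset.card_image_of_injOn hinj] at h1
      refine h1.trans ?_
      exact mul_le_mul_of_nonneg_left (pow_le_pow_left₀ (by linarith) (by linarith) m) hC.le
    · intro y hy z hz hyz
      obtain ⟨y', hy', rfl⟩ := Finset.mem_image.1 hy
      obtain ⟨z', hz', rfl⟩ := Finset.mem_image.1 hz
      have := hsep y' hy' z' hz' fun h => hyz (by rw [h])
      linarith
    · intro y hy
      obtain ⟨y', hy', rfl⟩ := Finset.mem_image.1 hy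
      rw [dist_zero_right]
      exact hf y' (hYW hy')
  have hWcard : W.card ≤ Y.card * (W.filter fun w => dist (f w) (f w₀) ≤ ρ).card := by
    have hsub : W ⊆ Y.biUnion fun y => W.filter fun w => dist (f w) (f y) ≤ ρ := by
      intro w hw
      obtain ⟨y, hy, hwy⟩ := hcover w hw
      exact Finset.mem_biUnion.2 ⟨y, hy, Finset.mem_filter.2 ⟨hw, hwy⟩⟩
    exact (Finset.card_le_card hsub).trans (Finset.card_biUnion_le_card_mul _ _ _ hw₀max)
  have hWcard' : (W.card : ℝ) ≤ Y.card * (W.filter fun w => dist (f w) (f w₀) ≤ ρ).card := by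
    exact_mod_cast hWcard
  calc (W.card : ℝ) * (c * (ρ / 2) ^ m)
      ≤ Y.card * (W.filter fun w => dist (f w) (f w₀) ≤ ρ).card * (c * (ρ / 2) ^ m) := by gcongr
    _ = (W.filter fun w => dist (f w) (f w₀) ≤ ρ).card * (Y.card * (c * (ρ / 2) ^ m)) := by ring
    _ ≤ _ := by gcongr

variable {ι : Type*} [Fintype ι]

theorem span_eq_top_of_card_lt [DecidableEq ι] {Λ : AddSubgroup (ι → ℝ)} {δ R : ℝ}
    (hδ : 0 < δ) (hR : 0 ≤ R)
    (hmin : ∀ v ∈ Λ, ‖v‖ < δ → v = 0) {W : Finset (ι → ℝ)} (hW : ∀ w ∈ W, w ∈ Λ ∧ ‖w‖ ≤ R)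
    (hcard : (2 * (R * Fintype.card ι / δ) + 2) ^ (Fintype.card ι - 1) < W.card) :
    ⊤ ≤ Submodule.span ℝ {v : ι → ℝ | v ∈ Λ ∧ ‖v‖ ≤ R} := by
  by_contra hne
  obtain ⟨f, hf0, hf⟩ := Submodule.exists_le_ker_of_lt_top _ (lt_top_iff_not_top_le.2 hne)
  have hfx : ∀ x : ι → ℝ, f x = ∑ i, x i * f (Pi.single i 1) := by
    intro x
    conv_lhs => rw [← LinearMap.sum_single_apply (fun _ => ℝ) x, map_sum]
    refine Finset.sum_congr rfl fun i _ => ?_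
    rw [← smul_eq_mul, ← map_smul, ← Pi.single_smul, smul_eq_mul, mul_one]
  have hne : Nonempty ι := by
    by_contra hemp
    rw [not_nonempty_iff] at hemp
    exact hf0 (LinearMap.ext fun x => by rw [hfx]; simp)
  obtain ⟨i₀, hi₀⟩ := Finite.exists_max fun i => |f (Pi.single i 1)|
  have ha0 : 0 < |f (Pi.single i₀ 1)| := by
    by_contra hle
    refine hf0 (LinearMap.ext fun x => ?_)
    rw [hfx, LinearMap.zero_apply]
    refine Finset.sum_eq_zero fun i _ => ?_
    have : |f (Pi.single i 1)| ≤ 0 := (hi₀ i).trans (not_lt.1 hle)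
    rw [abs_nonpos_iff.1 this, mul_zero]
  have hker : ∀ x : ι → ℝ, f x = 0 → |x i₀| ≤ ∑ i ∈ Finset.univ.erase i₀, |x i| := by
    intro x hx
    rw [hfx, ← Finset.add_sum_erase _ _ (Finset.mem_univ i₀)] at hx
    have h1 : |x i₀| * |f (Pi.single i₀ 1)| ≤
        (∑ i ∈ Finset.univ.erase i₀, |x i|) * |f (Pi.single i₀ 1)| := by
      rw [← abs_mul, eq_neg_of_add_eq_zero_left hx, abs_neg, Finset.sum_mul]
      refine (Finset.abs_sum_le_sum_abs _ _).trans (Finset.sum_le_sum fun i _ => ?_)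
      rw [abs_mul]
      exact mul_le_mul_of_nonneg_left (hi₀ i) (abs_nonneg _)
    exact le_of_mul_le_mul_right h1 ha0
  obtain ⟨d, hd⟩ : ∃ d, d = Fintype.card ι := ⟨_, rfl⟩
  have hd0 : (0 : ℝ) < d := by rw [hd]; exact_mod_cast Fintype.card_pos
  have hd1 : 1 ≤ d := by rw [hd]; exact Fintype.card_pos
  obtain ⟨M, hM⟩ : ∃ M, M = R * d / δ := ⟨_, rfl⟩
  rw [← hd, ← hM] at hcard
  have hM0 : 0 ≤ M := by rw [hM]; positivity
  let g : (ι → ℝ) → ({i // i ≠ i₀} → ℤ) := fun w i => ⌊w i * d / δ⌋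
  have hmaps : ∀ w ∈ W, g w ∈ Fintype.piFinset fun _ : {i // i ≠ i₀} => Finset.Icc ⌊-M⌋ ⌊M⌋ := by
    intro w hw
    rw [Fintype.mem_piFinset]
    intro i
    have h1 : |w i| ≤ R := (norm_le_pi_norm w i).trans (hW w hw).2
    rw [abs_le] at h1
    rw [Finset.mem_Icc]
    constructor
    · refine Int.floor_le_floor ?_
      rw [hM, ← neg_div, ← neg_mul]
      gcongr
      exact h1.1
    · refine Int.floor_le_floor ?_
      rw [hM]
      gcongr
      exact h1.2
  have hinj : Set.InjOn g W := by
    intro w hw w' hw' hg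
    have hclose : ∀ i, i ≠ i₀ → |w i - w' i| < δ / d := by
      intro i hi
      have h1 := congrFun hg ⟨i, hi⟩
      have h2 := Int.abs_sub_lt_one_of_floor_eq_floor h1
      have h3 : w i * d / δ - w' i * d / δ = (w i - w' i) * (d / δ) := by ring
      simp only at h2
      rw [h3, abs_mul, abs_of_pos (by positivity : (0 : ℝ) < d / δ)] at h2
      rw [lt_div_iff₀ hd0]
      calc |w i - w' i| * d = |w i - w' i| * (d / δ) * δ := by field_simp
        _ < 1 * δ := by gcongr
        _ = δ := one_mul δ
    have hδd : δ / d ≤ δ := div_le_self hδ.le (by exact_mod_cast hd1)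
    have hfz : f (w - w') = 0 := by
      have h1 : w ∈ LinearMap.ker f := hf (Submodule.subset_span (hW w hw))
      have h2 : w' ∈ LinearMap.ker f := hf (Submodule.subset_span (hW w' hw'))
      exact LinearMap.mem_ker.1 (Submodule.sub_mem _ h1 h2)
    have h0 : |w i₀ - w' i₀| < δ := by
      refine (hker _ hfz).trans_lt ?_
      calc ∑ i ∈ Finset.univ.erase i₀, |(w - w') i|
          ≤ ∑ i ∈ Finset.univ.erase i₀, δ / d :=
            Finset.sum_le_sum fun i hi => (hclose i (Finset.ne_of_mem_erase hi)).le
        _ = (d - 1) * (δ / d) := by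
            rw [Finset.sum_const, Finset.card_erase_of_mem (Finset.mem_univ _), Finset.card_univ,
              ← hd, nsmul_eq_mul, Nat.cast_sub hd1, Nat.cast_one]
        _ < d * (δ / d) := by
            have : 0 < δ / d := by positivity
            nlinarith
        _ = δ := by field_simp
    have hsub : w - w' = 0 := by
      refine hmin _ (Λ.sub_mem (hW w hw).1 (hW w' hw').1) ?_
      refine (pi_norm_lt_iff hδ).2 fun i => ?_
      by_cases hi : i = i₀
      · rw [hi]; exact h0
      · exact (hclose i hi).trans_le hδd
    exact sub_eq_zero.1 hsub
  have hcle := Finset.card_le_card_of_injOn g hmaps hinj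
  rw [Fintype.card_piFinset, Finset.prod_const, Finset.card_univ, Fintype.card_subtype_compl,
    Fintype.card_subtype_eq, ← hd, Int.card_Icc] at hcle
  have hI : (((⌊M⌋ + 1 - ⌊-M⌋).toNat : ℕ) : ℝ) ≤ 2 * M + 2 := by
    have h1 : (0 : ℤ) ≤ ⌊M⌋ + 1 - ⌊-M⌋ := by
      have : ⌊-M⌋ ≤ ⌊M⌋ := Int.floor_le_floor (by linarith)
      omega
    have h2 : (((⌊M⌋ + 1 - ⌊-M⌋).toNat : ℤ) : ℝ) = ((⌊M⌋ + 1 - ⌊-M⌋ : ℤ) : ℝ) := by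
      rw [Int.toNat_of_nonneg h1]
    rw [Int.cast_natCast] at h2
    rw [h2]
    push_cast
    have h3 := Int.floor_le M
    have h4 := Int.lt_floor_add_one (-M)
    linarith
  have hcle' : (W.card : ℝ) ≤ (2 * M + 2) ^ (d - 1) := by
    calc (W.card : ℝ) ≤ (((⌊M⌋ + 1 - ⌊-M⌋).toNat : ℕ) : ℝ) ^ (d - 1) := by exact_mod_cast hcle
      _ ≤ _ := by gcongr
  linarith

/-- A lattice with no short vector and many points in a ball has small covering radius. -/
theorem exists_mem_lattice_near [DecidableEq ι] {Λ : AddSubgroup (ι → ℝ)} {δ R : ℝ}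
    (hδ : 0 < δ) (hR : 0 ≤ R)
    (hmin : ∀ v ∈ Λ, ‖v‖ < δ → v = 0) {W : Finset (ι → ℝ)} (hW : ∀ w ∈ W, w ∈ Λ ∧ ‖w‖ ≤ R)
    (hcard : (2 * (R * Fintype.card ι / δ) + 2) ^ (Fintype.card ι - 1) < W.card)
    (v y : ι → ℝ) {N : ℕ} (hN : 0 < N) :
    ∃ u ∈ Λ, ‖v + N • u - y‖ ≤ N * Fintype.card ι * R := by
  have hspan := span_eq_top_of_card_lt hδ hR hmin hW hcard
  let B := Module.Basis.ofSpan hspan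
  have hB : ∀ j, B j ∈ Λ ∧ ‖B j‖ ≤ R := fun j =>
    Module.Basis.ofSpan_subset hspan ⟨j, rfl⟩
  have : Fintype ((linearIndepOn_empty ℝ (id : (ι → ℝ) → _)).extend
      (empty_subset {v : ι → ℝ | v ∈ Λ ∧ ‖v‖ ≤ R})) := FiniteDimensional.fintypeBasisIndex B
  have hNR : (0 : ℝ) < N := by exact_mod_cast hN
  refine ⟨∑ j, ⌊B.repr (y - v) j / N⌋ • B j, Λ.sum_mem fun j _ => Λ.zsmul_mem (hB j).1 _, ?_⟩
  have hrepr := B.sum_repr (y - v)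
  have heq : v + N • ∑ j, ⌊B.repr (y - v) j / N⌋ • B j - y =
      -∑ j, ((N : ℝ) * Int.fract (B.repr (y - v) j / N)) • B j := by
    have h1 : v - y = -∑ j, B.repr (y - v) j • B j := by rw [hrepr]; abel
    calc v + N • ∑ j, ⌊B.repr (y - v) j / N⌋ • B j - y
        = N • ∑ j, ⌊B.repr (y - v) j / N⌋ • B j + (v - y) := by abel
      _ = _ := by
        rw [h1, Finset.smul_sum, ← Finset.sum_neg_distrib, ← Finset.sum_neg_distrib,
          ← Finset.sum_add_distrib]
        refine Finset.sum_congr rfl fun j _ => ?_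
        rw [← Int.cast_smul_eq_zsmul ℝ, ← Nat.cast_smul_eq_nsmul ℝ, smul_smul, ← neg_smul,
          ← neg_smul, ← add_smul]
        congr 1
        rw [Int.fract]
        field_simp
        ring
  rw [heq, norm_neg]
  calc ‖∑ j, ((N : ℝ) * Int.fract (B.repr (y - v) j / N)) • B j‖
      ≤ ∑ j, ‖((N : ℝ) * Int.fract (B.repr (y - v) j / N)) • B j‖ := norm_sum_le _ _
    _ ≤ ∑ _j, (N : ℝ) * R := by
        refine Finset.sum_le_sum fun j _ => ?_
        rw [norm_smul, Real.norm_eq_abs, abs_of_nonneg (mul_nonneg hNR.le (Int.fract_nonneg _))]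
        have h1 := (Int.fract_lt_one (B.repr (y - v) j / N)).le
        have h2 := Int.fract_nonneg (B.repr (y - v) j / N)
        exact mul_le_mul (mul_le_of_le_one_right hNR.le h1) (hB j).2 (norm_nonneg _) hNR.le
    _ = N * Fintype.card ι * R := by
        rw [Finset.sum_const, Finset.card_univ, ← Module.finrank_eq_card_basis B,
          Module.finrank_fintype_fun_eq_card, nsmul_eq_mul]
        ring

end Counting

section Boxes

open Set Metric

variable {n : ℕ}

/-- The integer vectors in a closed cube with center `x` and half side `X`. -/
noncomputable def intCube (x : Fin n → ℝ) (X : ℝ) : Finset (Fin n → ℤ) :=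
  Fintype.piFinset fun j => Finset.Icc ⌈x j - X⌉ ⌊x j + X⌋

theorem mem_intCube {x : Fin n → ℝ} {X : ℝ} {z : Fin n → ℤ} :
    z ∈ intCube x X ↔ ∀ j, |(z j : ℝ) - x j| ≤ X := by
  rw [intCube, Fintype.mem_piFinset]
  refine forall_congr' fun j => ?_
  rw [Finset.mem_Icc, Int.ceil_le, Int.le_floor, abs_le]
  constructor <;> rintro ⟨h1, h2⟩ <;> constructor <;> linarith

theorem card_intCube_le (x : Fin n → ℝ) {X : ℝ} (hX : 0 ≤ X) :
    ((intCube x X).card : ℝ) ≤ (2 * X + 1) ^ n := by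
  rw [intCube, Fintype.card_piFinset, Nat.cast_prod]
  calc ∏ j : Fin n, ((Finset.Icc ⌈x j - X⌉ ⌊x j + X⌋).card : ℝ) ≤ ∏ _j : Fin n, (2 * X + 1) := by
        refine Finset.prod_le_prod (fun _ _ => Nat.cast_nonneg _) fun j _ => ?_
        rw [Int.card_Icc]
        have h3 := Int.floor_le (x j + X)
        have h4 := Int.le_ceil (x j - X)
        rcases le_total 0 (⌊x j + X⌋ + 1 - ⌈x j - X⌉) with h | h
        · have h2 : (((⌊x j + X⌋ + 1 - ⌈x j - X⌉).toNat : ℤ) : ℝ) =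
              ((⌊x j + X⌋ + 1 - ⌈x j - X⌉ : ℤ) : ℝ) := by rw [Int.toNat_of_nonneg h]
          rw [Int.cast_natCast] at h2
          rw [h2]
          push_cast
          linarith
        · rw [Int.toNat_of_nonpos h, Nat.cast_zero]
          linarith
    _ = (2 * X + 1) ^ n := by simp

/-- The integer vectors in a half-open cube with corner `x` and side `X`. -/
noncomputable def intHalfCube (x : Fin n → ℝ) (X : ℝ) : Finset (Fin n → ℤ) :=
  Fintype.piFinset fun j => Finset.Ico ⌈x j⌉ ⌈x j + X⌉

theorem mem_intHalfCube {x : Fin n → ℝ} {X : ℝ} {z : Fin n → ℤ} :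
    z ∈ intHalfCube x X ↔ ∀ j, x j ≤ z j ∧ (z j : ℝ) < x j + X := by
  rw [intHalfCube, Fintype.mem_piFinset]
  refine forall_congr' fun j => ?_
  rw [Finset.mem_Ico, Int.ceil_le, Int.lt_ceil]

theorem le_card_intHalfCube (x : Fin n → ℝ) {X : ℝ} (hX : 2 ≤ X) :
    (X / 2) ^ n ≤ ((intHalfCube x X).card : ℝ) := by
  rw [intHalfCube, Fintype.card_piFinset, Nat.cast_prod]
  calc (X / 2) ^ n = ∏ _j : Fin n, (X / 2) := by
        rw [Finset.prod_const, Finset.card_univ, Fintype.card_fin]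
    _ ≤ ∏ j : Fin n, ((Finset.Ico ⌈x j⌉ ⌈x j + X⌉).card : ℝ) := by
        refine Finset.prod_le_prod (fun _ _ => by linarith) fun j _ => ?_
        rw [Int.card_Ico]
        have h2 : ((⌈x j + X⌉ - ⌈x j⌉ : ℤ) : ℝ) ≤ (((⌈x j + X⌉ - ⌈x j⌉).toNat : ℤ) : ℝ) := by
          exact_mod_cast Int.self_le_toNat _
        rw [Int.cast_natCast] at h2
        refine le_trans ?_ h2
        push_cast
        have h3 := Int.le_ceil (x j + X)
        have h4 := Int.ceil_lt_add_one (x j)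
        linarith

end Boxes

section FirstMoment

open Set Metric

variable {m n : ℕ} {K : Type*} [NormedField K] [MeasurableSpace K]

theorem measure_exists_norm_affForm_le {α β : Type*} (ν : Measure (Fin m → Fin n → K))
    {R D ρ B : ℝ} (hD : 0 < D) (hρ : 0 < ρ)
    (hmeas : ∀ q : Fin n → K, q ≠ 0 → ∀ P ρ, 0 < ρ →
      ν (closedBall 0 R ∩ {A | ‖affForm A q P‖ ≤ ρ}) ≤ ENNReal.ofReal (D * (ρ / ‖q‖) ^ m))
    (Q : Finset α) (q : α → Fin n → K) (hq : ∀ a ∈ Q, q a ≠ 0)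
    (Pset : α → Finset β) (P : α → β → Fin m → K)
    (hP : ∀ a ∈ Q, ((Pset a).card : ℝ) ≤ (B * ‖q a‖) ^ m) :
    ν (closedBall 0 R ∩ {A | ∃ a ∈ Q, ∃ b ∈ Pset a, ‖affForm A (q a) (P a b)‖ ≤ ρ}) ≤
      ENNReal.ofReal (Q.card * (D * (B * ρ) ^ m)) := by
  have hsub : closedBall 0 R ∩ {A | ∃ a ∈ Q, ∃ b ∈ Pset a, ‖affForm A (q a) (P a b)‖ ≤ ρ} ⊆
      ⋃ a ∈ Q, ⋃ b ∈ Pset a, closedBall 0 R ∩ {A | ‖affForm A (q a) (P a b)‖ ≤ ρ} := by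
    rintro A ⟨hA, a, ha, b, hb, hle⟩
    simp only [mem_iUnion]
    exact ⟨a, ha, b, hb, hA, hle⟩
  have hone : ∀ a ∈ Q, ν (⋃ b ∈ Pset a, closedBall 0 R ∩ {A | ‖affForm A (q a) (P a b)‖ ≤ ρ}) ≤
      ENNReal.ofReal (D * (B * ρ) ^ m) := by
    intro a ha
    have hqa : 0 < ‖q a‖ := norm_pos_iff.2 (hq a ha)
    refine (measure_biUnion_finset_le _ _).trans ?_
    refine (Finset.sum_le_sum fun b _ => hmeas (q a) (hq a ha) (P a b) ρ hρ).trans ?_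
    rw [Finset.sum_const, nsmul_eq_mul, ← ENNReal.ofReal_natCast,
      ← ENNReal.ofReal_mul (Nat.cast_nonneg _)]
    refine ENNReal.ofReal_le_ofReal ?_
    calc ((Pset a).card : ℝ) * (D * (ρ / ‖q a‖) ^ m)
        ≤ (B * ‖q a‖) ^ m * (D * (ρ / ‖q a‖) ^ m) :=
          mul_le_mul_of_nonneg_right (hP a ha) (by positivity)
      _ = D * ((B * ‖q a‖) * (ρ / ‖q a‖)) ^ m := by rw [mul_pow _ (ρ / _)]; ring
      _ = D * (B * ρ) ^ m := by congr 2; field_simp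
  refine (measure_mono hsub).trans ((measure_biUnion_finset_le _ _).trans ?_)
  refine (Finset.sum_le_sum hone).trans ?_
  rw [Finset.sum_const, nsmul_eq_mul, ← ENNReal.ofReal_natCast,
    ← ENNReal.ofReal_mul (Nat.cast_nonneg _)]

end FirstMoment

section FormVector

open Set Metric

variable {m n : ℕ}

theorem norm_le_norm_affForm_add {K : Type*} [NormedField K] (A : Fin m → Fin n → K)
    (q : Fin n → K) (P : Fin m → K) : ‖P‖ ≤ ‖affForm A q P‖ + n * ‖A‖ * ‖q‖ := by
  refine (pi_norm_le_iff_of_nonneg (by positivity)).2 fun a => ?_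
  have h1 : P a = affForm A q P a - ∑ b, A a b * q b := by rw [affForm]; ring
  have h2 : ‖∑ b, A a b * q b‖ ≤ n * ‖A‖ * ‖q‖ := by
    refine (norm_sum_le _ _).trans ?_
    calc ∑ b, ‖A a b * q b‖ ≤ ∑ _b : Fin n, ‖A‖ * ‖q‖ := by
          refine Finset.sum_le_sum fun b _ => ?_
          rw [norm_mul]
          exact mul_le_mul ((norm_le_pi_norm (A a) b).trans (norm_le_pi_norm A a))
            (norm_le_pi_norm q b) (norm_nonneg _) (norm_nonneg _)
      _ = n * ‖A‖ * ‖q‖ := by simp [mul_assoc]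
  rw [h1]
  exact (norm_sub_le _ _).trans (add_le_add (norm_le_pi_norm _ a) h2)

/-- The renormalized vector of linear forms `(σ (A q + P), t q)` attached to a rational vector
`(P, q)`. -/
noncomputable def formVec (σ t : ℝ) (A : Fin m → Fin n → ℝ) :
    (Fin m → ℚ) × (Fin n → ℚ) →+ (Fin m ⊕ Fin n → ℝ) where
  toFun z := Sum.elim (σ • affForm A (ratR z.2) (ratR z.1)) (t • ratR z.2)
  map_zero' := by
    funext j
    rcases j with j | j <;> simp [affForm, ratR]
  map_add' x y := by
    funext j
    rcases j with j | j
    · simp [affForm, ratR, mul_add, Finset.sum_add_distrib]; ring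
    · simp [ratR, mul_add]

theorem norm_formVec_le_iff {σ t : ℝ} (hσ : 0 < σ) (ht : 0 < t) {A : Fin m → Fin n → ℝ}
    {z : (Fin m → ℚ) × (Fin n → ℚ)} {R : ℝ} (hR : 0 ≤ R) : ‖formVec σ t A z‖ ≤ R ↔
      σ * ‖affForm A (ratR z.2) (ratR z.1)‖ ≤ R ∧ t * ‖ratR z.2‖ ≤ R := by
  have h1 : σ * ‖affForm A (ratR z.2) (ratR z.1)‖ = ‖σ • affForm A (ratR z.2) (ratR z.1)‖ := by
    rw [norm_smul, Real.norm_of_nonneg hσ.le]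
  have h2 : t * ‖ratR z.2‖ = ‖t • ratR z.2‖ := by
    rw [norm_smul, Real.norm_of_nonneg ht.le]
  rw [h1, h2, pi_norm_le_iff_of_nonneg hR, pi_norm_le_iff_of_nonneg hR, pi_norm_le_iff_of_nonneg hR,
    Sum.forall]
  rfl

theorem norm_formVec_lt_iff {σ t : ℝ} (hσ : 0 < σ) (ht : 0 < t) {A : Fin m → Fin n → ℝ}
    {z : (Fin m → ℚ) × (Fin n → ℚ)} {R : ℝ} (hR : 0 < R) : ‖formVec σ t A z‖ < R ↔
      σ * ‖affForm A (ratR z.2) (ratR z.1)‖ < R ∧ t * ‖ratR z.2‖ < R := by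
  have h1 : σ * ‖affForm A (ratR z.2) (ratR z.1)‖ = ‖σ • affForm A (ratR z.2) (ratR z.1)‖ := by
    rw [norm_smul, Real.norm_of_nonneg hσ.le]
  have h2 : t * ‖ratR z.2‖ = ‖t • ratR z.2‖ := by
    rw [norm_smul, Real.norm_of_nonneg ht.le]
  rw [h1, h2, pi_norm_lt_iff hR, pi_norm_lt_iff hR, pi_norm_lt_iff hR, Sum.forall]
  rfl

theorem formVec_injective {σ t : ℝ} (hσ : 0 < σ) (ht : 0 < t) (A : Fin m → Fin n → ℝ) :
    Function.Injective (formVec σ t A) := by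
  rw [injective_iff_map_eq_zero]
  intro z hz
  have h0 := (norm_formVec_le_iff hσ ht (z := z) (A := A) le_rfl).1 (by rw [hz, norm_zero])
  have hq : ‖ratR z.2‖ = 0 := by nlinarith [norm_nonneg (ratR z.2), h0.2]
  have hf : ‖affForm A (ratR z.2) (ratR z.1)‖ = 0 := by
    nlinarith [norm_nonneg (affForm A (ratR z.2) (ratR z.1)), h0.1]
  have hP : ‖ratR z.1‖ = 0 := by
    have := norm_le_norm_affForm_add A (ratR z.2) (ratR z.1)
    rw [hf, hq, mul_zero, add_zero] at this
    exact le_antisymm this (norm_nonneg _)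
  have hcast : ∀ {k : ℕ} (x : Fin k → ℚ), ‖ratR x‖ = 0 → x = 0 := by
    intro k x hx
    funext j
    have := congrFun (norm_eq_zero.1 hx) j
    simpa [ratR] using this
  exact Prod.ext (hcast _ hP) (hcast _ hq)

theorem exists_formVec_near {σ t δ R : ℝ} (hσ : 0 < σ) (ht : 0 < t) (hδ : 0 < δ) (hR : 0 ≤ R)
    (A : Fin m → Fin n → ℝ) (G : AddSubgroup ((Fin m → ℚ) × (Fin n → ℚ)))
    (hmin : ∀ z ∈ G, ‖formVec σ t A z‖ < δ → z = 0) (W : Finset ((Fin m → ℚ) × (Fin n → ℚ)))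
    (hW : ∀ w ∈ W, w ∈ G ∧ ‖formVec σ t A w‖ ≤ R)
    (hcard : (2 * (R * ((m + n : ℕ) : ℝ) / δ) + 2) ^ (m + n - 1) < (W.card : ℝ))
    (z : (Fin m → ℚ) × (Fin n → ℚ)) (y : Fin m ⊕ Fin n → ℝ) {N : ℕ} (hN : 0 < N) :
    ∃ u ∈ G, ‖formVec σ t A (z + N • u) - y‖ ≤ N * ((m + n : ℕ) : ℝ) * R := by
  classical
  have hcardι : Fintype.card (Fin m ⊕ Fin n) = m + n := by simp
  have hcov := exists_mem_lattice_near (Λ := G.map (formVec σ t A)) hδ hR ?_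
    (W := W.image (formVec σ t A)) ?_ ?_ (formVec σ t A z) y hN
  · obtain ⟨u, ⟨w, hw, rfl⟩, hu⟩ := hcov
    refine ⟨w, hw, ?_⟩
    rw [map_add, map_nsmul, ← hcardι]
    exact hu
  · rintro _ ⟨w, hw, rfl⟩ hlt
    rw [hmin w hw hlt, map_zero]
  · intro x hx
    obtain ⟨w, hw, rfl⟩ := Finset.mem_image.1 hx
    exact ⟨⟨w, (hW w hw).1, rfl⟩, (hW w hw).2⟩
  · rw [hcardι, Finset.card_image_of_injective _ (formVec_injective hσ ht A)]
    exact hcard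

end FormVector

section RealPlace

open Set Metric

variable {m n : ℕ}

/-- The rational vector attached to an integral vector. -/
def intVec : (Fin m → ℤ) × (Fin n → ℤ) →+ (Fin m → ℚ) × (Fin n → ℚ) where
  toFun z := (fun a => z.1 a, fun b => z.2 b)
  map_zero' := by ext <;> simp
  map_add' x y := by ext <;> simp

theorem intVec_injective : Function.Injective (intVec (m := m) (n := n)) := by
  intro x y hxy
  have h1 := congrArg Prod.fst hxy
  have h2 := congrArg Prod.snd hxy
  refine Prod.ext (funext fun a => ?_) (funext fun b => ?_)
  · have := congrFun h1 a
    simpa [intVec] using this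
  · have := congrFun h2 b
    simpa [intVec] using this

theorem exists_card_intVec_formVec_le {R T σ : ℝ} (hR : 2 ≤ R) (hT : 1 ≤ T) (hσ : 0 < σ)
    (hσT : σ ^ m = T ^ n) (hRσ : R ≤ σ) (A : Fin m → Fin n → ℝ) :
    ∃ W : Finset ((Fin m → ℚ) × (Fin n → ℚ)),
      (∀ w ∈ W, w ∈ intVec.range ∧ ‖formVec σ T⁻¹ A w‖ ≤ R) ∧
      (R / 8) ^ (m + n) ≤ (W.card : ℝ) := by
  classical
  have hT0 : 0 < T := by linarith
  have hR0 : 0 < R := by linarith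
  obtain ⟨x, hx⟩ : ∃ x : (Fin n → ℤ) → Fin m → ℝ, x = fun q a => ∑ b, A a b * q b := ⟨_, rfl⟩
  obtain ⟨f, hf⟩ : ∃ f : (Fin n → ℤ) → Fin m → ℝ, f = fun q a => Int.fract (x q a) := ⟨_, rfl⟩
  have hRT : 2 ≤ R * T := by nlinarith
  have hF := le_card_intHalfCube (n := n) 0 hRT
  have hFne : (intHalfCube (n := n) 0 (R * T)).Nonempty := by
    rw [← Finset.card_pos]
    have : (0 : ℝ) < (R * T / 2) ^ n := by positivity
    exact_mod_cast this.trans_le hF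
  obtain ⟨q₀, hq₀, hcard⟩ := (ballGrowth_volume_pi m).exists_card_filter_dist_le hFne
    (f := f) (R := 1) (ρ := R / σ) (by positivity) ((div_le_one hσ).2 hRσ) (fun q _ => by
      refine (pi_norm_le_iff_of_nonneg zero_le_one).2 fun a => ?_
      rw [hf, Real.norm_of_nonneg (Int.fract_nonneg _)]
      exact (Int.fract_lt_one _).le)
  obtain ⟨F, hFdef⟩ : ∃ F, F = (intHalfCube (n := n) 0 (R * T)).filter
    fun w => dist (f w) (f q₀) ≤ R / σ := ⟨_, rfl⟩
  rw [← hFdef] at hcard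
  let g : (Fin n → ℤ) → (Fin m → ℤ) × (Fin n → ℤ) :=
    fun q => (fun a => ⌊x q₀ a⌋ - ⌊x q a⌋, q - q₀)
  have hg : Function.Injective g := fun q q' h => by
    have := congrArg Prod.snd h
    exact sub_left_injective this
  refine ⟨F.image fun q => intVec (g q), ?_, ?_⟩
  · intro w hw
    obtain ⟨q, hq, rfl⟩ := Finset.mem_image.1 hw
    refine ⟨⟨_, rfl⟩, ?_⟩
    rw [hFdef, Finset.mem_filter, mem_intHalfCube] at hq
    rw [mem_intHalfCube] at hq₀
    rw [norm_formVec_le_iff hσ (inv_pos.2 hT0) hR0.le]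
    constructor
    · have h1 : affForm A (ratR (intVec (g q)).2) (ratR (intVec (g q)).1) = f q - f q₀ := by
        funext a
        simp only [affForm, ratR, intVec, g, AddMonoidHom.coe_mk, ZeroHom.coe_mk, Pi.sub_apply, hf,
          Int.fract]
        rw [hx]
        push_cast
        simp only [mul_sub, Finset.sum_sub_distrib]
        ring
      rw [h1, ← dist_eq_norm]
      calc σ * dist (f q) (f q₀) ≤ σ * (R / σ) := by gcongr; exact hq.2
        _ = R := by field_simp
    · rw [inv_mul_le_iff₀ hT0]
      refine (pi_norm_le_iff_of_nonneg (by positivity)).2 fun b => ?_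
      have h1 := hq.1 b
      have h2 := hq₀ b
      simp only [Pi.zero_apply, zero_add] at h1 h2
      simp only [ratR, intVec, g, AddMonoidHom.coe_mk, ZeroHom.coe_mk, Pi.sub_apply]
      push_cast
      rw [Real.norm_eq_abs, abs_le]
      constructor <;> nlinarith [h1.1, h1.2, h2.1, h2.2]
  · change _ ≤ ((F.image (intVec ∘ g)).card : ℝ)
    rw [Finset.card_image_of_injective _ (intVec_injective.comp hg)]
    have h1 : (R * T / 2) ^ n * (2 ^ m * (R / σ / 2) ^ m) ≤ F.card * (2 ^ m * (2 * 1) ^ m) :=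
      (mul_le_mul_of_nonneg_right hF (by positivity)).trans hcard
    have h2 : (R * T / 2) ^ n * (2 ^ m * (R / σ / 2) ^ m) = R ^ (m + n) / 2 ^ n := by
      rw [div_div, div_pow R, mul_pow σ, hσT, div_pow, mul_pow, pow_add]
      field_simp
    rw [h2] at h1
    have h3 : R ^ (m + n) / 2 ^ n / 4 ^ m ≤ F.card := by
      rw [div_le_iff₀ (by positivity)]
      refine h1.trans_eq ?_
      rw [mul_one, ← mul_pow]
      norm_num
    refine le_trans ?_ h3
    rw [div_pow, div_div]
    refine div_le_div_of_nonneg_left (by positivity) (by positivity) ?_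
    rw [pow_add, mul_comm]
    exact mul_le_mul (pow_le_pow_left₀ (by norm_num) (by norm_num) m)
      (pow_le_pow_left₀ (by norm_num) (by norm_num) n) (by positivity) (by positivity)

theorem exists_intVec_near (hm : 0 < m) (hn : 0 < n) {δ : ℝ} (hδ : 0 < δ) (b₀ : Fin n)
    {N : ℕ} (hN : 0 < N) :
    ∃ H ≥ (1 : ℝ), ∃ T₀ ≥ (1 : ℝ), ∀ T ≥ T₀, ∀ σ > 0, σ ^ m = T ^ n →
      ∀ (v : (Fin m → ℤ) × (Fin n → ℤ)) (A : Fin m → Fin n → ℝ),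
      (∀ z, ‖formVec σ T⁻¹ A (intVec z)‖ < δ → z = 0) →
      ∃ u, ‖formVec σ T⁻¹ A (intVec (v + N • u)) -
        Sum.elim (0 : Fin m → ℝ) (Pi.single b₀ (2 * H))‖ ≤ H := by
  obtain ⟨d, hd⟩ : ∃ d, d = m + n := ⟨_, rfl⟩
  have hd1 : 1 ≤ d := by omega
  have hdR : (1 : ℝ) ≤ d := by exact_mod_cast hd1
  have hNR : (1 : ℝ) ≤ N := by exact_mod_cast hN
  obtain ⟨B, hB⟩ : ∃ B : ℝ, B = (2 * d / δ + 2) ^ (d - 1) := ⟨_, rfl⟩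
  have hB0 : 0 ≤ B := by rw [hB]; positivity
  obtain ⟨R, hR⟩ : ∃ R : ℝ, R = 8 ^ d * B + 2 := ⟨_, rfl⟩
  have hR2 : 2 ≤ R := by
    have : 0 ≤ 8 ^ d * B := by positivity
    linarith
  have hR0 : 0 < R := by linarith
  have hRB : 8 ^ d * B < R := by rw [hR]; linarith
  have hcount : (2 * (R * d / δ) + 2) ^ (d - 1) < (R / 8) ^ d := by
    calc (2 * (R * d / δ) + 2) ^ (d - 1) ≤ (R * (2 * d / δ + 2)) ^ (d - 1) := by
          refine pow_le_pow_left₀ (by positivity) ?_ _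
          have : R * (2 * d / δ + 2) = 2 * (R * d / δ) + 2 * R := by ring
          rw [this]
          linarith
      _ = R ^ (d - 1) * B := by rw [mul_pow, hB]
      _ < R ^ (d - 1) * (R / 8 ^ d) := by
          refine mul_lt_mul_of_pos_left ?_ (by positivity)
          rw [lt_div_iff₀ (by positivity)]
          linarith
      _ = (R / 8) ^ d := by
          rw [div_pow, mul_div_assoc', ← pow_succ, Nat.sub_add_cancel hd1]
  refine ⟨N * d * R, ?_, R ^ m, one_le_pow₀ (by linarith), ?_⟩
  · nlinarith [mul_le_mul hNR hdR zero_le_one (by linarith)]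
  intro T hT σ hσ hσT v A hmin
  have hT1 : 1 ≤ T := (one_le_pow₀ (by linarith)).trans hT
  have hRσ : R ≤ σ := by
    refine (pow_le_pow_iff_left₀ hR0.le hσ.le hm.ne').1 ?_
    rw [hσT]
    exact hT.trans (le_self_pow₀ hT1 hn.ne')
  obtain ⟨W, hW, hWc⟩ := exists_card_intVec_formVec_le hR2 hT1 hσ hσT hRσ A
  rw [← hd] at hWc
  obtain ⟨w, ⟨u, rfl⟩, hu⟩ := exists_formVec_near hσ (inv_pos.2 (by linarith : 0 < T)) hδ hR0.le A
    intVec.range (by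
      rintro _ ⟨z, rfl⟩ hz
      rw [hmin z hz, map_zero]) W hW (by rw [← hd]; exact hcount.trans_le hWc) (intVec v)
      (Sum.elim (0 : Fin m → ℝ) (Pi.single b₀ (2 * (N * d * R)))) hN
  refine ⟨u, ?_⟩
  rw [← hd] at hu
  rw [map_add, map_nsmul]
  exact hu

instance isAddHaarMeasure_volume_pi_pi :
    (volume : Measure (Fin m → Fin n → ℝ)).IsAddHaarMeasure :=
  Measure.pi.isAddHaarMeasure fun _ : Fin m => (volume : Measure (Fin n → ℝ))

/-- The real vector attached to an integral vector. -/
def intCastVec {k : ℕ} (q : Fin k → ℤ) : Fin k → ℝ := fun j => (q j : ℝ)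

theorem eq_zero_of_norm_intCastVec_lt_one {k : ℕ} {q : Fin k → ℤ} (hq : ‖intCastVec q‖ < 1) :
    q = 0 := by
  funext j
  have h1 := (norm_le_pi_norm (intCastVec q) j).trans_lt hq
  rw [intCastVec, Real.norm_eq_abs] at h1
  exact Int.abs_lt_one_iff.1 (by exact_mod_cast h1)

/-- Up to small measure, the lattice of linear forms has no short vector. -/
theorem exists_measure_intVec_short_le (hm : 0 < m) {R : ℝ} (hR : 0 < R) {ε : ℝ} (hε : 0 < ε) :
    ∃ δ > 0, δ ≤ 1 ∧ ∀ T ≥ 1, ∀ σ > 0, σ ^ m = T ^ n →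
      (volume : Measure (Fin m → Fin n → ℝ)) (closedBall 0 R ∩
        {A | ¬ ∀ z, ‖formVec σ T⁻¹ A (intVec z)‖ < δ → z = 0}) ≤ ENNReal.ofReal ε := by
  classical
  obtain ⟨D, hD, hmeas⟩ := exists_measure_norm_affForm_le
    (volume : Measure (Fin m → Fin n → ℝ)) volume (ballGrowth_volume_pi m) R
  obtain ⟨B, hB⟩ : ∃ B : ℝ, B = 2 * (n * R + 1) + 1 := ⟨_, rfl⟩
  have hB0 : 0 < B := by rw [hB]; positivity
  obtain ⟨M, hM⟩ : ∃ M : ℝ, M = 3 ^ n * (D * B ^ m) := ⟨_, rfl⟩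
  have hM0 : 0 < M := by rw [hM]; positivity
  obtain ⟨δ, hδ⟩ : ∃ δ : ℝ, δ = min 1 (ε / M) := ⟨_, rfl⟩
  have hδ0 : 0 < δ := by rw [hδ]; positivity
  have hδ1 : δ ≤ 1 := by rw [hδ]; exact min_le_left _ _
  refine ⟨δ, hδ0, hδ1, fun T hT σ hσ hσT => ?_⟩
  have hT0 : 0 < T := by linarith
  have hσ1 : 1 ≤ σ := by
    by_contra! hlt
    have h1 : σ ^ m < 1 := pow_lt_one₀ hσ.le hlt hm.ne'
    rw [hσT] at h1
    linarith [one_le_pow₀ (n := n) hT]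
  have hmain := measure_exists_norm_affForm_le volume hD (ρ := δ / σ) (B := B) (by positivity) hmeas
    ((intCube (n := n) 0 (δ * T)).filter fun q => q ≠ 0) (fun q => intCastVec q) (by
      intro q hq h0
      refine (Finset.mem_filter.1 hq).2 (eq_zero_of_norm_intCastVec_lt_one ?_)
      rw [h0, norm_zero]
      exact one_pos)
    (fun q => intCube (n := m) 0 ((n * R + 1) * ‖(intCastVec q)‖)) (fun _ P => intCastVec P) (by
      intro q hq
      have h1 : 1 ≤ ‖(intCastVec q)‖ := by
        by_contra! hlt
        exact (Finset.mem_filter.1 hq).2 (eq_zero_of_norm_intCastVec_lt_one hlt)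
      refine (card_intCube_le _ (by positivity)).trans (pow_le_pow_left₀ (by positivity) ?_ m)
      rw [hB]
      linarith)
  refine (measure_mono ?_).trans (hmain.trans (ENNReal.ofReal_le_ofReal ?_))
  · rintro A ⟨hA, hbad⟩
    refine ⟨hA, ?_⟩
    simp only [mem_ofPred_eq, not_forall] at hbad
    obtain ⟨z, hz, hz0⟩ := hbad
    rw [norm_formVec_lt_iff hσ (inv_pos.2 hT0) hδ0] at hz
    obtain ⟨hz1, hz2⟩ := hz
    have hP : ratR (intVec z).1 = intCastVec z.1 := by funext a; simp [ratR, intVec, intCastVec]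
    have hq : ratR (intVec z).2 = intCastVec z.2 := by funext a; simp [ratR, intVec, intCastVec]
    rw [hP, hq] at hz1
    rw [hq, inv_mul_lt_iff₀ hT0, mul_comm] at hz2
    rw [mul_comm, ← lt_div_iff₀ hσ] at hz1
    have hδσ : δ / σ ≤ 1 := (div_le_one hσ).2 (hδ1.trans hσ1)
    have hPle : ‖(intCastVec z.1)‖ ≤ δ / σ + n * R * ‖(intCastVec z.2)‖ := by
      refine (norm_le_norm_affForm_add A _ _).trans (add_le_add hz1.le ?_)
      rw [mem_closedBall_zero_iff] at hA
      gcongr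
    have hz20 : z.2 ≠ 0 := by
      intro h0
      have hc0 : (intCastVec z.2) = 0 := by funext j; simp [intCastVec, h0]
      rw [hc0] at hz1
      refine hz0 (Prod.ext (eq_zero_of_norm_intCastVec_lt_one ?_) h0)
      have : affForm A 0 (intCastVec z.1) = intCastVec z.1 := by funext a; simp [affForm]
      rw [this] at hz1
      exact hz1.trans_le hδσ
    have h1 : 1 ≤ ‖(intCastVec z.2)‖ := by
      by_contra! hlt
      exact hz20 (eq_zero_of_norm_intCastVec_lt_one hlt)
    refine ⟨z.2, Finset.mem_filter.2 ⟨mem_intCube.2 fun j => ?_, hz20⟩, z.1,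
      mem_intCube.2 fun j => ?_, hz1.le⟩
    · have := (norm_le_pi_norm (intCastVec z.2) j).trans hz2.le
      simpa [intCastVec] using this
    · have := (norm_le_pi_norm (intCastVec z.1) j).trans hPle
      have h2 : |(z.1 j : ℝ) - (0 : Fin m → ℝ) j| ≤ δ / σ + n * R * ‖(intCastVec z.2)‖ := by
        simpa [intCastVec] using this
      refine h2.trans ?_
      linarith
  · rcases lt_or_ge (δ * T) 1 with hlt | hge
    · have : ((intCube (n := n) 0 (δ * T)).filter fun q => q ≠ 0) = ∅ := by
        refine Finset.filter_eq_empty_iff.2 fun q hq => ?_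
        rw [not_not]
        refine eq_zero_of_norm_intCastVec_lt_one (lt_of_le_of_lt ?_ hlt)
        refine (pi_norm_le_iff_of_nonneg (by positivity)).2 fun j => ?_
        have := mem_intCube.1 hq j
        simpa [intCastVec] using this
      rw [this, Finset.card_empty, Nat.cast_zero, zero_mul]
      exact hε.le
    · have hcard : (((intCube (n := n) 0 (δ * T)).filter fun q => q ≠ 0).card : ℝ) ≤
          (3 * (δ * T)) ^ n := by
        calc (((intCube (n := n) 0 (δ * T)).filter fun q => q ≠ 0).card : ℝ)
            ≤ (intCube (n := n) 0 (δ * T)).card := by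
              exact_mod_cast Finset.card_filter_le _ _
          _ ≤ (2 * (δ * T) + 1) ^ n := card_intCube_le _ (by positivity)
          _ ≤ (3 * (δ * T)) ^ n := pow_le_pow_left₀ (by positivity) (by linarith) n
      calc (((intCube (n := n) 0 (δ * T)).filter fun q => q ≠ 0).card : ℝ) *
            (D * (B * (δ / σ)) ^ m)
          ≤ (3 * (δ * T)) ^ n * (D * (B * (δ / σ)) ^ m) := by gcongr
        _ = M * δ ^ (m + n) := by
            rw [hM, mul_pow, mul_pow, mul_pow, div_pow, hσT, pow_add]
            field_simp
        _ ≤ M * δ := by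
            gcongr
            exact pow_le_of_le_one hδ0.le hδ1 (by omega)
        _ ≤ M * (ε / M) := by
            gcongr
            rw [hδ]
            exact min_le_right _ _
        _ = ε := by field_simp

theorem ae_infinite_intVec (hm : 0 < m) (hn : 0 < n) {ψ : ℝ → ℝ} (hψ : ∀ t, 0 < ψ t)
    (hanti : ∀ ⦃t₁ t₂ : ℝ⦄, 0 < t₁ → t₁ ≤ t₂ → ψ t₂ ≤ ψ t₁) (hone : ∀ ⦃t : ℝ⦄, t ≤ 1 → ψ t = 1)
    (hint : ∫⁻ y : Fin n → ℝ, ENNReal.ofReal (ψ (‖y‖ ^ n)) = ⊤)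
    {N : ℕ} (hN : 0 < N) (v : (Fin m → ℤ) × (Fin n → ℤ)) :
    ∀ᵐ A : Fin m → Fin n → ℝ, {u : (Fin m → ℤ) × (Fin n → ℤ) |
      ‖affForm A (ratR (intVec (v + N • u)).2) (ratR (intVec (v + N • u)).1)‖ ^ m ≤
        ψ (‖ratR (intVec (v + N • u)).2‖ ^ n)}.Infinite := by
  obtain ⟨τ, hτ, hub⟩ := ae_infinite_of_ubiquity hm
    (volume : Measure (Fin m → Fin n → ℝ)) volume (ballGrowth_volume_pi m)
  refine hub τ le_rfl _ _ ⟨0, hn⟩ ψ hψ hanti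
    (not_summable_of_lintegral_eq_top (ballGrowth_volume_pi n) hψ hanti hone hint hτ) ?_
  intro R hR ε hε
  obtain ⟨δ, hδ, hδ1, hshort⟩ := exists_measure_intVec_short_le (n := n) hm hR hε
  obtain ⟨H, hH, T₀, hT₀, hnear⟩ := exists_intVec_near hm hn hδ (⟨0, hn⟩ : Fin n) hN
  have hH0 : 0 < H := by linarith
  have hmR : (m : ℝ) ≠ 0 := by exact_mod_cast hm.ne'
  obtain ⟨κ, hκ⟩ : ∃ κ : ℝ, κ = ((3 * H) ^ n) ^ (m : ℝ)⁻¹ := ⟨_, rfl⟩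
  have hκ0 : 0 < κ := by rw [hκ]; positivity
  obtain ⟨k₀, hk₀⟩ := (Filter.tendsto_atTop.1 (tendsto_pow_atTop_atTop_of_one_lt hτ)
    (3 * H * T₀)).exists_forall_of_atTop
  refine ⟨max 3 (H * κ), le_trans (by norm_num) (le_max_left _ _), k₀, fun k hk => ?_⟩
  obtain ⟨T, hT⟩ : ∃ T, T = τ ^ k / (3 * H) := ⟨_, rfl⟩
  have hTk : τ ^ k = 3 * H * T := by rw [hT]; field_simp
  have hTT₀ : T₀ ≤ T := by
    rw [hT, le_div_iff₀ (by positivity)]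
    linarith [hk₀ k hk]
  have hT0 : 0 < T := by linarith
  obtain ⟨σ, hσ⟩ : ∃ σ : ℝ, σ = (T ^ n) ^ (m : ℝ)⁻¹ := ⟨_, rfl⟩
  have hσ0 : 0 < σ := by rw [hσ]; positivity
  have hσT : σ ^ m = T ^ n := by
    rw [hσ, ← Real.rpow_mul_natCast (by positivity), inv_mul_cancel₀ hmR, Real.rpow_one]
  have hσk : ((τ ^ k) ^ n) ^ (m : ℝ)⁻¹ = κ * σ := by
    rw [hTk, mul_pow, Real.mul_rpow (by positivity) (by positivity), hκ, hσ]
  refine (measure_mono ?_).trans (hshort T (hT₀.trans hTT₀) σ hσ0 hσT)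
  rintro A ⟨hA, hbad⟩
  refine ⟨hA, fun hmin => hbad ?_⟩
  obtain ⟨u, hu⟩ := hnear T hTT₀ σ hσ0 hσT v A hmin
  refine ⟨u, ?_⟩
  obtain ⟨z, hz⟩ : ∃ z, z = intVec (v + N • u) := ⟨_, rfl⟩
  rw [← hz] at hu ⊢
  rw [pi_norm_le_iff_of_nonneg hH0.le, Sum.forall] at hu
  have hq : ∀ b,
      |ratR z.2 b - (Pi.single (⟨0, hn⟩ : Fin n) (2 * H) : Fin n → ℝ) b * T| ≤ H * T := by
    intro b
    have h1 := hu.2 b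
    have h2 : (formVec σ T⁻¹ A z - Sum.elim (0 : Fin m → ℝ)
        (Pi.single (⟨0, hn⟩ : Fin n) (2 * H)))
        (Sum.inr b) =
        (ratR z.2 b - (Pi.single (⟨0, hn⟩ : Fin n) (2 * H) : Fin n → ℝ) b * T) / T := by
      simp only [formVec, Pi.sub_apply, AddMonoidHom.coe_mk, ZeroHom.coe_mk, Sum.elim_inr,
        Pi.smul_apply, smul_eq_mul]
      field_simp
    rw [h2, Real.norm_eq_abs, abs_div, abs_of_pos hT0, div_le_iff₀ hT0] at h1
    exact h1
  refine ⟨?_, ?_, ?_⟩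
  · have h1 : ‖affForm A (ratR z.2) (ratR z.1)‖ ≤ H / σ := by
      refine (pi_norm_le_iff_of_nonneg (by positivity)).2 fun a => ?_
      have h2 := hu.1 a
      simp only [formVec, Pi.sub_apply, AddMonoidHom.coe_mk, ZeroHom.coe_mk, Sum.elim_inl,
        Pi.smul_apply, smul_eq_mul, Pi.zero_apply, sub_zero, norm_mul, Real.norm_of_nonneg hσ0.le]
        at h2
      rw [le_div_iff₀ hσ0, mul_comm]
      exact h2
    refine h1.trans ?_
    rw [hσk]
    calc H / σ = H * κ / (κ * σ) := by field_simp
      _ ≤ _ := by gcongr; exact le_max_right _ _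
  · have h1 := (abs_le.1 (hq ⟨0, hn⟩)).1
    rw [Pi.single_eq_same] at h1
    have h2 : τ ^ k / max 3 (H * κ) ≤ τ ^ k / 3 := by
      gcongr
      exact le_max_left _ _
    refine h2.trans ((le_abs_self _).trans' ?_)
    rw [hTk]
    linarith
  · refine (pi_norm_le_iff_of_nonneg (by positivity)).2 fun b => ?_
    have h1 := abs_le.1 (hq b)
    have h2 : 0 ≤ (Pi.single (⟨0, hn⟩ : Fin n) (2 * H) : Fin n → ℝ) b ∧
        (Pi.single (⟨0, hn⟩ : Fin n) (2 * H) : Fin n → ℝ) b ≤ 2 * H := by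
      rcases eq_or_ne b ⟨0, hn⟩ with rfl | hb
      · rw [Pi.single_eq_same]
        exact ⟨by linarith, le_rfl⟩
      · rw [Pi.single_eq_of_ne hb]
        exact ⟨le_rfl, by linarith⟩
    rw [hTk, Real.norm_eq_abs, abs_le]
    constructor <;> nlinarith [h1.1, h1.2, h2.1, h2.2]

end RealPlace

section SIntegers

variable {P : ℕ}

theorem IsZS.add (hP : P ≠ 0) {x y : ℚ} (hx : IsZS P x) (hy : IsZS P y) : IsZS P (x + y) := by
  obtain ⟨a, k, rfl⟩ := hx
  obtain ⟨b, l, rfl⟩ := hy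
  have : (P : ℚ) ≠ 0 := by exact_mod_cast hP
  refine ⟨a * P ^ l + b * P ^ k, k + l, ?_⟩
  push_cast
  rw [pow_add]
  field_simp

theorem IsZS.mul {x y : ℚ} (hx : IsZS P x) (hy : IsZS P y) : IsZS P (x * y) := by
  obtain ⟨a, k, rfl⟩ := hx
  obtain ⟨b, l, rfl⟩ := hy
  refine ⟨a * b, k + l, ?_⟩
  push_cast
  rw [pow_add, div_mul_div_comm]

theorem IsZS.neg {x : ℚ} (hx : IsZS P x) : IsZS P (-x) := by
  obtain ⟨a, k, rfl⟩ := hx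
  exact ⟨-a, k, by push_cast; ring⟩

theorem IsZS.sub (hP : P ≠ 0) {x y : ℚ} (hx : IsZS P x) (hy : IsZS P y) : IsZS P (x - y) := by
  rw [sub_eq_add_neg]
  exact hx.add hP hy.neg

theorem isZS_intCast (a : ℤ) : IsZS P a := ⟨a, 0, by simp⟩

theorem isZS_natCast (a : ℕ) : IsZS P a := by exact_mod_cast isZS_intCast (P := P) a

theorem IsZS.sum (hP : P ≠ 0) {ι : Type*} (s : Finset ι) {f : ι → ℚ} (hf : ∀ i ∈ s, IsZS P (f i)) :
    IsZS P (∑ i ∈ s, f i) :=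
  Finset.sum_induction f (IsZS P) (fun _ _ hx hy => hx.add hP hy)
    (by exact_mod_cast isZS_intCast (P := P) 0) hf

theorem IsZS.of_dvd {Q : ℕ} (hQ : Q ≠ 0) (hPQ : P ∣ Q) {x : ℚ} (hx : IsZS P x) : IsZS Q x := by
  obtain ⟨a, k, rfl⟩ := hx
  obtain ⟨c, rfl⟩ := hPQ
  have hP : (P : ℚ) ≠ 0 := by
    have := left_ne_zero_of_mul hQ
    exact_mod_cast this
  have hc : (c : ℚ) ≠ 0 := by
    have := right_ne_zero_of_mul hQ
    exact_mod_cast this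
  refine ⟨a * c ^ k, k, ?_⟩
  push_cast
  rw [mul_pow]
  field_simp

end SIntegers

section PadicVectors

open Set Metric

variable {p : ℕ} [hp : Fact p.Prime] {m n : ℕ}

theorem one_le_abs_mul_norm_of_isZS {x : ℚ} (hx : IsZS p x) (hx0 : x ≠ 0) :
    1 ≤ |(x : ℝ)| * ‖(x : ℚ_[p])‖ := by
  obtain ⟨a, k, rfl⟩ := hx
  have hpR : (0 : ℝ) < p := by exact_mod_cast hp.1.pos
  have ha0 : a ≠ 0 := by rintro rfl; simp at hx0
  have haQ : (a : ℚ_[p]) ≠ 0 := by exact_mod_cast ha0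
  have h1 : ‖(((a : ℚ) / (p : ℚ) ^ k : ℚ) : ℚ_[p])‖ = ‖(a : ℚ_[p])‖ * (p : ℝ) ^ k := by
    push_cast
    rw [norm_div, norm_pow, Padic.norm_p, inv_pow, div_inv_eq_mul]
  have h2 : |(((a : ℚ) / (p : ℚ) ^ k : ℚ) : ℝ)| = |(a : ℝ)| / (p : ℝ) ^ k := by
    push_cast
    rw [abs_div, abs_of_pos (by positivity : (0 : ℝ) < (p : ℝ) ^ k)]
  have h3 : 1 ≤ |(a : ℝ)| * ‖(a : ℚ_[p])‖ := by
    have hval := Padic.norm_eq_zpow_neg_valuation haQ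
    have hle := Padic.norm_int_le_one (p := p) a
    have hv : 0 ≤ (a : ℚ_[p]).valuation := by
      by_contra! hneg
      rw [hval] at hle
      have : (1 : ℝ) < (p : ℝ) ^ (-(a : ℚ_[p]).valuation) :=
        one_lt_zpow₀ (by exact_mod_cast hp.1.one_lt) (by omega)
      linarith
    obtain ⟨v, hv'⟩ := Int.eq_ofNat_of_zero_le hv
    rw [hv'] at hval
    have hdvd := (Padic.norm_int_le_pow_iff_dvd a v).1 hval.le
    have hpv : ((p ^ v : ℕ) : ℤ) ≤ |a| :=
      Int.le_of_dvd (abs_pos.2 ha0) ((dvd_abs _ _).2 (by exact_mod_cast hdvd))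
    have hpv' : (p : ℝ) ^ v ≤ |(a : ℝ)| := by exact_mod_cast hpv
    rw [hval, _root_.zpow_neg, zpow_natCast, ← div_eq_mul_inv, one_le_div (by positivity)]
    exact hpv'
  rw [h1, h2]
  calc (1 : ℝ) ≤ |(a : ℝ)| * ‖(a : ℚ_[p])‖ := h3
    _ = _ := by field_simp

theorem exists_eq_div_pow_of_norm_le {x : ℚ} (hx : IsZS p x) {k : ℕ}
    (hk : ‖(x : ℚ_[p])‖ ≤ (p : ℝ) ^ k) : ∃ a : ℤ, x = a / (p : ℚ) ^ k := by
  obtain ⟨a, j, rfl⟩ := hx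
  have hpR : (0 : ℝ) < p := by exact_mod_cast hp.1.pos
  have hpQ : (p : ℚ) ≠ 0 := by exact_mod_cast hp.1.ne_zero
  have h1 : ‖(((a : ℚ) / (p : ℚ) ^ j : ℚ) : ℚ_[p])‖ = ‖(a : ℚ_[p])‖ * (p : ℝ) ^ j := by
    push_cast
    rw [norm_div, norm_pow, Padic.norm_p, inv_pow, div_inv_eq_mul]
  rw [h1] at hk
  have h2 : ‖((a * (p : ℤ) ^ k : ℤ) : ℚ_[p])‖ ≤ (p : ℝ) ^ (-j : ℤ) := by
    push_cast
    rw [norm_mul, norm_pow, Padic.norm_p, inv_pow, _root_.zpow_neg, zpow_natCast,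
      mul_inv_le_iff₀ (by positivity), inv_mul_eq_div, le_div_iff₀ (by positivity)]
    exact hk
  obtain ⟨c, hc⟩ := (Padic.norm_int_le_pow_iff_dvd _ j).1 h2
  refine ⟨c, ?_⟩
  rw [div_eq_div_iff (by positivity) (by positivity)]
  have : ((a * (p : ℤ) ^ k : ℤ) : ℚ) = (((p ^ j : ℕ) : ℤ) * c : ℤ) := by exact_mod_cast hc
  push_cast at this
  rw [this]
  ring

theorem exists_isZS_norm_sub_le (x : ℚ_[p]) {ρ : ℝ} (hρ : 0 < ρ) :
    ∃ r : ℚ, IsZS p r ∧ ‖x - r‖ ≤ ρ := by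
  have hpR : (1 : ℝ) < p := by exact_mod_cast hp.1.one_lt
  have hpQ : (p : ℚ_[p]) ≠ 0 := by exact_mod_cast hp.1.ne_zero
  obtain ⟨k, hk⟩ := pow_unbounded_of_one_lt ‖x‖ hpR
  have hy : ‖x * (p : ℚ_[p]) ^ k‖ ≤ 1 := by
    rw [norm_mul, norm_pow, Padic.norm_p, inv_pow, mul_inv_le_iff₀ (by positivity), one_mul]
    exact hk.le
  obtain ⟨y, hyx⟩ : ∃ y : ℤ_[p], (y : ℚ_[p]) = x * (p : ℚ_[p]) ^ k := ⟨⟨_, hy⟩, rfl⟩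
  obtain ⟨a, ha⟩ := (PadicInt.denseRange_natCast (p := p)).exists_dist_lt y (ε := ρ / p ^ k)
    (by positivity)
  refine ⟨a / (p : ℚ) ^ k, ⟨a, k, by push_cast; rfl⟩, ?_⟩
  have h1 : ‖x * (p : ℚ_[p]) ^ k - a‖ < ρ / p ^ k := by
    rw [dist_eq_norm, PadicInt.norm_def] at ha
    simpa [hyx] using ha
  have h2 : x - ((a / (p : ℚ) ^ k : ℚ) : ℚ_[p]) = (x * (p : ℚ_[p]) ^ k - a) / (p : ℚ_[p]) ^ k := by
    push_cast
    field_simp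
  rw [h2, norm_div, norm_pow, Padic.norm_p, inv_pow, div_inv_eq_mul, ← le_div_iff₀ (by positivity)]
  exact h1.le

/-- The `p`-adic vector attached to a rational vector. -/
noncomputable def padVec (p : ℕ) [Fact p.Prime] {k : ℕ} (q : Fin k → ℚ) : Fin k → ℚ_[p] :=
  fun j => (q j : ℚ_[p])

theorem padVec_add {k : ℕ} (x y : Fin k → ℚ) : padVec p (x + y) = padVec p x + padVec p y := by
  funext j; simp [padVec]

theorem padVec_neg {k : ℕ} (x : Fin k → ℚ) : padVec p (-x) = -padVec p x := by
  funext j; simp [padVec]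

theorem padVec_zero {k : ℕ} : padVec p (0 : Fin k → ℚ) = 0 := by
  funext j; simp [padVec]

theorem affForm_add_add {K : Type*} [NormedField K] (A : Fin m → Fin n → K) (q q' : Fin n → K)
    (P P' : Fin m → K) : affForm A (q + q') (P + P') = affForm A q P + affForm A q' P' := by
  funext a
  simp only [affForm, Pi.add_apply, mul_add, Finset.sum_add_distrib]
  ring

theorem affForm_neg_neg {K : Type*} [NormedField K] (A : Fin m → Fin n → K) (q : Fin n → K)
    (P : Fin m → K) : affForm A (-q) (-P) = -affForm A q P := by
  funext a
  simp only [affForm, Pi.neg_apply, mul_neg, Finset.sum_neg_distrib]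
  ring

theorem affForm_zero_zero {K : Type*} [NormedField K] (A : Fin m → Fin n → K) :
    affForm A 0 0 = 0 := by
  funext a
  simp [affForm]

theorem pi_norm_add_le_max {k : ℕ} (x y : Fin k → ℚ_[p]) : ‖x + y‖ ≤ max ‖x‖ ‖y‖ := by
  refine (pi_norm_le_iff_of_nonneg (le_max_of_le_left (norm_nonneg _))).2 fun j => ?_
  exact (Padic.nonarchimedean _ _).trans
    (max_le_max (norm_le_pi_norm x j) (norm_le_pi_norm y j))

theorem norm_sum_mul_le_padic (A : Fin m → Fin n → ℚ_[p]) (q : Fin n → ℚ_[p]) (a : Fin m) :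
    ‖∑ b, A a b * q b‖ ≤ ‖A‖ * ‖q‖ := by
  refine IsUltrametricDist.norm_sum_le_of_forall_le_of_nonneg (by positivity) fun b _ => ?_
  rw [norm_mul]
  exact mul_le_mul ((norm_le_pi_norm (A a) b).trans (norm_le_pi_norm A a))
    (norm_le_pi_norm q b) (norm_nonneg _) (norm_nonneg _)

theorem norm_affForm_le_padic (A : Fin m → Fin n → ℚ_[p]) (q : Fin n → ℚ_[p])
    (P : Fin m → ℚ_[p]) : ‖affForm A q P‖ ≤ max (‖A‖ * ‖q‖) ‖P‖ := by
  refine (pi_norm_le_iff_of_nonneg (le_max_of_le_right (norm_nonneg _))).2 fun a => ?_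
  exact (Padic.nonarchimedean _ _).trans
    (max_le_max (norm_sum_mul_le_padic A q a) (norm_le_pi_norm P a))

theorem norm_le_affForm_padic (A : Fin m → Fin n → ℚ_[p]) (q : Fin n → ℚ_[p])
    (P : Fin m → ℚ_[p]) : ‖P‖ ≤ max ‖affForm A q P‖ (‖A‖ * ‖q‖) := by
  refine (pi_norm_le_iff_of_nonneg (le_max_of_le_left (norm_nonneg _))).2 fun a => ?_
  have h1 : P a = affForm A q P a + -∑ b, A a b * q b := by rw [affForm]; ring
  rw [h1]
  refine (Padic.nonarchimedean _ _).trans (max_le_max (norm_le_pi_norm _ a) ?_)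
  rw [norm_neg]
  exact norm_sum_mul_le_padic A q a

/-- The group of `ℤ[1/p]`-vectors `(P, q)` with `‖q‖_p ≤ T` and `‖A q + P‖_p ≤ ρ`. -/
noncomputable def padicLattice (A : Fin m → Fin n → ℚ_[p]) {T ρ : ℝ} (hT : 0 ≤ T) (hρ : 0 ≤ ρ) :
    AddSubgroup ((Fin m → ℚ) × (Fin n → ℚ)) where
  carrier := {z | (∀ a, IsZS p (z.1 a)) ∧ (∀ b, IsZS p (z.2 b)) ∧ ‖padVec p z.2‖ ≤ T ∧
    ‖affForm A (padVec p z.2) (padVec p z.1)‖ ≤ ρ}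
  add_mem' := by
    rintro x y ⟨hx1, hx2, hx3, hx4⟩ ⟨hy1, hy2, hy3, hy4⟩
    refine ⟨fun a => (hx1 a).add hp.1.ne_zero (hy1 a), fun b => (hx2 b).add hp.1.ne_zero (hy2 b),
      ?_, ?_⟩
    · rw [Prod.snd_add, padVec_add]
      exact (pi_norm_add_le_max _ _).trans (max_le hx3 hy3)
    · rw [Prod.snd_add, Prod.fst_add, padVec_add, padVec_add, affForm_add_add]
      exact (pi_norm_add_le_max _ _).trans (max_le hx4 hy4)
  zero_mem' := by
    refine ⟨fun a => by simpa using isZS_intCast (P := p) 0,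
      fun a => by simpa using isZS_intCast (P := p) 0, ?_, ?_⟩
    · rw [Prod.snd_zero, padVec_zero, norm_zero]
      exact hT
    · rw [Prod.snd_zero, Prod.fst_zero, padVec_zero, padVec_zero, affForm_zero_zero, norm_zero]
      exact hρ
  neg_mem' := by
    rintro x ⟨hx1, hx2, hx3, hx4⟩
    refine ⟨fun a => (hx1 a).neg, fun b => (hx2 b).neg, ?_, ?_⟩
    · rw [Prod.snd_neg, padVec_neg, norm_neg]
      exact hx3
    · rw [Prod.snd_neg, Prod.fst_neg, padVec_neg, padVec_neg, affForm_neg_neg, norm_neg]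
      exact hx4

end PadicVectors

section PadicCounting

open Set Metric

variable {p : ℕ} {m n : ℕ}

/-- The rational vector `x / p ^ k`. -/
noncomputable def divVec (p k : ℕ) {l : ℕ} (x : Fin l → ℤ) : Fin l → ℚ :=
  fun j => x j / (p : ℚ) ^ k

theorem isZS_divVec (k : ℕ) {l : ℕ} (x : Fin l → ℤ) (j : Fin l) : IsZS p (divVec p k x j) :=
  ⟨x j, k, rfl⟩

variable [hp : Fact p.Prime]

theorem divVec_injective (k l : ℕ) : Function.Injective (divVec p k (l := l)) := by
  have hpQ : (p : ℚ) ≠ 0 := by exact_mod_cast hp.1.ne_zero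
  intro x y h
  funext j
  have := congrFun h j
  simp only [divVec] at this
  rw [div_left_inj' (pow_ne_zero _ hpQ)] at this
  exact_mod_cast this

theorem norm_padVec_divVec_le (k : ℕ) {l : ℕ} (x : Fin l → ℤ) :
    ‖padVec p (divVec p k x)‖ ≤ (p : ℝ) ^ k := by
  refine (pi_norm_le_iff_of_nonneg (by positivity)).2 fun j => ?_
  rw [padVec, divVec]
  push_cast
  rw [norm_div, norm_pow, Padic.norm_p, inv_pow, div_inv_eq_mul]
  exact mul_le_of_le_one_left (by positivity) (Padic.norm_int_le_one _)

theorem exists_eq_divVec_of_norm_le {l k : ℕ} {x : Fin l → ℚ} (hx : ∀ j, IsZS p (x j))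
    (hk : ‖padVec p x‖ ≤ (p : ℝ) ^ k) : ∃ y : Fin l → ℤ, x = divVec p k y := by
  choose y hy using fun j => exists_eq_div_pow_of_norm_le (hx j)
    ((norm_le_pi_norm (padVec p x) j).trans hk)
  exact ⟨y, funext hy⟩

theorem exists_card_padicLattice_formVec_le [MeasurableSpace ℚ_[p]] [BorelSpace ℚ_[p]]
    {lam : Measure (Fin m → ℚ_[p])} {c C : ℝ} (h : BallGrowth lam m c C) {R R₀ ρ : ℝ} {k : ℕ}
    (hR : 2 ≤ R * (p : ℝ) ^ k) (hR₀ : 1 ≤ R₀) (hρ : 0 < ρ) (hρR : ρ ≤ R₀ * (p : ℝ) ^ k)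
    (hT : 0 ≤ (p : ℝ) ^ k) (E : Fin m → Fin n → ℝ) {A : Fin m → Fin n → ℚ_[p]} (hA : ‖A‖ ≤ R₀) :
    ∃ W : Finset ((Fin m → ℚ) × (Fin n → ℚ)),
      (∀ w ∈ W, w ∈ padicLattice A hT hρ.le ∧ ‖formVec 1 1 E w‖ ≤ R) ∧
      (R * (p : ℝ) ^ k / 2) ^ (m + n) * (c * (ρ / 2) ^ m) ≤
        W.card * (C * (2 * (R₀ * (p : ℝ) ^ k)) ^ m) := by
  classical
  have hpR : (0 : ℝ) < p := by exact_mod_cast hp.1.pos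
  have hc := h.c_pos
  obtain ⟨T, hTdef⟩ : ∃ T : ℝ, T = (p : ℝ) ^ k := ⟨_, rfl⟩
  have hT0 : 0 < T := by rw [hTdef]; positivity
  have hR0 : 0 < R := by
    by_contra! hle
    have : R * (p : ℝ) ^ k ≤ 0 := mul_nonpos_of_nonpos_of_nonneg hle hT
    linarith
  obtain ⟨F, hF⟩ : ∃ F : Finset (Σ _ : Fin n → ℤ, Fin m → ℤ), F =
    (intHalfCube (n := n) 0 (R * T)).sigma fun x =>
      intHalfCube (fun a => -∑ b, E a b * x b) (R * T) := ⟨_, rfl⟩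
  have hFcard : (R * T / 2) ^ (m + n) ≤ (F.card : ℝ) := by
    rw [hF, Finset.card_sigma, Nat.cast_sum, add_comm m n, pow_add]
    calc (R * T / 2) ^ n * (R * T / 2) ^ m
        ≤ ((intHalfCube (n := n) 0 (R * T)).card : ℝ) * (R * T / 2) ^ m := by
          gcongr
          exact le_card_intHalfCube _ (by rw [hTdef]; exact hR)
      _ = ∑ x ∈ intHalfCube (n := n) 0 (R * T), (R * T / 2) ^ m := by
          rw [Finset.sum_const, nsmul_eq_mul]
      _ ≤ _ := Finset.sum_le_sum fun x _ => le_card_intHalfCube _ (by rw [hTdef]; exact hR)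
  have hFne : F.Nonempty := by
    rw [← Finset.card_pos]
    have : (0 : ℝ) < (R * T / 2) ^ (m + n) := by positivity
    exact_mod_cast this.trans_le hFcard
  let g : (Σ _ : Fin n → ℤ, Fin m → ℤ) → (Fin m → ℚ) × (Fin n → ℚ) :=
    fun w => (divVec p k w.2, divVec p k w.1)
  have hg : Function.Injective g := by
    rintro ⟨x, y⟩ ⟨x', y'⟩ hxy
    have h1 := divVec_injective _ _ (congrArg Prod.fst hxy)
    have h2 := divVec_injective _ _ (congrArg Prod.snd hxy)
    simp only at h1 h2
    rw [h1, h2]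
  let f : (Σ _ : Fin n → ℤ, Fin m → ℤ) → Fin m → ℚ_[p] :=
    fun w => affForm A (padVec p (g w).2) (padVec p (g w).1)
  obtain ⟨w₀, hw₀, hcard⟩ := h.exists_card_filter_dist_le hFne (f := f) (R := R₀ * T) (ρ := ρ) hρ
    (by rw [hTdef]; exact hρR) (fun w _ => by
      refine (norm_affForm_le_padic _ _ _).trans (max_le ?_ ?_)
      · rw [hTdef]
        exact mul_le_mul hA (norm_padVec_divVec_le k _) (norm_nonneg _) (by linarith)
      · refine (norm_padVec_divVec_le k _).trans ?_
        rw [hTdef]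
        exact le_mul_of_one_le_left hT hR₀)
  obtain ⟨F', hF'⟩ : ∃ F', F' = F.filter fun w => dist (f w) (f w₀) ≤ ρ := ⟨_, rfl⟩
  rw [← hF'] at hcard
  have hbox : ∀ w ∈ F, (∀ b, 0 ≤ ratR (g w).2 b ∧ ratR (g w).2 b ≤ R) ∧
      ∀ a, 0 ≤ affForm E (ratR (g w).2) (ratR (g w).1) a ∧
        affForm E (ratR (g w).2) (ratR (g w).1) a ≤ R := by
    intro w hw
    rw [hF, Finset.mem_sigma, mem_intHalfCube, mem_intHalfCube] at hw
    constructor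
    · intro b
      have h1 := hw.1 b
      have h2 : ratR (g w).2 b = w.1 b / T := by simp [ratR, g, divVec, hTdef]
      rw [h2, div_le_iff₀ hT0]
      simp only [Pi.zero_apply, zero_add] at h1
      exact ⟨div_nonneg h1.1 hT0.le, h1.2.le⟩
    · intro a
      have h1 := hw.2 a
      have h2 : affForm E (ratR (g w).2) (ratR (g w).1) a =
          (w.2 a - -∑ b, E a b * w.1 b) / T := by
        simp only [affForm, ratR, g, divVec]
        push_cast
        rw [← hTdef, sub_neg_eq_add, add_div, add_comm, Finset.sum_div]
        congr 1
        exact Finset.sum_congr rfl fun b _ => by rw [mul_div_assoc]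
      rw [h2, div_le_iff₀ hT0]
      exact ⟨div_nonneg (by linarith [h1.1]) hT0.le, by linarith [h1.2]⟩
  refine ⟨F'.image fun w => g w - g w₀, ?_, ?_⟩
  · intro w hw
    obtain ⟨w, hwF', rfl⟩ := Finset.mem_image.1 hw
    rw [hF', Finset.mem_filter] at hwF'
    have hb := hbox w hwF'.1
    have hb₀ := hbox w₀ hw₀
    refine ⟨⟨fun a => (isZS_divVec k _ a).sub hp.1.ne_zero (isZS_divVec k _ a),
      fun b => (isZS_divVec k _ b).sub hp.1.ne_zero (isZS_divVec k _ b), ?_, ?_⟩, ?_⟩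
    · rw [Prod.snd_sub, sub_eq_add_neg, padVec_add, padVec_neg]
      refine (pi_norm_add_le_max _ _).trans (max_le (norm_padVec_divVec_le k _) ?_)
      rw [norm_neg]
      exact norm_padVec_divVec_le k _
    · rw [Prod.snd_sub, Prod.fst_sub, sub_eq_add_neg, sub_eq_add_neg, padVec_add, padVec_add,
        padVec_neg, padVec_neg, affForm_add_add, affForm_neg_neg, ← sub_eq_add_neg,
        ← dist_eq_norm]
      exact hwF'.2
    · rw [map_sub, pi_norm_le_iff_of_nonneg hR0.le, Sum.forall]
      constructor
      · intro a
        have h1 := hb.2 a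
        have h2 := hb₀.2 a
        simp only [formVec, Pi.sub_apply, AddMonoidHom.coe_mk, ZeroHom.coe_mk, Sum.elim_inl,
          one_smul, Real.norm_eq_abs]
        rw [abs_le]
        constructor <;> linarith [h1.1, h1.2, h2.1, h2.2]
      · intro b
        have h1 := hb.1 b
        have h2 := hb₀.1 b
        simp only [formVec, Pi.sub_apply, AddMonoidHom.coe_mk, ZeroHom.coe_mk, Sum.elim_inr,
          one_smul, Real.norm_eq_abs]
        rw [abs_le]
        constructor <;> linarith [h1.1, h1.2, h2.1, h2.2]
  · have hginj : Function.Injective fun w => g w - g w₀ := fun w w' hww =>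
      hg (sub_left_injective hww)
    rw [Finset.card_image_of_injective _ hginj, ← hTdef]
    exact (mul_le_mul_of_nonneg_right hFcard (by positivity)).trans hcard

end PadicCounting

section PadicShort

open Set Metric

variable {p : ℕ} [hp : Fact p.Prime] {m n : ℕ} [MeasurableSpace ℚ_[p]]

/-- Up to small measure, the lattice attached to a `p`-adic matrix has no short vector. -/
theorem measure_padicLattice_short_le (ν : Measure (Fin m → Fin n → ℚ_[p])) {r k : ℕ} {D ρ δ : ℝ}
    (hD : 0 < D)
    (hmeas : ∀ q : Fin n → ℚ_[p], q ≠ 0 → ∀ P ρ, 0 < ρ →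
      ν (closedBall 0 ((p : ℝ) ^ r) ∩ {A | ‖affForm A q P‖ ≤ ρ}) ≤
        ENNReal.ofReal (D * (ρ / ‖q‖) ^ m))
    (hρ : 0 < ρ) (hρ1 : ρ ≤ 1) (hδ : 0 < δ) (hδ1 : δ ≤ 1) (hT : 0 ≤ (p : ℝ) ^ k)
    (hδT : 1 ≤ δ * (p : ℝ) ^ k) (E : Fin m → Fin n → ℝ) :
    ν (closedBall 0 ((p : ℝ) ^ r) ∩ {A | ¬ ∀ z ∈ padicLattice A hT hρ.le,
      ‖formVec 1 1 E z‖ < δ → z = 0}) ≤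
      ENNReal.ofReal ((3 * (δ * (p : ℝ) ^ k)) ^ n * (D * (3 * δ * (p : ℝ) ^ r * ρ) ^ m)) := by
  classical
  have hpR : (1 : ℝ) < p := by exact_mod_cast hp.1.one_lt
  have hr1 : 1 ≤ (p : ℝ) ^ r := one_le_pow₀ hpR.le
  have hlev : ∀ x : Fin n → ℤ, ∃ l : ℕ, δ⁻¹ ≤ ‖padVec p (divVec p k x)‖ →
      ‖padVec p (divVec p k x)‖ = (p : ℝ) ^ l := by
    intro x
    by_cases hx : δ⁻¹ ≤ ‖padVec p (divVec p k x)‖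
    · have h1 : 1 ≤ ‖padVec p (divVec p k x)‖ := ((one_le_inv₀ hδ).2 hδ1).trans hx
      have h0 : padVec p (divVec p k x) ≠ 0 := by
        rw [← norm_pos_iff]; linarith
      obtain ⟨b, hb⟩ := exists_norm_apply_eq_norm h0
      have hb0 : padVec p (divVec p k x) b ≠ 0 := by
        rw [← norm_pos_iff, hb]; linarith
      have hval := Padic.norm_eq_zpow_neg_valuation hb0
      have hv : 0 ≤ -(padVec p (divVec p k x) b).valuation := by
        by_contra! hneg
        have := zpow_lt_one_of_neg₀ hpR hneg
        rw [← hval, hb] at this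
        linarith
      obtain ⟨l, hl⟩ := Int.eq_ofNat_of_zero_le hv
      refine ⟨l, fun _ => ?_⟩
      rw [← hb, hval, hl]
      exact zpow_natCast _ _
    · exact ⟨0, fun h => absurd h hx⟩
  choose lev hlev using hlev
  have hmain := measure_exists_norm_affForm_le ν (R := (p : ℝ) ^ r) hD (ρ := ρ)
    (B := 3 * δ * (p : ℝ) ^ r) hρ hmeas
    ((intCube (n := n) 0 (δ * (p : ℝ) ^ k)).filter fun x => δ⁻¹ ≤ ‖padVec p (divVec p k x)‖)
    (fun x => padVec p (divVec p k x)) (by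
      intro x hx h0
      have h1 := (Finset.mem_filter.1 hx).2
      rw [h0, norm_zero] at h1
      linarith [inv_pos.2 hδ])
    (fun x => intCube (n := m)
      (fun a => -(p : ℝ) ^ (lev x + r) * ∑ b, E a b * ratR (divVec p k x) b)
      (δ * (p : ℝ) ^ (lev x + r)))
    (fun x y => padVec p (divVec p (lev x + r) y)) (by
      intro x hx
      have h1 := (Finset.mem_filter.1 hx).2
      refine (card_intCube_le _ (by positivity)).trans (pow_le_pow_left₀ (by positivity) ?_ m)
      have h2 : 1 ≤ δ * ‖padVec p (divVec p k x)‖ := by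
        rwa [inv_le_iff_one_le_mul₀ hδ, mul_comm] at h1
      rw [pow_add, ← hlev x h1]
      nlinarith)
  refine (measure_mono ?_).trans (hmain.trans (ENNReal.ofReal_le_ofReal ?_))
  · rintro A ⟨hA, hbad⟩
    refine ⟨hA, ?_⟩
    simp only [mem_ofPred_eq, not_forall] at hbad
    obtain ⟨z, ⟨hz1, hz2, hz3, hz4⟩, hzs, hz0⟩ := hbad
    rw [norm_formVec_lt_iff one_pos one_pos hδ, one_mul, one_mul] at hzs
    obtain ⟨x, hx⟩ := exists_eq_divVec_of_norm_le hz2 hz3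
    have hbig : ∀ y : ℚ, IsZS p y → |(y : ℝ)| < δ → y ≠ 0 → δ⁻¹ ≤ ‖(y : ℚ_[p])‖ := by
      intro y hy hyδ hy0
      have h1 := one_le_abs_mul_norm_of_isZS hy hy0
      rw [inv_le_iff_one_le_mul₀ hδ, mul_comm]
      exact h1.trans (mul_le_mul_of_nonneg_right hyδ.le (norm_nonneg _))
    have hq0 : z.2 ≠ 0 := by
      intro h0
      have hr0 : ratR z.2 = 0 := by rw [h0]; funext b; simp [ratR]
      have hsimp : ∀ {K : Type} [NormedField K] (A : Fin m → Fin n → K) (P : Fin m → K),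
          affForm A 0 P = P := fun A P => by funext a; simp [affForm]
      rw [h0, padVec_zero, hsimp] at hz4
      rw [hr0, hsimp] at hzs
      refine hz0 (Prod.ext (funext fun a => ?_) h0)
      by_contra ha
      have h1 := one_le_abs_mul_norm_of_isZS (hz1 a) ha
      have h2 : |((z.1 a : ℚ) : ℝ)| < δ := (norm_le_pi_norm (ratR z.1) a).trans_lt hzs.1
      have h3 : ‖((z.1 a : ℚ) : ℚ_[p])‖ ≤ 1 :=
        ((norm_le_pi_norm (padVec p z.1) a).trans hz4).trans hρ1
      nlinarith [abs_nonneg ((z.1 a : ℚ) : ℝ), norm_nonneg ((z.1 a : ℚ) : ℚ_[p])]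
    have hqbig : δ⁻¹ ≤ ‖padVec p z.2‖ := by
      obtain ⟨b, hb⟩ := Function.ne_iff.1 hq0
      exact (hbig (z.2 b) (hz2 b) ((norm_le_pi_norm (ratR z.2) b).trans_lt hzs.2) hb).trans
        (norm_le_pi_norm (padVec p z.2) b)
    have hqlev := hlev x (by rw [← hx]; exact hqbig)
    have hPnorm : ‖padVec p z.1‖ ≤ (p : ℝ) ^ (lev x + r) := by
      rw [mem_closedBall_zero_iff] at hA
      refine (norm_le_affForm_padic A (padVec p z.2) _).trans (max_le ?_ ?_)
      · exact (hz4.trans hρ1).trans (one_le_pow₀ hpR.le)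
      · rw [hx, hqlev, pow_add, mul_comm]
        gcongr
    obtain ⟨y, hy⟩ := exists_eq_divVec_of_norm_le hz1 hPnorm
    refine ⟨x, Finset.mem_filter.2 ⟨mem_intCube.2 fun b => ?_, by rw [← hx]; exact hqbig⟩, y,
      mem_intCube.2 fun a => ?_, ?_⟩
    · have h1 : |ratR z.2 b| < δ := (norm_le_pi_norm (ratR z.2) b).trans_lt hzs.2
      have h2 : ratR z.2 b = x b / (p : ℝ) ^ k := by rw [hx]; simp [ratR, divVec]
      rw [h2, abs_div, abs_of_nonneg hT, div_lt_iff₀ (by positivity)] at h1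
      simpa using h1.le
    · have h1 : |affForm E (ratR z.2) (ratR z.1) a| < δ := (norm_le_pi_norm _ a).trans_lt hzs.1
      have h2 : (y a : ℝ) - -(p : ℝ) ^ (lev x + r) * ∑ b, E a b * ratR (divVec p k x) b =
          (p : ℝ) ^ (lev x + r) * affForm E (ratR z.2) (ratR z.1) a := by
        have h3 : ratR z.1 a = y a / (p : ℝ) ^ (lev x + r) := by rw [hy]; simp [ratR, divVec]
        rw [affForm, h3, ← hx]
        field_simp
        ring
      rw [h2, abs_mul, abs_of_pos (by positivity : (0 : ℝ) < (p : ℝ) ^ (lev x + r)), mul_comm]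
      gcongr
    · rw [← hx, ← hy]
      exact hz4
  · refine mul_le_mul_of_nonneg_right ?_ (by positivity)
    calc (((intCube (n := n) 0 (δ * (p : ℝ) ^ k)).filter
          fun x => δ⁻¹ ≤ ‖padVec p (divVec p k x)‖).card : ℝ)
        ≤ (intCube (n := n) 0 (δ * (p : ℝ) ^ k)).card := by
          exact_mod_cast Finset.card_filter_le _ _
      _ ≤ (2 * (δ * (p : ℝ) ^ k) + 1) ^ n := card_intCube_le _ (by positivity)
      _ ≤ _ := pow_le_pow_left₀ (by positivity) (by linarith) n

end PadicShort

section PadicPlace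

open Set Metric

variable {p : ℕ} [hp : Fact p.Prime] {m n : ℕ}

theorem exists_mem_class_norm_affForm_le {N : ℕ} (hN : 0 < N) (hNp : N.Coprime p)
    (v : (Fin m → ℤ) × (Fin n → ℤ)) (b₀ : Fin n) {k : ℕ} (hk : 1 ≤ k) {ρ : ℝ} (hρ : 0 < ρ)
    (A : Fin m → Fin n → ℚ_[p]) : ∃ z : (Fin m → ℚ) × (Fin n → ℚ),
      (∀ a, IsZS p (z.1 a)) ∧ (∀ b, IsZS p (z.2 b)) ∧
      (∀ a, IsZS p ((z.1 a - v.1 a) / N)) ∧ (∀ b, IsZS p ((z.2 b - v.2 b) / N)) ∧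
      ‖padVec p z.2 b₀‖ = (p : ℝ) ^ k ∧ ‖padVec p z.2‖ ≤ (p : ℝ) ^ k ∧
      ‖affForm A (padVec p z.2) (padVec p z.1)‖ ≤ ρ := by
  have hp0 := hp.1.ne_zero
  have hpR : (1 : ℝ) < p := by exact_mod_cast hp.1.one_lt
  have hpk : (1 : ℝ) < (p : ℝ) ^ k := one_lt_pow₀ hpR (by omega)
  have hNQ : (N : ℚ) ≠ 0 := by exact_mod_cast hN.ne'
  have hN1 := Padic.norm_natCast_eq_one_iff.2 hNp.symm
  obtain ⟨M, hM⟩ : ∃ M, M = ‖affForm A (padVec p (intVec v).2) (padVec p (intVec v).1)‖ := ⟨_, rfl⟩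
  obtain ⟨j, hj⟩ := pow_unbounded_of_one_lt (M / ρ) hpR
  obtain ⟨e, he⟩ : ∃ e, e = Nat.totient N * j := ⟨_, rfl⟩
  have hje : j ≤ e := by
    rw [he]; exact Nat.le_mul_of_pos_left _ (Nat.totient_pos.2 hN)
  have hmod : (N : ℤ) ∣ (p : ℤ) ^ e - 1 := by
    have h1 : p ^ e ≡ 1 [MOD N] := by
      have := (Nat.ModEq.pow_totient hNp.symm).pow j
      rwa [one_pow, ← pow_mul, ← he] at this
    have := (Nat.modEq_iff_dvd.1 h1.symm)
    exact_mod_cast this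
  obtain ⟨c, hc⟩ := hmod
  have hcQ : (p : ℚ) ^ e = N * c + 1 := by
    have : (p : ℤ) ^ e = N * c + 1 := by linarith
    exact_mod_cast this
  choose r hr hrA using fun a => exists_isZS_norm_sub_le (-(A a b₀ / (p : ℚ_[p]) ^ k)) hρ
  have hs : ∀ b, IsZS p ((Pi.single b₀ (1 / (p : ℚ) ^ k) : Fin n → ℚ) b) := by
    intro b
    rcases eq_or_ne b b₀ with rfl | hb
    · rw [Pi.single_eq_same]
      exact ⟨1, k, by simp⟩
    · rw [Pi.single_eq_of_ne hb]
      exact_mod_cast isZS_intCast (P := p) 0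
  have hpe : IsZS p ((p : ℚ) ^ e) := by
    rw [hcQ]; exact_mod_cast isZS_intCast (P := p) (N * c + 1)
  have hns : ∀ b, ‖((Pi.single b₀ (1 / (p : ℚ) ^ k) : Fin n → ℚ) b : ℚ_[p])‖ ≤ (p : ℝ) ^ k := by
    intro b
    rcases eq_or_ne b b₀ with rfl | hb
    · rw [Pi.single_eq_same]
      simp
    · rw [Pi.single_eq_of_ne hb]
      simp
  have hint1 : ∀ a : ℤ, ‖(((p : ℚ) ^ e * a : ℚ) : ℚ_[p])‖ ≤ 1 := by
    intro a
    have := Padic.norm_int_le_one (p := p) ((p : ℤ) ^ e * a)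
    exact_mod_cast this
  refine ⟨(fun a => (p : ℚ) ^ e * v.1 a + N * r a,
    fun b => (p : ℚ) ^ e * v.2 b + N * (Pi.single b₀ (1 / (p : ℚ) ^ k) : Fin n → ℚ) b),
    fun a => ?_, fun b => ?_, fun a => ?_, fun b => ?_, ?_, ?_, ?_⟩
  · exact (hpe.mul (isZS_intCast _)).add hp0 ((isZS_natCast _).mul (hr a))
  · exact (hpe.mul (isZS_intCast _)).add hp0 ((isZS_natCast _).mul (hs b))
  · have : ((p : ℚ) ^ e * v.1 a + N * r a - v.1 a) / N = c * v.1 a + r a := by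
      rw [hcQ]; field_simp; ring
    simp only [this]
    exact ((isZS_intCast _).mul (isZS_intCast _)).add hp0 (hr a)
  · have : ((p : ℚ) ^ e * v.2 b + N * (Pi.single b₀ (1 / (p : ℚ) ^ k) : Fin n → ℚ) b - v.2 b) / N =
        c * v.2 b + (Pi.single b₀ (1 / (p : ℚ) ^ k) : Fin n → ℚ) b := by
      rw [hcQ]; field_simp; ring
    simp only [this]
    exact ((isZS_intCast _).mul (isZS_intCast _)).add hp0 (hs b)
  · have h1 : ‖((N * (1 / (p : ℚ) ^ k) : ℚ) : ℚ_[p])‖ = (p : ℝ) ^ k := by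
      push_cast
      rw [norm_mul, hN1]
      simp
    have h2 := hint1 (v.2 b₀)
    simp only [padVec, Pi.single_eq_same]
    rw [Rat.cast_add, Padic.add_eq_max_of_ne (by rw [h1]; linarith), h1]
    exact max_eq_right (by linarith)
  · refine (pi_norm_le_iff_of_nonneg (by linarith)).2 fun b => ?_
    simp only [padVec]
    rw [Rat.cast_add]
    refine (Padic.nonarchimedean _ _).trans (max_le ((hint1 _).trans hpk.le) ?_)
    rw [Rat.cast_mul, norm_mul, Rat.cast_natCast, hN1, one_mul]
    exact hns b
  · refine (pi_norm_le_iff_of_nonneg hρ.le).2 fun a => ?_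
    have h1 : affForm A (padVec p fun b => (p : ℚ) ^ e * v.2 b +
          N * (Pi.single b₀ (1 / (p : ℚ) ^ k) : Fin n → ℚ) b)
        (padVec p fun a => (p : ℚ) ^ e * v.1 a + N * r a) a =
        (p : ℚ_[p]) ^ e * affForm A (padVec p (intVec v).2) (padVec p (intVec v).1) a +
          -(N * (-(A a b₀ / (p : ℚ_[p]) ^ k) - r a)) := by
      have h2 : ∑ b, A a b * ((Pi.single b₀ (1 / (p : ℚ) ^ k) : Fin n → ℚ) b : ℚ_[p]) =
          A a b₀ / (p : ℚ_[p]) ^ k := by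
        rw [Finset.sum_eq_single b₀]
        · rw [Pi.single_eq_same]
          push_cast
          ring
        · intro b _ hb
          rw [Pi.single_eq_of_ne hb]
          simp
        · simp
      have h3 : ∀ b, A a b * (((p : ℚ) ^ e * v.2 b +
          N * (Pi.single b₀ (1 / (p : ℚ) ^ k) : Fin n → ℚ) b : ℚ) : ℚ_[p]) =
          (p : ℚ_[p]) ^ e * (A a b * v.2 b) +
            N * (A a b * ((Pi.single b₀ (1 / (p : ℚ) ^ k) : Fin n → ℚ) b : ℚ_[p])) := by
        intro b
        push_cast
        ring
      simp only [affForm, padVec, intVec, AddMonoidHom.coe_mk, ZeroHom.coe_mk, h3,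
        Finset.sum_add_distrib, ← Finset.mul_sum, h2]
      push_cast
      ring
    rw [h1]
    refine (Padic.nonarchimedean _ _).trans (max_le ?_ ?_)
    · rw [norm_mul, norm_pow, Padic.norm_p, inv_pow, inv_mul_le_iff₀ (by positivity)]
      refine (norm_le_pi_norm _ a).trans ?_
      rw [← hM]
      rw [div_lt_iff₀ hρ] at hj
      refine hj.le.trans ?_
      gcongr
      exact hpR.le
    · rw [norm_neg, norm_mul, hN1, one_mul]
      exact hrA a

end PadicPlace

section PadicPlace

open Set Metric

variable {p : ℕ} [hp : Fact p.Prime] {m n : ℕ}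

/-- The `ℤ[1/p]`-vectors `(P, q)` congruent to `v` modulo `N` whose real linear form and
denominator are bounded by one. -/
def classVecs (p N : ℕ) (v : (Fin m → ℤ) × (Fin n → ℤ)) (E : Fin m → Fin n → ℝ) :
    Set ((Fin m → ℚ) × (Fin n → ℚ)) :=
  {z | (∀ a, IsZS p (z.1 a)) ∧ (∀ b, IsZS p (z.2 b)) ∧
    (∀ a, IsZS p ((z.1 a - v.1 a) / N)) ∧ (∀ b, IsZS p ((z.2 b - v.2 b) / N)) ∧
    ‖affForm E (ratR z.2) (ratR z.1)‖ ≤ 1 ∧ ‖ratR z.2‖ ≤ 1}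

theorem exists_mem_classVecs_of_card {N : ℕ} (hN : 0 < N) (hNp : N.Coprime p)
    (v : (Fin m → ℤ) × (Fin n → ℤ)) (b₀ : Fin n) {k : ℕ} (hk : 1 ≤ k) {ρ : ℝ} (hρ : 0 < ρ)
    (hT : 0 ≤ (p : ℝ) ^ k) (A : Fin m → Fin n → ℚ_[p]) (E : Fin m → Fin n → ℝ) {δ R : ℝ}
    (hδ : 0 < δ) (hR : 0 ≤ R) (hR1 : ((p * N : ℕ) : ℝ) * ((m + n : ℕ) : ℝ) * R ≤ 1)
    (hmin : ∀ z ∈ padicLattice A hT hρ.le, ‖formVec 1 1 E z‖ < δ → z = 0)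
    (W : Finset ((Fin m → ℚ) × (Fin n → ℚ)))
    (hW : ∀ w ∈ W, w ∈ padicLattice A hT hρ.le ∧ ‖formVec 1 1 E w‖ ≤ R)
    (hcard : (2 * (R * ((m + n : ℕ) : ℝ) / δ) + 2) ^ (m + n - 1) < (W.card : ℝ)) :
    ∃ z ∈ classVecs p N v E, ‖affForm A (padVec p z.2) (padVec p z.1)‖ ≤ ρ ∧
      ‖padVec p z.2 b₀‖ = (p : ℝ) ^ k ∧ ‖padVec p z.2‖ ≤ (p : ℝ) ^ k := by
  have hp0 := hp.1.ne_zero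
  have hpR : (1 : ℝ) < p := by exact_mod_cast hp.1.one_lt
  have hpk : (0 : ℝ) < (p : ℝ) ^ k := by positivity
  have hNQ : (N : ℚ) ≠ 0 := by exact_mod_cast hN.ne'
  obtain ⟨z, hz1, hz2, hz3, hz4, hz5, hz6, hz7⟩ :=
    exists_mem_class_norm_affForm_le hN hNp v b₀ hk hρ A
  obtain ⟨u, hu, hu0⟩ := exists_formVec_near one_pos one_pos hδ hR E _ hmin W hW hcard z 0
    (Nat.mul_pos hp.1.pos hN)
  have hzG : z ∈ padicLattice A hT hρ.le := ⟨hz1, hz2, hz6, hz7⟩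
  have hwG : z + (p * N) • u ∈ padicLattice A hT hρ.le :=
    add_mem hzG (AddSubgroup.nsmul_mem _ hu _)
  obtain ⟨hw1, hw2, hw3, hw4⟩ := hwG
  obtain ⟨hu1, hu2, hu3, hu4⟩ := hu
  rw [sub_zero] at hu0
  have hform := (norm_formVec_le_iff one_pos one_pos zero_le_one).1 (hu0.trans hR1)
  rw [one_mul, one_mul] at hform
  refine ⟨_, ⟨hw1, hw2, fun a => ?_, fun b => ?_, hform.1, hform.2⟩, hw4, ?_, hw3⟩
  · have : ((z + (p * N) • u).1 a - v.1 a) / N = (z.1 a - v.1 a) / N + p * u.1 a := by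
      simp only [Prod.fst_add, Prod.smul_fst, Pi.add_apply, Pi.smul_apply]
      rw [nsmul_eq_mul]
      push_cast
      field_simp
      ring
    rw [this]
    exact (hz3 a).add hp0 ((isZS_natCast _).mul (hu1 a))
  · have : ((z + (p * N) • u).2 b - v.2 b) / N = (z.2 b - v.2 b) / N + p * u.2 b := by
      simp only [Prod.snd_add, Prod.smul_snd, Pi.add_apply, Pi.smul_apply]
      rw [nsmul_eq_mul]
      push_cast
      field_simp
      ring
    rw [this]
    exact (hz4 b).add hp0 ((isZS_natCast _).mul (hu2 b))
  · have h1 : padVec p (z + (p * N) • u).2 b₀ = padVec p z.2 b₀ + p * (N * padVec p u.2 b₀) := by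
      simp only [padVec, Prod.snd_add, Prod.smul_snd, Pi.add_apply, Pi.smul_apply]
      rw [nsmul_eq_mul]
      push_cast
      ring
    have h2 : ‖(p : ℚ_[p]) * (N * padVec p u.2 b₀)‖ < (p : ℝ) ^ k := by
      rw [norm_mul, norm_mul, Padic.norm_p, Padic.norm_natCast_eq_one_iff.2 hNp.symm, one_mul,
        inv_mul_lt_iff₀ (by positivity)]
      have := (norm_le_pi_norm _ b₀).trans hu3
      nlinarith
    rw [h1, Padic.add_eq_max_of_ne (by rw [hz5]; exact h2.ne'), hz5]
    exact max_eq_left h2.le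

variable [MeasurableSpace ℚ_[p]] [BorelSpace ℚ_[p]]

theorem ae_infinite_classVecs (hm : 0 < m) (hn : 0 < n) (ν : Measure (Fin m → Fin n → ℚ_[p]))
    [ν.IsAddHaarMeasure] (μ : Measure (Fin n → ℚ_[p])) [μ.IsAddHaarMeasure] {ψ : ℝ → ℝ}
    (hψ : ∀ t, 0 < ψ t) (hanti : ∀ ⦃t₁ t₂ : ℝ⦄, 0 < t₁ → t₁ ≤ t₂ → ψ t₂ ≤ ψ t₁)
    (hone : ∀ ⦃t : ℝ⦄, t ≤ 1 → ψ t = 1)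
    (hint : ∫⁻ y, ENNReal.ofReal (ψ (‖y‖ ^ n)) ∂μ = ⊤) {N : ℕ} (hN : 0 < N) (hNp : N.Coprime p)
    (v : (Fin m → ℤ) × (Fin n → ℤ)) (E : Fin m → Fin n → ℝ) :
    ∀ᵐ A ∂ν, {z : classVecs p N v E | ‖affForm A (padVec p z.1.2) (padVec p z.1.1)‖ ^ m ≤
      ψ (‖padVec p z.1.2‖ ^ n)}.Infinite := by
  have hpR : (1 : ℝ) < p := by exact_mod_cast hp.1.one_lt
  obtain ⟨c₁, C₁, hgrow₁⟩ := exists_ballGrowth_padic μ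
  obtain ⟨c, C, hgrow⟩ := exists_ballGrowth_padic (Measure.addHaar : Measure (Fin m → ℚ_[p]))
  obtain ⟨τ₀, hτ₀, hub⟩ := ae_infinite_of_ubiquity hm ν Measure.addHaar hgrow
  obtain ⟨j, hj⟩ := pow_unbounded_of_one_lt τ₀ hpR
  have hτ : 1 < (p : ℝ) ^ j := hτ₀.trans hj
  have hc := hgrow.c_pos
  have hC := hgrow.C_pos
  refine hub ((p : ℝ) ^ j) hj.le _ _ (⟨0, hn⟩ : Fin n) ψ hψ hanti
    (not_summable_of_lintegral_eq_top hgrow₁ hψ hanti hone hint hτ) ?_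
  intro R₀ hR₀ ε hε
  obtain ⟨r, hr⟩ := pow_unbounded_of_one_lt R₀ hpR
  have hr1 : 1 ≤ (p : ℝ) ^ r := one_le_pow₀ hpR.le
  obtain ⟨D, hD, hmeas⟩ := exists_measure_norm_affForm_le ν Measure.addHaar hgrow ((p : ℝ) ^ r)
  have hd0 : (0 : ℝ) < ((m + n : ℕ) : ℝ) := by exact_mod_cast (by omega : 0 < m + n)
  have hpN : (2 : ℝ) ≤ ((p * N : ℕ) : ℝ) := by
    exact_mod_cast (le_mul_of_le_of_one_le hp.1.two_le hN : 2 * 1 ≤ p * N)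
  obtain ⟨R, hR⟩ : ∃ R : ℝ, R = 1 / (((p * N : ℕ) : ℝ) * ((m + n : ℕ) : ℝ)) := ⟨_, rfl⟩
  have hR0 : 0 < R := by rw [hR]; positivity
  have hR1 : ((p * N : ℕ) : ℝ) * ((m + n : ℕ) : ℝ) * R ≤ 1 := by
    rw [hR, mul_one_div_cancel (by positivity)]
  have hRd : R * ((m + n : ℕ) : ℝ) ≤ 1 / 2 := by
    nlinarith [mul_pos hR0 hd0]
  obtain ⟨κ, hκ⟩ : ∃ κ : ℝ, κ = D * 3 ^ (m + n) * ((p : ℝ) ^ r) ^ m := ⟨_, rfl⟩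
  have hκ0 : 0 < κ := by rw [hκ]; positivity
  obtain ⟨ι, hι⟩ : ∃ ι : ℝ, ι = (R / 2) ^ (m + n) * c / (C * (4 * (p : ℝ) ^ r) ^ m) := ⟨_, rfl⟩
  have hι0 : 0 < ι := by rw [hι]; positivity
  obtain ⟨δ, hδ⟩ : ∃ δ : ℝ, δ = min (1 / 2) (ι * ε / (2 * κ * 4 ^ (m + n - 1))) := ⟨_, rfl⟩
  have hδ0 : 0 < δ := by rw [hδ]; positivity
  have hδ1 : δ ≤ 1 / 2 := by rw [hδ]; exact min_le_left _ _
  have hδ2 : δ * (2 * κ * 4 ^ (m + n - 1)) ≤ ι * ε := by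
    rw [← le_div_iff₀ (by positivity), hδ]; exact min_le_right _ _
  obtain ⟨Q, hQ0, hQ⟩ : ∃ Q : ℝ, 0 < Q ∧ Q ^ m = ε / (κ * δ ^ (m + n)) :=
    ⟨(ε / (κ * δ ^ (m + n))) ^ (m : ℝ)⁻¹, by positivity,
      Real.rpow_inv_natCast_pow (by positivity) hm.ne'⟩
  obtain ⟨k₀, hk₀⟩ := (Filter.tendsto_atTop.1 (tendsto_pow_atTop_atTop_of_one_lt hτ)
    (2 + 1 / δ + 2 / R + Q ^ m)).exists_forall_of_atTop
  refine ⟨max 1 Q, le_max_left _ _, k₀, fun k hk => ?_⟩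
  have hlarge := hk₀ k hk
  have hpow : ((p : ℝ) ^ j) ^ k = (p : ℝ) ^ (j * k) := (pow_mul _ _ _).symm
  rw [hpow] at hlarge ⊢
  have hT0 : 0 < (p : ℝ) ^ (j * k) := by positivity
  have hTδ : 1 ≤ δ * (p : ℝ) ^ (j * k) := by
    have h1 : 1 / δ ≤ (p : ℝ) ^ (j * k) := by
      have : 0 < 2 / R := by positivity
      have : 0 < Q ^ m := by positivity
      linarith
    rw [div_le_iff₀ hδ0] at h1
    linarith
  have hTR : 2 ≤ R * (p : ℝ) ^ (j * k) := by
    have h1 : 2 / R ≤ (p : ℝ) ^ (j * k) := by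
      have : 0 < 1 / δ := by positivity
      have : 0 < Q ^ m := by positivity
      linarith
    rw [div_le_iff₀ hR0] at h1
    linarith
  have hTQ : 2 + Q ^ m ≤ (p : ℝ) ^ (j * k) := by
    have : 0 < 1 / δ := by positivity
    have : 0 < 2 / R := by positivity
    linarith
  have hQm : 0 < Q ^ m := by positivity
  have hjk : 1 ≤ j * k := by
    by_contra! h0
    have : j * k = 0 := by omega
    rw [this, pow_zero] at hTQ
    linarith
  obtain ⟨σ, hσ⟩ : ∃ σ : ℝ, σ = (((p : ℝ) ^ (j * k)) ^ n) ^ (m : ℝ)⁻¹ := ⟨_, rfl⟩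
  have hσ0 : 0 < σ := by rw [hσ]; positivity
  have hσT : σ ^ m = ((p : ℝ) ^ (j * k)) ^ n := by
    rw [hσ]; exact Real.rpow_inv_natCast_pow (by positivity) hm.ne'
  rw [← hσ]
  have hρ0 : 0 < Q / σ := by positivity
  have hρ1 : Q / σ ≤ 1 := by
    rw [div_le_one hσ0]
    refine (pow_le_pow_iff_left₀ hQ0.le hσ0.le hm.ne').1 ?_
    rw [hσT]
    calc Q ^ m ≤ (p : ℝ) ^ (j * k) := by linarith
      _ ≤ _ := le_self_pow₀ (by linarith) hn.ne'
  have hshort := measure_padicLattice_short_le ν hD hmeas hρ0 hρ1 hδ0 (by linarith) hT0.le hTδ E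
  have hval :
      (3 * (δ * (p : ℝ) ^ (j * k))) ^ n * (D * (3 * δ * (p : ℝ) ^ r * (Q / σ)) ^ m) = ε := by
    have h1 : (3 * (δ * (p : ℝ) ^ (j * k))) ^ n * (D * (3 * δ * (p : ℝ) ^ r * (Q / σ)) ^ m) =
        κ * δ ^ (m + n) * Q ^ m * (((p : ℝ) ^ (j * k)) ^ n / σ ^ m) := by
      rw [hκ]
      simp only [mul_pow, div_pow, pow_add]
      ring
    rw [h1, hσT, div_self (by positivity), hQ, mul_one]
    field_simp
  rw [hval] at hshort
  refine (measure_mono ?_).trans hshort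
  rintro A ⟨hA, hbad⟩
  have hAr : ‖A‖ ≤ (p : ℝ) ^ r := (mem_closedBall_zero_iff.1 hA).trans hr.le
  refine ⟨mem_closedBall_zero_iff.2 hAr, fun hmin => hbad ?_⟩
  obtain ⟨W, hW, hWcard⟩ := exists_card_padicLattice_formVec_le hgrow hTR hr1 hρ0
    (hρ1.trans (one_le_mul_of_one_le_of_one_le hr1 (by linarith))) hT0.le E hAr
  have hcard : (2 * (R * ((m + n : ℕ) : ℝ) / δ) + 2) ^ (m + n - 1) < (W.card : ℝ) := by
    have h1 : (R * (p : ℝ) ^ (j * k) / 2) ^ (m + n) * (c * (Q / σ / 2) ^ m) =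
        ι * Q ^ m * (C * (2 * ((p : ℝ) ^ r * (p : ℝ) ^ (j * k))) ^ m) := by
      have h4 : (4 : ℝ) ^ m = 2 ^ m * 2 ^ m := by rw [← mul_pow]; norm_num
      rw [hι]
      simp only [mul_pow, div_pow, hσT, h4, pow_add (_ : ℝ) m n]
      field_simp
    rw [h1] at hWcard
    have h2 : ι * Q ^ m ≤ W.card := le_of_mul_le_mul_right hWcard (by positivity)
    refine lt_of_lt_of_le ?_ h2
    have h3 : 2 * (R * ((m + n : ℕ) : ℝ) / δ) + 2 ≤ 4 / δ := by
      rw [le_div_iff₀ hδ0]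
      have : (2 * (R * ((m + n : ℕ) : ℝ) / δ) + 2) * δ = 2 * (R * ((m + n : ℕ) : ℝ)) + 2 * δ := by
        field_simp
      rw [this]
      linarith
    refine (pow_le_pow_left₀ (by positivity) h3 _).trans_lt ?_
    have h5 : δ ^ (m + n) = δ ^ (m + n - 1) * δ := by
      rw [← pow_succ]; congr 1; omega
    rw [hQ, h5, div_pow, ← mul_div_assoc, div_lt_div_iff₀ (by positivity) (by positivity)]
    have h6 : 0 < δ * (κ * 4 ^ (m + n - 1)) := by positivity
    have h7 : 0 < δ ^ (m + n - 1) := by positivity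
    calc 4 ^ (m + n - 1) * (κ * (δ ^ (m + n - 1) * δ))
        = δ * (κ * 4 ^ (m + n - 1)) * δ ^ (m + n - 1) := by ring
      _ < ι * ε * δ ^ (m + n - 1) :=
          mul_lt_mul_of_pos_right (by linarith) h7
  obtain ⟨z, hz, hz1, hz2, hz3⟩ := exists_mem_classVecs_of_card hN hNp v (⟨0, hn⟩ : Fin n) hjk hρ0
    hT0.le A E hδ0 hR0.le hR1 hmin W hW hcard
  refine ⟨⟨z, hz⟩, hz1.trans ?_, ?_, hz3⟩
  · gcongr
    exact le_max_right _ _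
  · simp only [hz2]
    exact div_le_self hT0.le (le_max_left _ _)

end PadicPlace

section Divergence

theorem antitone_of_eq_one {ψ : ℝ → ℝ} (hanti : ∀ ⦃t₁ t₂ : ℝ⦄, 0 < t₁ → t₁ ≤ t₂ → ψ t₂ ≤ ψ t₁)
    (hone : ∀ ⦃t : ℝ⦄, t ≤ 1 → ψ t = 1) : Antitone ψ := by
  intro t₁ t₂ h
  rcases le_total t₁ 1 with h1 | h1
  · rw [hone h1]
    rcases le_total t₂ 1 with h2 | h2
    · rw [hone h2]
    · exact (hanti one_pos h2).trans (hone le_rfl).le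
  · exact hanti (by linarith) h

theorem integrable_comp_norm_pow {X : Type*} [NormedAddCommGroup X] [MeasurableSpace X]
    [OpensMeasurableSpace X] {μ : Measure X} {ψ : ℝ → ℝ} (hψ : ∀ t, 0 < ψ t)
    (hanti : ∀ ⦃t₁ t₂ : ℝ⦄, 0 < t₁ → t₁ ≤ t₂ → ψ t₂ ≤ ψ t₁) (hone : ∀ ⦃t : ℝ⦄, t ≤ 1 → ψ t = 1)
    {n : ℕ} (hint : ∫⁻ y, ENNReal.ofReal (ψ (‖y‖ ^ n)) ∂μ ≠ ⊤) :
    Integrable (fun y => ψ (‖y‖ ^ n)) μ := by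
  have hmeas : Measurable fun y : X => ψ (‖y‖ ^ n) :=
    (antitone_of_eq_one hanti hone).measurable.comp (measurable_norm.pow_const n)
  refine (lintegral_ofReal_ne_top_iff_integrable hmeas.aestronglyMeasurable ?_).1 hint
  exact Filter.Eventually.of_forall fun y => (hψ _).le

theorem ApproxFamily.exists_lintegral_eq_top {m n s : ℕ} {p : Fin s → ℕ} [∀ i, Fact (p i).Prime]
    [∀ i, MeasurableSpace ℚ_[p i]] [∀ i, BorelSpace ℚ_[p i]] (ψ : ApproxFamily m n s p)
    (μ : ∀ i, Measure (Fin n → ℚ_[p i])) [∀ i, (μ i).IsAddHaarMeasure]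
    (hint : ∫⁻ y : (Fin n → ℝ) × (∀ i, Fin n → ℚ_[p i]),
        ENNReal.ofReal (ψ.psiR (‖y.1‖ ^ n) * ∏ i, ψ.psiP i (‖y.2 i‖ ^ n))
        ∂((volume : Measure (Fin n → ℝ)).prod (Measure.pi μ)) = ⊤) :
    (∫⁻ y : Fin n → ℝ, ENNReal.ofReal (ψ.psiR (‖y‖ ^ n)) = ⊤) ∨
      ∃ i, ∫⁻ y, ENNReal.ofReal (ψ.psiP i (‖y‖ ^ n)) ∂μ i = ⊤ := by
  by_contra! h
  obtain ⟨hR, hP⟩ := h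
  have h1 := integrable_comp_norm_pow ψ.posR ψ.antiR ψ.oneR hR
  have h2 := fun i => integrable_comp_norm_pow (ψ.posP i) (ψ.antiP i) (ψ.oneP i) (hP i)
  exact (h1.mul_prod (Integrable.fintype_prod_dep h2)).lintegral_lt_top.ne hint

end Divergence

section Diagonal

variable {s : ℕ} {p : Fin s → ℕ}

theorem IsZS.norm_le_one_of_ne {q l : ℕ} [hq : Fact q.Prime] [hl : Fact l.Prime] (hql : q ≠ l)
    {x : ℚ} (hx : IsZS q x) : ‖(x : ℚ_[l])‖ ≤ 1 := by
  obtain ⟨a, k, rfl⟩ := hx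
  have h1 : ‖(q : ℚ_[l])‖ = 1 :=
    Padic.norm_natCast_eq_one_iff.2 ((Nat.coprime_primes hl.1 hq.1).2 hql.symm)
  push_cast
  rw [norm_div, norm_pow, h1, one_pow, div_one]
  exact Padic.norm_int_le_one a

theorem IsZS.exists_int_sub_div {P N : ℕ} (hP : P ≠ 0) (hN : 0 < N) (hNP : N.Coprime P) {x : ℚ}
    (hx : IsZS P x) : ∃ u : ℤ, IsZS P ((x - u) / N) := by
  obtain ⟨a, k, rfl⟩ := hx
  obtain ⟨c, d, hcd⟩ := Nat.isCoprime_iff_coprime.2 (hNP.pow_right k)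
  have hPQ : (P : ℚ) ≠ 0 := by exact_mod_cast hP
  have hNQ : (N : ℚ) ≠ 0 := by exact_mod_cast hN.ne'
  refine ⟨a * d, a * c, k, ?_⟩
  have hcdQ : (c : ℚ) * N + d * P ^ k = 1 := by exact_mod_cast hcd
  field_simp
  push_cast
  linear_combination -(a : ℚ) * hcdQ

variable [hp : ∀ i, Fact (p i).Prime]

theorem exists_isZS_norm_sub_le_one (hpinj : Function.Injective p) (x : ∀ i, ℚ_[p i]) :
    ∃ r : ℚ, IsZS (∏ i, p i) r ∧ ∀ i, ‖x i - r‖ ≤ 1 := by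
  have hP : ∏ i, p i ≠ 0 := Finset.prod_ne_zero_iff.2 fun i _ => (hp i).1.ne_zero
  choose r hr hrx using fun i => exists_isZS_norm_sub_le (x i) one_pos
  refine ⟨∑ i, r i, IsZS.sum hP _ fun i _ =>
    (hr i).of_dvd hP (Finset.dvd_prod_of_mem p (Finset.mem_univ i)), fun i => ?_⟩
  have h1 : x i - ((∑ j, r j : ℚ) : ℚ_[p i]) =
      (x i - r i) + -∑ j ∈ Finset.univ.erase i, (r j : ℚ_[p i]) := by
    rw [Rat.cast_sum, ← Finset.add_sum_erase _ _ (Finset.mem_univ i)]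
    ring
  rw [h1]
  refine (Padic.nonarchimedean _ _).trans (max_le (hrx i) ?_)
  rw [norm_neg]
  refine IsUltrametricDist.norm_sum_le_of_forall_le_of_nonneg zero_le_one fun j hj => ?_
  exact (hr j).norm_le_one_of_ne (hpinj.ne (Finset.ne_of_mem_erase hj))

end Diagonal

section Solutions

variable {m n s : ℕ} {p : Fin s → ℕ} [hp : ∀ i, Fact (p i).Prime]

/-- The solutions of the system of inequalities at `A` in the class of `v` modulo `N`. -/
def solSet (ψ : ApproxFamily m n s p) (N : ℕ) (v : (Fin m → ℚ) × (Fin n → ℚ))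
    (A : (Fin m → Fin n → ℝ) × ∀ i, Fin m → Fin n → ℚ_[p i]) : Set ((Fin m → ℚ) × (Fin n → ℚ)) :=
  {z | (∀ a, IsZS (∏ i, p i) (z.1 a)) ∧ (∀ b, IsZS (∏ i, p i) (z.2 b)) ∧
    (∀ a, IsZS (∏ i, p i) ((z.1 a - v.1 a) / N)) ∧ (∀ b, IsZS (∏ i, p i) ((z.2 b - v.2 b) / N)) ∧
    ‖affForm A.1 (ratR z.2) (ratR z.1)‖ ^ m ≤ ψ.psiR (‖ratR z.2‖ ^ n) ∧
    ∀ i, ‖affForm (A.2 i) (ratP p i z.2) (ratP p i z.1)‖ ^ m ≤ ψ.psiP i (‖ratP p i z.2‖ ^ n)}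

/-- The diagonal embedding of a rational matrix. -/
noncomputable def diagMat (p : Fin s → ℕ) [∀ i, Fact (p i).Prime] (B : Fin m → Fin n → ℚ) :
    (Fin m → Fin n → ℝ) × ∀ i, Fin m → Fin n → ℚ_[p i] :=
  (fun a => ratR (B a), fun i a => ratP p i (B a))

theorem ApproxFamily.le_psiP_of_norm_le_one (ψ : ApproxFamily m n s p) {i : Fin s}
    {A : Fin m → Fin n → ℚ_[p i]} {q : Fin n → ℚ_[p i]} {P : Fin m → ℚ_[p i]} (hA : ‖A‖ ≤ 1)
    (hq : ‖q‖ ≤ 1) (hP : ‖P‖ ≤ 1) : ‖affForm A q P‖ ^ m ≤ ψ.psiP i (‖q‖ ^ n) := by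
  rw [ψ.oneP i (pow_le_one₀ (norm_nonneg _) hq)]
  exact pow_le_one₀ (norm_nonneg _) ((norm_affForm_le_padic A q P).trans
    (max_le (mul_le_one₀ hA (norm_nonneg _) hq) hP))

theorem infinite_solSet_of_sub (ψ : ApproxFamily m n s p) {N : ℕ} (hN : 0 < N)
    {v u : (Fin m → ℚ) × (Fin n → ℚ)} {B : Fin m → Fin n → ℚ}
    (hB : ∀ a b, IsZS (∏ i, p i) (B a b))
    (hu₁ : ∀ a, IsZS (∏ i, p i) ((v.1 a + ∑ b, B a b * v.2 b - u.1 a) / N))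
    (hu₂ : ∀ b, IsZS (∏ i, p i) ((v.2 b - u.2 b) / N))
    {A : (Fin m → Fin n → ℝ) × ∀ i, Fin m → Fin n → ℚ_[p i]}
    (h : (solSet ψ N u (A - diagMat p B)).Infinite) : (solSet ψ N v A).Infinite := by
  have hP : ∏ i, p i ≠ 0 := Finset.prod_ne_zero_iff.2 fun i _ => (hp i).1.ne_zero
  have hNQ : (N : ℚ) ≠ 0 := by exact_mod_cast hN.ne'
  let f : (Fin m → ℚ) × (Fin n → ℚ) → (Fin m → ℚ) × (Fin n → ℚ) :=
    fun z => (fun a => z.1 a - ∑ b, B a b * z.2 b, z.2)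
  have hf : Function.Injective f := by
    intro x y hxy
    have h2 : x.2 = y.2 := (Prod.ext_iff.1 hxy).2
    refine Prod.ext (funext fun a => ?_) h2
    have h1 := congrFun (Prod.ext_iff.1 hxy).1 a
    simpa [f, h2] using h1
  refine Set.infinite_of_injOn_mapsTo (f := f) hf.injOn ?_ h
  rintro z ⟨hz1, hz2, hz3, hz4, hz5, hz6⟩
  have hcong : ∀ b, IsZS (∏ i, p i) ((z.2 b - v.2 b) / N) := fun b => by
    have : (z.2 b - v.2 b) / N = (z.2 b - u.2 b) / N - (v.2 b - u.2 b) / N := by ring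
    rw [this]
    exact (hz4 b).sub hP (hu₂ b)
  refine ⟨fun a => ?_, hz2, fun a => ?_, hcong, ?_, fun i => ?_⟩
  · exact (hz1 a).sub hP (IsZS.sum hP _ fun b _ => (hB a b).mul (hz2 b))
  · have : (z.1 a - ∑ b, B a b * z.2 b - v.1 a) / N =
        (z.1 a - u.1 a) / N - (v.1 a + ∑ b, B a b * v.2 b - u.1 a) / N -
          ∑ b, B a b * ((z.2 b - v.2 b) / N) := by
      have h1 : ∑ b, B a b * ((z.2 b - v.2 b) / N) =
          (∑ b, B a b * z.2 b - ∑ b, B a b * v.2 b) / N := by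
        rw [← Finset.sum_sub_distrib, Finset.sum_div]
        exact Finset.sum_congr rfl fun b _ => by ring
      rw [h1]
      ring
    simp only [f, this]
    exact ((hz3 a).sub hP (hu₁ a)).sub hP
      (IsZS.sum hP _ fun b _ => (hB a b).mul (hcong b))
  · have : affForm A.1 (ratR (f z).2) (ratR (f z).1) =
        affForm (A - diagMat p B).1 (ratR z.2) (ratR z.1) := by
      funext a
      simp only [f, affForm, ratR, diagMat, Prod.fst_sub, Pi.sub_apply, sub_mul,
        Finset.sum_sub_distrib]
      push_cast
      ring
    rw [this]
    exact hz5
  · have : affForm (A.2 i) (ratP p i (f z).2) (ratP p i (f z).1) =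
        affForm ((A - diagMat p B).2 i) (ratP p i z.2) (ratP p i z.1) := by
      funext a
      simp only [f, affForm, ratP, diagMat, Prod.snd_sub, Pi.sub_apply, sub_mul,
        Finset.sum_sub_distrib]
      push_cast
      ring
    rw [this]
    exact hz6 i

variable [∀ i, MeasurableSpace ℚ_[p i]]

theorem ae_infinite_solSet_of_real (hm : 0 < m) (hn : 0 < n) (ψ : ApproxFamily m n s p)
    {N : ℕ} (hN : 0 < N) (ν : ∀ i, Measure (Fin m → Fin n → ℚ_[p i]))
    [∀ i, (ν i).IsAddHaarMeasure]
    (hint : ∫⁻ y : Fin n → ℝ, ENNReal.ofReal (ψ.psiR (‖y‖ ^ n)) = ⊤)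
    (u : (Fin m → ℤ) × (Fin n → ℤ)) :
    ∀ᵐ A ∂((volume : Measure (Fin m → Fin n → ℝ)).prod (Measure.pi ν)),
      (∀ i, ‖A.2 i‖ ≤ 1) → (solSet ψ N (intVec u) A).Infinite := by
  have hNQ : (N : ℚ) ≠ 0 := by exact_mod_cast hN.ne'
  filter_upwards [Measure.quasiMeasurePreserving_fst.ae
    (ae_infinite_intVec hm hn ψ.posR ψ.antiR ψ.oneR hint hN u)] with A hA hA1
  have hf : Function.Injective fun w : (Fin m → ℤ) × (Fin n → ℤ) => intVec (u + N • w) := by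
    intro x y hxy
    exact smul_right_injective _ hN.ne' (add_left_cancel (intVec_injective hxy))
  refine Set.infinite_of_injOn_mapsTo hf.injOn ?_ hA
  intro w hw
  refine ⟨fun a => isZS_intCast _, fun b => isZS_intCast _, fun a => ?_, fun b => ?_, hw,
    fun i => ?_⟩
  · have : ((intVec (u + N • w)).1 a - (intVec u).1 a) / N = w.1 a := by
      simp [intVec]
      field_simp
    rw [this]
    exact isZS_intCast _
  · have : ((intVec (u + N • w)).2 b - (intVec u).2 b) / N = w.2 b := by
      simp [intVec]
      field_simp
    rw [this]
    exact isZS_intCast _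
  · refine ψ.le_psiP_of_norm_le_one (hA1 i) ?_ ?_ <;>
    · refine (pi_norm_le_iff_of_nonneg zero_le_one).2 fun b => ?_
      simp only [ratP, intVec, AddMonoidHom.coe_mk, ZeroHom.coe_mk, Rat.cast_intCast]
      exact Padic.norm_int_le_one _

variable [∀ i, BorelSpace ℚ_[p i]]

theorem measurableSet_setOf_infinite_classVecs {N : ℕ} {i₀ : Fin s}
    (u : (Fin m → ℤ) × (Fin n → ℤ)) (f : (Fin m → ℚ) × (Fin n → ℚ) → ℝ) :
    MeasurableSet {A : (Fin m → Fin n → ℝ) × ∀ i, Fin m → Fin n → ℚ_[p i] |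
      {z | z ∈ classVecs (p i₀) N u A.1 ∧
        ‖affForm (A.2 i₀) (padVec (p i₀) z.2) (padVec (p i₀) z.1)‖ ^ m ≤ f z}.Infinite} := by
  have hB : ∀ z : (Fin m → ℚ) × (Fin n → ℚ),
      MeasurableSet {A : (Fin m → Fin n → ℝ) × ∀ i, Fin m → Fin n → ℚ_[p i] |
        z ∈ classVecs (p i₀) N u A.1 ∧
          ‖affForm (A.2 i₀) (padVec (p i₀) z.2) (padVec (p i₀) z.1)‖ ^ m ≤ f z} := by
    intro z
    have h1 : Measurable fun A : (Fin m → Fin n → ℝ) × ∀ i, Fin m → Fin n → ℚ_[p i] =>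
        ‖affForm A.1 (ratR z.2) (ratR z.1)‖ :=
      (continuous_affForm (ratR z.2) (ratR z.1)).norm.measurable.comp measurable_fst
    have h2 : Measurable fun A : (Fin m → Fin n → ℝ) × ∀ i, Fin m → Fin n → ℚ_[p i] =>
        ‖affForm (A.2 i₀) (padVec (p i₀) z.2) (padVec (p i₀) z.1)‖ ^ m :=
      ((continuous_affForm (padVec (p i₀) z.2) (padVec (p i₀) z.1)).norm.pow m).measurable.comp
        ((measurable_pi_apply i₀).comp measurable_snd)
    refine MeasurableSet.inter ?_ (measurableSet_le h2 measurable_const)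
    exact (MeasurableSet.const _).inter ((MeasurableSet.const _).inter
      ((MeasurableSet.const _).inter ((MeasurableSet.const _).inter
        ((measurableSet_le h1 measurable_const).inter (MeasurableSet.const _)))))
  exact measurableSet_setOf_infinite hB

theorem ae_infinite_solSet_of_padic (hm : 0 < m) (hn : 0 < n) (hpinj : Function.Injective p)
    (ψ : ApproxFamily m n s p) {N : ℕ} (hN : 0 < N) (hNS : N.Coprime (∏ i, p i))
    (μ : ∀ i, Measure (Fin n → ℚ_[p i])) [∀ i, (μ i).IsAddHaarMeasure]
    (ν : ∀ i, Measure (Fin m → Fin n → ℚ_[p i])) [∀ i, (ν i).IsAddHaarMeasure] {i₀ : Fin s}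
    (hint : ∫⁻ y, ENNReal.ofReal (ψ.psiP i₀ (‖y‖ ^ n)) ∂μ i₀ = ⊤)
    (u : (Fin m → ℤ) × (Fin n → ℤ)) :
    ∀ᵐ A ∂((volume : Measure (Fin m → Fin n → ℝ)).prod (Measure.pi ν)),
      (∀ i, ‖A.2 i‖ ≤ 1) → (solSet ψ N (intVec u) A).Infinite := by
  have hP : ∏ i, p i ≠ 0 := Finset.prod_ne_zero_iff.2 fun i _ => (hp i).1.ne_zero
  have hdvd : p i₀ ∣ ∏ i, p i := Finset.dvd_prod_of_mem p (Finset.mem_univ i₀)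
  have hfiber : ∀ E : Fin m → Fin n → ℝ, ∀ᵐ A ∂ν i₀, {z | z ∈ classVecs (p i₀) N u E ∧
      ‖affForm A (padVec (p i₀) z.2) (padVec (p i₀) z.1)‖ ^ m ≤
        ψ.psiP i₀ (‖padVec (p i₀) z.2‖ ^ n)}.Infinite := by
    intro E
    filter_upwards [ae_infinite_classVecs hm hn (ν i₀) (μ i₀) (ψ.posP i₀) (ψ.antiP i₀) (ψ.oneP i₀)
      hint hN (hNS.of_dvd_right hdvd) u E] with A hA
    refine (hA.image Subtype.val_injective.injOn).mono ?_
    rintro _ ⟨z, hz, rfl⟩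
    exact ⟨z.2, hz⟩
  have hinf : ∀ᵐ A ∂((volume : Measure (Fin m → Fin n → ℝ)).prod (Measure.pi ν)),
      {z | z ∈ classVecs (p i₀) N u A.1 ∧
        ‖affForm (A.2 i₀) (padVec (p i₀) z.2) (padVec (p i₀) z.1)‖ ^ m ≤
          ψ.psiP i₀ (‖padVec (p i₀) z.2‖ ^ n)}.Infinite := by
    rw [Measure.ae_prod_iff_ae_ae]
    · refine Filter.Eventually.of_forall fun E => ?_
      exact (Measure.quasiMeasurePreserving_eval ν i₀).ae (hfiber E)
    · exact measurableSet_setOf_infinite_classVecs u _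
  filter_upwards [hinf] with A hA hA1
  refine hA.mono ?_
  rintro z ⟨⟨hz1, hz2, hz3, hz4, hz5, hz6⟩, hz7⟩
  refine ⟨fun a => (hz1 a).of_dvd hP hdvd, fun b => (hz2 b).of_dvd hP hdvd,
    fun a => (hz3 a).of_dvd hP hdvd, fun b => (hz4 b).of_dvd hP hdvd, ?_, fun i => ?_⟩
  · rw [ψ.oneR (pow_le_one₀ (norm_nonneg _) hz6)]
    exact pow_le_one₀ (norm_nonneg _) hz5
  · rcases eq_or_ne i i₀ with rfl | hi
    · exact hz7
    · exact ψ.le_psiP_of_norm_le_one (hA1 i)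
        ((pi_norm_le_iff_of_nonneg zero_le_one).2 fun b =>
          (hz2 b).norm_le_one_of_ne (hpinj.ne hi.symm))
        ((pi_norm_le_iff_of_nonneg zero_le_one).2 fun a =>
          (hz1 a).norm_le_one_of_ne (hpinj.ne hi.symm))

theorem ae_infinite_solSet (hpinj : Function.Injective p) (ψ : ApproxFamily m n s p) {N : ℕ}
    (hN : 0 < N) (hNS : N.Coprime (∏ i, p i)) (ν : ∀ i, Measure (Fin m → Fin n → ℚ_[p i]))
    [∀ i, (ν i).IsAddHaarMeasure]
    (h : ∀ u : (Fin m → ℤ) × (Fin n → ℤ),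
      ∀ᵐ A ∂((volume : Measure (Fin m → Fin n → ℝ)).prod (Measure.pi ν)),
        (∀ i, ‖A.2 i‖ ≤ 1) → (solSet ψ N (intVec u) A).Infinite)
    {v : (Fin m → ℚ) × (Fin n → ℚ)} (hv₁ : ∀ a, IsZS (∏ i, p i) (v.1 a))
    (hv₂ : ∀ b, IsZS (∏ i, p i) (v.2 b)) :
    ∀ᵐ A ∂((volume : Measure (Fin m → Fin n → ℝ)).prod (Measure.pi ν)),
      (solSet ψ N v A).Infinite := by
  have hP : ∏ i, p i ≠ 0 := Finset.prod_ne_zero_iff.2 fun i _ => (hp i).1.ne_zero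
  have hall : ∀ᵐ A ∂((volume : Measure (Fin m → Fin n → ℝ)).prod (Measure.pi ν)),
      ∀ (u : (Fin m → ℤ) × (Fin n → ℤ)) (B : Fin m → Fin n → ℚ),
        (∀ i, ‖(A - diagMat p B).2 i‖ ≤ 1) →
          (solSet ψ N (intVec u) (A - diagMat p B)).Infinite := by
    rw [ae_all_iff]
    intro u
    rw [ae_all_iff]
    intro B
    have hpres := (measurePreserving_sub_right volume (diagMat p B).1).prod
      (measurePreserving_pi ν ν fun i => measurePreserving_sub_right (ν i) ((diagMat p B).2 i))
    exact hpres.quasiMeasurePreserving.ae (h u)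
  filter_upwards [hall] with A hA
  choose B hB hAB using fun a b => exists_isZS_norm_sub_le_one hpinj fun i => A.2 i a b
  choose u₁ hu₁ using fun a => ((hv₁ a).add hP (IsZS.sum hP Finset.univ fun b _ =>
    (hB a b).mul (hv₂ b))).exists_int_sub_div hP hN hNS
  choose u₂ hu₂ using fun b => (hv₂ b).exists_int_sub_div hP hN hNS
  refine infinite_solSet_of_sub ψ hN hB (u := intVec (u₁, u₂)) hu₁ hu₂
    (hA (u₁, u₂) B fun i => ?_)
  refine (pi_norm_le_iff_of_nonneg zero_le_one).2 fun a =>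
    (pi_norm_le_iff_of_nonneg zero_le_one).2 fun b => ?_
  exact hAB a b i

end Solutions

/-- **Divergence case of the S-arithmetic Khintchine–Groshev theorem with
congruence conditions.** Assume `d = m + n ≥ 2`. If
`∫_{ℚ_S^n} ∏_{p ∈ S} ψ_p(‖y‖_p^n) dy = ∞`, then for Haar-almost every
`A ∈ Mat_{m,n}(ℚ_S)` there are infinitely many `(p⃗, q⃗) ∈ ℤ_S^m × ℤ_S^n` with
`(p⃗, q⃗) ≡ (v_m, v_n) mod N` and `‖A_p q⃗ + p⃗‖_p^m ≤ ψ_p(‖q⃗‖_p^n)` for all `p ∈ S`. -/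
theorem s_arithmetic_khintchine_groshev_divergence
    (m n : ℕ) (hm : 0 < m) (hn : 0 < n) (hd : 2 ≤ m + n)
    (s : ℕ) (p : Fin s → ℕ) [∀ i, Fact (p i).Prime] (hpinj : Function.Injective p)
    [∀ i, MeasurableSpace ℚ_[p i]] [∀ i, BorelSpace ℚ_[p i]]
    (ψ : ApproxFamily m n s p)
    (N : ℕ) (hN : 0 < N) (hNS : Nat.Coprime N (∏ i, p i))
    (vm : Fin m → ℚ) (hvm : ∀ a, IsZS (∏ i, p i) (vm a))
    (vn : Fin n → ℚ) (hvn : ∀ b, IsZS (∏ i, p i) (vn b))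
    -- Haar measure on `ℚ_S^n`, normalized so that `ℤ_p^n` has measure one at each
    -- finite place:
    (μ : ∀ i, Measure (Fin n → ℚ_[p i])) [∀ i, (μ i).IsAddHaarMeasure]
    (hμ : ∀ i, μ i {y | ∀ j, ‖y j‖ ≤ 1} = 1)
    -- Haar measure on `Mat_{m,n}(ℚ_S)`, normalized likewise:
    (ν : ∀ i, Measure (Fin m → Fin n → ℚ_[p i])) [∀ i, (ν i).IsAddHaarMeasure]
    (hν : ∀ i, ν i {A | ∀ a b, ‖A a b‖ ≤ 1} = 1)
    -- divergence of the integral `∫_{ℚ_S^n} ∏_{p ∈ S} ψ_p(‖y‖_p^n) dy`: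
    (hint : ∫⁻ y : (Fin n → ℝ) × (∀ i, Fin n → ℚ_[p i]),
        ENNReal.ofReal (ψ.psiR (‖y.1‖ ^ n) * ∏ i, ψ.psiP i (‖y.2 i‖ ^ n))
        ∂((volume : Measure (Fin n → ℝ)).prod (Measure.pi μ)) = ⊤) :
    ∀ᵐ A ∂((volume : Measure (Fin m → Fin n → ℝ)).prod (Measure.pi ν)),
      {pq : (Fin m → ℚ) × (Fin n → ℚ) |
        (∀ a, IsZS (∏ i, p i) (pq.1 a)) ∧ (∀ b, IsZS (∏ i, p i) (pq.2 b)) ∧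
        (∀ a, IsZS (∏ i, p i) ((pq.1 a - vm a) / N)) ∧
        (∀ b, IsZS (∏ i, p i) ((pq.2 b - vn b) / N)) ∧
        ‖fun a => (∑ b, A.1 a b * (pq.2 b : ℝ)) + (pq.1 a : ℝ)‖ ^ m
          ≤ ψ.psiR (‖ratR pq.2‖ ^ n) ∧
        ∀ i, ‖fun a => (∑ b, A.2 i a b * ((pq.2 b : ℚ) : ℚ_[p i])) + ((pq.1 a : ℚ) : ℚ_[p i])‖ ^ m
          ≤ ψ.psiP i (‖ratP p i pq.2‖ ^ n)}.Infinite := by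
  refine ae_infinite_solSet hpinj ψ hN hNS ν (v := (vm, vn)) ?_ hvm hvn
  intro u
  rcases ψ.exists_lintegral_eq_top μ hint with h | ⟨i, h⟩
  · exact ae_infinite_solSet_of_real hm hn ψ hN ν h u
  · exact ae_infinite_solSet_of_padic hm hn hpinj ψ hN hNS μ ν h u
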